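/- arXiv:2411.15107 — 2 statements merged into one kernel-verified Lean document; each statement's English description precedes it below -/
import Mathlib

section
/- If G is a Carnot group equipped with its Carnot–Carathéodory metric d_cc, then the Lipschitz-free space F(G) has property (V*). -/
open Filter Topology Metric Set

noncomputable section

/-- A formal series `∑ yₙ` in a normed space `Y` is weakly unconditionally Cauchy (WUC)
if `∑ |⟨φ, yₙ⟩| < ∞` for every continuous linear functional `φ` on `Y`. -/
def IsWUC {Y : Type*} [SeminormedAddCommGroup Y] [NormedSpace ℝ Y] (y : ℕ → Y) : Prop :=
  ∀ φ : Y →L[ℝ] ℝ, Summable fun n => |φ (y n)|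

/-- `Γ` is a (V*)-set in `X`: for every WUC series `∑ fₙ` in the dual `X*`,
`sup_{x ∈ Γ} |⟨x, fₙ⟩| → 0`. -/
def IsVStarSet {X : Type*} [SeminormedAddCommGroup X] [NormedSpace ℝ X] (Γ : Set X) : Prop :=
  ∀ f : ℕ → (X →L[ℝ] ℝ), IsWUC f →
    ∀ ε > (0 : ℝ), ∀ᶠ n in atTop, ∀ x ∈ Γ, |f n x| ≤ ε

/-- `Γ` is relatively weakly compact: its closure in the weak topology is compact. -/
def RelWeaklyCompact {X : Type*} [SeminormedAddCommGroup X] [NormedSpace ℝ X]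
    (Γ : Set X) : Prop :=
  IsCompact (closure ((toWeakSpace ℝ X) '' Γ))

/-- A normed space has Pełczyński's property (V*) if every (V*)-set is relatively
weakly compact. -/
def HasPropertyVStar (X : Type*) [SeminormedAddCommGroup X] [NormedSpace ℝ X] : Prop :=
  ∀ Γ : Set X, IsVStarSet Γ → RelWeaklyCompact Γ

/-- `F`, together with the map `δ : M → F`, is (a realization of) the Lipschitz-free space
over the pointed metric space `(M, o)`: `δ` is a base-point-preserving isometric embedding
whose range has dense linear span, and every Lipschitz function `f : M → ℝ` vanishing at
the base point lifts to a continuous linear functional of norm at most `Lip(f)` (this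
characterizes `F(M)`, with dual `Lip₀(M)`, up to isometric isomorphism). -/
structure IsLipschitzFree {M : Type*} [MetricSpace M] (o : M)
    {F : Type*} [NormedAddCommGroup F] [NormedSpace ℝ F] (δ : M → F) : Prop where
  isometry : Isometry δ
  map_base : δ o = 0
  dense_span : Dense (Submodule.span ℝ (Set.range δ) : Set F)
  lift : ∀ (L : NNReal) (f : M → ℝ), LipschitzWith L f → f o = 0 →
    ∃ φ : F →L[ℝ] ℝ, ‖φ‖ ≤ L ∧ ∀ x, φ (δ x) = f x

/-- The subspace of `F` corresponding to the Lipschitz-free space `F(S)` over a subset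
`S ⊆ M`: the closed linear span of `δ(S)`. -/
def freeSpan {M : Type*} [MetricSpace M] {F : Type*} [NormedAddCommGroup F]
    [NormedSpace ℝ F] (δ : M → F) (S : Set M) : Submodule ℝ F :=
  (Submodule.span ℝ (δ '' S)).topologicalClosure

theorem mem_freeSpan {M : Type*} [MetricSpace M] {F : Type*} [NormedAddCommGroup F]
    [NormedSpace ℝ F] (δ : M → F) {S : Set M} {x : M} (hx : x ∈ S) :
    δ x ∈ freeSpan δ S :=
  (Submodule.span ℝ (δ '' S)).le_topologicalClosure
    (Submodule.subset_span ⟨x, hx, rfl⟩)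

/-- Euclidean space `ℝ^d`. -/
abbrev Euc (d : ℕ) := EuclideanSpace ℝ (Fin d)

/-- The data of a Carnot–Carathéodory space: an open connected set `G ⊆ ℝ^d` together
with a family `X = (X₁, …, X_s)` of vector fields on `G` with locally Lipschitz
coefficients. -/
structure CCData (d s : ℕ) where
  /-- the underlying open connected subset of `ℝ^d` -/
  G : Set (Euc d)
  /-- the family of vector fields -/
  X : Fin s → Euc d → Euc d
  isOpen_G : IsOpen G
  isConnected_G : IsConnected G
  locallyLipschitz_X : ∀ j : Fin s, ∀ x ∈ G, ∃ U ∈ 𝓝 x, ∃ K : NNReal,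
    LipschitzOnWith K (X j) U

/-- A curve `γ` on `[0, b]` is admissible (w.r.t. the vector fields of `S`) if it stays
in `G`, and it is absolutely continuous with derivative `γ'(t) = ∑ⱼ cⱼ(t) Xⱼ(γ(t))`
a.e., for Borel functions `cⱼ` with `∑ⱼ cⱼ(t)² ≤ 1`.  (Absolute continuity is expressed
by `γ` being the indefinite integral of an integrable function.) -/
def CCData.Admissible {d s : ℕ} (S : CCData d s) (b : ℝ) (γ : ℝ → Euc d) : Prop :=
  0 ≤ b ∧ (∀ t ∈ Set.Icc (0 : ℝ) b, γ t ∈ S.G) ∧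
  ∃ c : Fin s → ℝ → ℝ,
    (∀ j, Measurable (c j)) ∧
    (∀ t ∈ Set.Icc (0 : ℝ) b, ∑ j, (c j t) ^ 2 ≤ 1) ∧
    MeasureTheory.IntegrableOn (fun t => ∑ j, c j t • S.X j (γ t)) (Set.Icc (0 : ℝ) b) ∧
    ∀ t ∈ Set.Icc (0 : ℝ) b, γ t = γ 0 + ∫ u in (0 : ℝ)..t, ∑ j, c j u • S.X j (γ u)

/-- The Carnot–Carathéodory distance associated with the vector fields of `S`:
the infimum of `b ≥ 0` such that an admissible curve joins `x` to `y` in time `b`. -/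
def CCData.ccDist {d s : ℕ} (S : CCData d s) (x y : Euc d) : ℝ :=
  sInf {b | ∃ γ : ℝ → Euc d, S.Admissible b γ ∧ γ 0 = x ∧ γ b = y}

/-- Every two points of `G` are joined by an admissible curve, so that `d_cc` is
finite everywhere (`(G, d_cc)` is a Carnot–Carathéodory metric space). -/
def CCData.Connects {d s : ℕ} (S : CCData d s) : Prop :=
  ∀ x ∈ S.G, ∀ y ∈ S.G, ∃ b γ, S.Admissible b γ ∧ γ 0 = x ∧ γ b = y

/-- Condition (◇) with exponent `α`: for every bounded `K ⊆ G` there are constants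
`C₁, C₂ > 0` with `C₁‖x − y‖₂ ≤ d_cc(x, y) ≤ C₂‖x − y‖₂^α` for all `x, y ∈ K`. -/
def CCData.Diamond {d s : ℕ} (S : CCData d s) (α : ℝ) : Prop :=
  ∀ K : Set (Euc d), K ⊆ S.G → Bornology.IsBounded K →
    ∃ C₁ > (0 : ℝ), ∃ C₂ > (0 : ℝ), ∀ x ∈ K, ∀ y ∈ K,
      C₁ * ‖x - y‖ ≤ S.ccDist x y ∧ S.ccDist x y ≤ C₂ * ‖x - y‖ ^ α

/-- The pointed metric space `M` is (a realization of) the metric space `(G, d_cc)`: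
`ι` is a bijection of `M` onto `G` and the metric of `M` corresponds to `d_cc`. -/
structure CCRepresentation {d s : ℕ} (S : CCData d s) (M : Type*) [MetricSpace M]
    (ι : M → Euc d) : Prop where
  injective : Function.Injective ι
  range_eq : Set.range ι = S.G
  dist_eq : ∀ x y : M, dist x y = S.ccDist (ι x) (ι y)
/-- A Lie group structure on `ℝ^d` (in global coordinates): a group structure whose
operations are smooth.  Since the underlying space is `ℝ^d`, the group is automatically
connected and simply connected. -/
structure LieGroupData (d : ℕ) where
  /-- group multiplication -/
  mul : Euc d → Euc d → Euc d
  /-- neutral element -/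
  one : Euc d
  /-- group inversion -/
  inv : Euc d → Euc d
  mul_assoc : ∀ a b c, mul (mul a b) c = mul a (mul b c)
  one_mul : ∀ a, mul one a = a
  mul_one : ∀ a, mul a one = a
  inv_mul : ∀ a, mul (inv a) a = one
  smooth_mul : ContDiff ℝ (⊤ : ℕ∞) fun p : Euc d × Euc d => mul p.1 p.2
  smooth_inv : ContDiff ℝ (⊤ : ℕ∞) inv

/-- The left-invariant vector field on the group determined by the tangent vector `v`
at the identity: `x ↦ D(Lₓ)(1)[v]`, where `Lₓ` is the left translation by `x`. -/
def LieGroupData.lvf {d : ℕ} (Gd : LieGroupData d) (v : Euc d) : Euc d → Euc d :=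
  fun x => fderiv ℝ (Gd.mul x) Gd.one v

/-- The Lie bracket of two vector fields on `ℝ^d`:
`[V, W](x) = DW(x)[V(x)] − DV(x)[W(x)]`. -/
def vfBracket {d : ℕ} (V W : Euc d → Euc d) : Euc d → Euc d :=
  fun x => fderiv ℝ W x (V x) - fderiv ℝ V x (W x)

/-- The Lie bracket on the Lie algebra of the group (identified with `ℝ^d`):
the bracket of the associated left-invariant vector fields, evaluated at the identity. -/
def LieGroupData.bracket {d : ℕ} (Gd : LieGroupData d) (v w : Euc d) : Euc d :=
  vfBracket (Gd.lvf v) (Gd.lvf w) Gd.one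

/-- `[A, B]`: the linear span of all brackets of elements of `A` and `B`. -/
def LieGroupData.bracketSpan {d : ℕ} (Gd : LieGroupData d)
    (A B : Submodule ℝ (Euc d)) : Submodule ℝ (Euc d) :=
  Submodule.span ℝ {z | ∃ a ∈ A, ∃ b ∈ B, z = Gd.bracket a b}

/-- A stratification `g = V₁ ⊕ ⋯ ⊕ Vₙ` of the Lie algebra of the group, with
`[V₁, Vᵢ] = Vᵢ₊₁` for `i < n` and `[V₁, Vₙ] = 0`.  A Lie group of this kind is a
Carnot group. -/
structure LieGroupData.Stratification {d : ℕ} (Gd : LieGroupData d) (n : ℕ) where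
  npos : 0 < n
  /-- the strata `V₁, …, Vₙ` (zero-indexed) -/
  V : Fin n → Submodule ℝ (Euc d)
  isInternal : DirectSum.IsInternal V
  bracket_succ : ∀ i : Fin n, ∀ h : (i : ℕ) + 1 < n,
    Gd.bracketSpan (V ⟨0, npos⟩) (V i) = V ⟨(i : ℕ) + 1, h⟩
  bracket_last : Gd.bracketSpan (V ⟨0, npos⟩) (V ⟨n - 1, by omega⟩) = ⊥

/-- (V*)-sets are bounded. -/
theorem vstar_bounded {F : Type*} [NormedAddCommGroup F] [NormedSpace ℝ F]
    {Γ : Set F} (hΓ : IsVStarSet Γ) : ∃ C : ℝ, 0 < C ∧ ∀ x ∈ Γ, ‖x‖ ≤ C := by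
  have h1 : ∀ φ : StrongDual ℝ F, ∃ C : ℝ, ∀ x : Γ,
      ‖NormedSpace.inclusionInDoubleDual ℝ F (x : F) φ‖ ≤ C := by
    intro φ
    have hw : IsWUC (fun n : ℕ => ((1 / 2 : ℝ) ^ n) • φ) := by
      intro Ψ
      have : (fun n : ℕ => |Ψ (((1 / 2 : ℝ) ^ n) • φ)|) = fun n => (1 / 2 : ℝ) ^ n * |Ψ φ| := by
        funext n
        rw [map_smul, smul_eq_mul, abs_mul, abs_of_nonneg (by positivity)]
      rw [this]
      exact (summable_geometric_two).mul_right _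
    obtain ⟨n, hn⟩ := (hΓ _ hw 1 one_pos).exists
    refine ⟨2 ^ n, fun x => ?_⟩
    have := hn x x.2
    rw [NormedSpace.dual_def, Real.norm_eq_abs]
    simp only [smul_apply, smul_eq_mul, abs_mul] at this
    rw [abs_of_nonneg (by positivity : (0 : ℝ) ≤ (1 / 2) ^ n), one_div, inv_pow] at this
    rwa [inv_mul_le_iff₀ (by positivity), mul_one] at this
  obtain ⟨C, hC⟩ := banach_steinhaus h1
  refine ⟨max C 1, by positivity, fun x hx => ?_⟩
  have := hC ⟨x, hx⟩
  have h2 : ‖NormedSpace.inclusionInDoubleDual ℝ F x‖ = ‖x‖ :=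
    (NormedSpace.inclusionInDoubleDualLi ℝ (E := F)).norm_map x
  rw [h2] at this
  exact this.trans (le_max_left _ _)

/-- Helly-type lemma. -/
theorem helly_aux {F : Type*} [NormedAddCommGroup F] [NormedSpace ℝ F]
    (Λ : StrongDual ℝ (StrongDual ℝ F)) {θ : ℝ} (hθ : 0 < θ)
    (hΛ : ∀ γ : F, θ ≤ ‖Λ - NormedSpace.inclusionInDoubleDual ℝ F γ‖)
    (S : Finset F) {η : ℝ} (hη : 0 < η) :
    ∃ φ : StrongDual ℝ F, ‖φ‖ ≤ 1 ∧ θ - η ≤ Λ φ ∧ ∀ γ ∈ S, |φ γ| ≤ η := by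
  classical
  let T : StrongDual ℝ F →L[ℝ] ℝ × (S → ℝ) :=
    Λ.prod (ContinuousLinearMap.pi fun γ : S => NormedSpace.inclusionInDoubleDual ℝ F γ.1)
  let K : Set (ℝ × (S → ℝ)) := T '' closedBall 0 1
  have hKc : Convex ℝ (closure K) :=
    ((convex_closedBall (0 : StrongDual ℝ F) 1).linear_image T.toLinearMap).closure
  have hmem : ((θ, 0) : ℝ × (S → ℝ)) ∈ closure K := by
    by_contra hcon
    obtain ⟨f, u, hfu, huf⟩ := geometric_hahn_banach_closed_point hKc isClosed_closure hcon
    set τ : ℝ := f (1, 0) with hτ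
    have hTθ : f (θ, 0) = θ * τ := by
      have : ((θ, 0) : ℝ × (S → ℝ)) = θ • (1, 0) := by simp
      rw [this, map_smul, smul_eq_mul]
    set g : F := ∑ i : S, f (0, Pi.single i 1) • (i : F) with hg
    have hfT : ∀ φ : StrongDual ℝ F, f (T φ) = τ * Λ φ + φ g := by
      intro φ
      have e1 : T φ = Λ φ • ((1, 0) : ℝ × (S → ℝ)) +
          ∑ i : S, φ i.1 • ((0, Pi.single i 1) : ℝ × (S → ℝ)) := by
        refine Prod.ext ?_ ?_
        · simp [T, Prod.fst_sum]
        · funext j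
          simp [T, Prod.snd_sum, Finset.sum_apply, Pi.single_apply]
      rw [e1, map_add, map_smul, map_sum, hg, map_sum]
      simp only [map_smul, smul_eq_mul]
      rw [mul_comm]
      congr 1
      exact Finset.sum_congr rfl fun i _ => mul_comm _ _
    have hu0 : 0 < u := by
      have := hfu (T 0) (subset_closure ⟨0, by simp, rfl⟩)
      simpa using this
    have hb : ‖f.comp T‖ ≤ u := by
      refine ContinuousLinearMap.opNorm_le_of_unit_norm hu0.le ?_
      intro φ hφ
      have h1 := hfu (T φ) (subset_closure ⟨φ, by simp [hφ], rfl⟩)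
      have h2 := hfu (T (-φ)) (subset_closure ⟨-φ, by simp [hφ], rfl⟩)
      rw [map_neg, map_neg] at h2
      rw [ContinuousLinearMap.comp_apply, Real.norm_eq_abs, abs_le]
      constructor <;> linarith
    rw [hTθ] at huf
    have hθ0 : θ * τ > 0 := hu0.trans huf
    have hτ0 : 0 < τ := by
      by_contra h
      push Not at h
      nlinarith
    have h4 : ‖Λ - NormedSpace.inclusionInDoubleDual ℝ F (-(τ⁻¹ • g))‖ ≤ u / τ := by
      refine ContinuousLinearMap.opNorm_le_bound _ (by positivity) fun φ => ?_
      have h5 : (Λ - NormedSpace.inclusionInDoubleDual ℝ F (-(τ⁻¹ • g))) φ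
          = τ⁻¹ * (f.comp T) φ := by
        rw [ContinuousLinearMap.comp_apply, hfT]
        simp only [map_neg, map_smul, sub_neg_eq_add, smul_apply,
          add_apply, NormedSpace.dual_def, smul_eq_mul]
        field_simp
      rw [h5, norm_mul, Real.norm_eq_abs, abs_of_pos (inv_pos.2 hτ0), div_eq_inv_mul, mul_assoc]
      exact mul_le_mul_of_nonneg_left ((f.comp T).le_of_opNorm_le hb φ) (inv_pos.2 hτ0).le
    have h6 := (hΛ (-(τ⁻¹ • g))).trans h4
    rw [le_div_iff₀ hτ0] at h6
    linarith
  obtain ⟨y, ⟨φ, hφ, rfl⟩, hy⟩ := Metric.mem_closure_iff.1 hmem η hη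
  rw [Prod.dist_eq, max_lt_iff] at hy
  refine ⟨φ, by simpa using hφ, ?_, ?_⟩
  · have h1 := hy.1
    rw [Real.dist_eq] at h1
    have := (abs_lt.1 h1).2
    have e : (T φ).1 = Λ φ := rfl
    rw [e] at this
    simp only at this
    linarith
  · intro γ hγ
    have h1 := (dist_pi_lt_iff hη).1 hy.2 ⟨γ, hγ⟩
    have e : (T φ).2 ⟨γ, hγ⟩ = φ γ := rfl
    rw [e, Real.dist_eq] at h1
    simpa using h1.le

/-- Dyadic averages of a sequence. -/
def dyAvg {E : Type*} [AddCommGroup E] [Module ℝ E] (h : ℕ → E) : ℕ → ℕ → E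
  | 0, a => h a
  | N + 1, a => (1 / 2 : ℝ) • (dyAvg h N a + dyAvg h N (a + 2 ^ N))

theorem dyAvg_mem {E : Type*} [AddCommGroup E] [Module ℝ E] (h : ℕ → E) {K : Set E}
    (hK : Convex ℝ K) (N : ℕ) : ∀ a, (∀ m, a ≤ m → m < a + 2 ^ N → h m ∈ K) →
      dyAvg h N a ∈ K := by
  induction N with
  | zero => intro a ha; exact ha a le_rfl (by simp)
  | succ N ih =>
    intro a ha
    have h2 : 2 ^ (N + 1) = 2 ^ N + 2 ^ N := by ring
    have h1 := ih a fun m hm hm' => ha m hm (by omega)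
    have h3 := ih (a + 2 ^ N) fun m hm hm' => ha m (by omega) (by omega)
    have := hK h1 h3 (a := 1 / 2) (b := 1 / 2) (by norm_num) (by norm_num) (by norm_num)
    rw [dyAvg, smul_add]
    exact this

theorem dyAvg_close' {E : Type*} [AddCommGroup E] [Module ℝ E] (B : E →ₗ[ℝ] E →ₗ[ℝ] ℝ)
    (hB : ∀ x, 0 ≤ B x x) (h : ℕ → E) {Cb ε : ℝ} (hh : ∀ m, B (h m) (h m) ≤ Cb) (hε : 0 < ε)
    {N : ℕ} (hN : 4 * Cb / ε < N) (a : ℕ) : ∃ M b, a ≤ b ∧ b + 2 ^ M + 2 ^ M ≤ a + 2 ^ N ∧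
      B (dyAvg h M b - dyAvg h M (b + 2 ^ M)) (dyAvg h M b - dyAvg h M (b + 2 ^ M)) ≤ ε := by
  by_contra hcon
  push Not at hcon
  have key : ∀ M, ∀ b, a ≤ b → b + 2 ^ M ≤ a + 2 ^ N →
      B (dyAvg h M b) (dyAvg h M b) ≤ Cb - M * (ε / 4) := by
    intro M
    induction M with
    | zero => intro b _ _; simpa [dyAvg] using hh b
    | succ M ih =>
      intro b hb hb'
      have h2 : 2 ^ (M + 1) = 2 ^ M + 2 ^ M := by ring
      have h0 : 0 < 2 ^ M := by positivity
      rw [h2] at hb'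
      have h1 := ih b hb (by omega)
      have h3 := ih (b + 2 ^ M) (by omega) (by omega)
      have h4 := hcon M b hb (by omega)
      rw [dyAvg]
      simp only [map_sub, map_add, map_smul, LinearMap.sub_apply, LinearMap.add_apply,
        LinearMap.smul_apply, smul_eq_mul] at h4 ⊢
      push_cast
      linarith
  have h1 := key N a le_rfl le_rfl
  have h2 := hB (dyAvg h N a)
  rw [div_lt_iff₀ hε] at hN
  linarith

set_option maxHeartbeats 2000000 in
/-- Key lemma: small-energy functionals which are large on elements close to `Λ`. -/
theorem key_small {F : Type*} [NormedAddCommGroup F] [NormedSpace ℝ F]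
    (Λ : StrongDual ℝ (StrongDual ℝ F)) {θ : ℝ} (hθ : 0 < θ)
    (hΛ : ∀ γ : F, θ ≤ ‖Λ - NormedSpace.inclusionInDoubleDual ℝ F γ‖)
    (𝒰 : Filter F) [NeBot 𝒰] (h𝒰 : ∀ φ : StrongDual ℝ F, Tendsto (fun γ => φ γ) 𝒰 (𝓝 (Λ φ)))
    (E : Submodule ℝ (StrongDual ℝ F)) (U : Set E) (hUc : Convex ℝ U)
    (hUs : ∀ u ∈ U, -u ∈ U)
    (happrox : ∀ φ : StrongDual ℝ F, ‖φ‖ ≤ 1 → ∀ S : Finset F, ∀ η > (0 : ℝ),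
      ∃ ψ ∈ U, ∀ γ ∈ S, |(ψ : StrongDual ℝ F) γ - φ γ| ≤ η)
    (B : E →ₗ[ℝ] E →ₗ[ℝ] ℝ) (hB : ∀ x, 0 ≤ B x x) {Cb : ℝ} (hBU : ∀ u ∈ U, B u u ≤ Cb)
    {A : Set F} (hA : A ∈ 𝒰) {ε : ℝ} (hε : 0 < ε) :
    ∃ φ ∈ U, ∃ γ ∈ A, B φ φ ≤ ε ∧ θ / 4 ≤ (φ : StrongDual ℝ F) γ := by
  classical
  set η : ℝ := θ / 10 with hη
  have hη0 : 0 < η := by positivity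
  obtain ⟨s, hs1, hs2⟩ := exists_seq_of_forall_finset_exists
    (fun q : StrongDual ℝ F × F => ‖q.1‖ ≤ 1 ∧ q.2 ∈ A ∧ θ - η ≤ Λ q.1 ∧ θ - 2 * η ≤ q.1 q.2)
    (fun q q' => |q'.1 q.2| ≤ η ∧ θ - 2 * η ≤ q.1 q'.2) (by
      intro s hs
      obtain ⟨φ, hφ1, hφ2, hφ3⟩ := helly_aux Λ hθ hΛ (s.image Prod.snd) hη0
      have hev : ∀ ψ : StrongDual ℝ F, θ - η ≤ Λ ψ → ∀ᶠ γ in 𝒰, θ - 2 * η ≤ ψ γ := by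
        intro ψ hψ
        filter_upwards [(h𝒰 ψ).eventually (lt_mem_nhds (show θ - 2 * η < Λ ψ by linarith))]
          with γ hγ using hγ.le
      have hall : ∀ᶠ γ in 𝒰, ∀ q ∈ s, θ - 2 * η ≤ q.1 γ :=
        (Filter.eventually_all_finset s).2 fun q hq => hev _ (hs q hq).2.2.1
      obtain ⟨γ, h1, h2, h3⟩ := ((hev φ hφ2).and (hall.and hA)).exists
      refine ⟨(φ, γ), ⟨hφ1, h3, hφ2, h1⟩, fun q hq => ⟨?_, h2 q hq⟩⟩
      exact hφ3 _ (Finset.mem_image_of_mem _ hq))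
  have hs3 : ∀ i j, i < j → |(s j).1 (s i).2| ≤ η := fun i j hij => (hs2 i j hij).1
  have hap : ∀ L : ℕ, ∀ m, ∃ ψ ∈ U, ∀ i < L,
      |(ψ : StrongDual ℝ F) (s i).2 - (s m).1 (s i).2| ≤ η := by
    intro L m
    obtain ⟨ψ, h1, h2⟩ := happrox _ (hs1 m).1 ((Finset.range L).image fun i => (s i).2) η hη0
    exact ⟨ψ, h1, fun i hi => h2 _ (Finset.mem_image_of_mem _ (Finset.mem_range.2 hi))⟩
  choose ψ hψ1 hψ2 using hap
  obtain ⟨N, hN⟩ : ∃ N : ℕ, 4 * Cb / ε < N := exists_nat_gt _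
  obtain ⟨M, b, -, hb, hB2⟩ := dyAvg_close' B hB (ψ (2 ^ N)) (fun m => hBU _ (hψ1 _ m)) hε hN 0
  set h := ψ (2 ^ N) with hh
  set u := dyAvg h M b with hu
  set v := dyAvg h M (b + 2 ^ M) with hv
  have huU : u ∈ U := dyAvg_mem h hUc M b fun m _ _ => hψ1 _ m
  have hvU : v ∈ U := dyAvg_mem h hUc M _ fun m _ _ => hψ1 _ m
  have hpos : 0 < 2 ^ M := by positivity
  set n := b + 2 ^ M - 1 with hn
  have hnN : n < 2 ^ N := by omega
  have hevl : ∀ c : ℝ, Convex ℝ {x : E | c ≤ (x : StrongDual ℝ F) (s n).2} := by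
    intro c x hx y hy a b ha hb hab
    simp only [mem_ofPred_eq] at hx hy ⊢
    simp only [Submodule.coe_add, Submodule.coe_smul, add_apply, smul_apply, smul_eq_mul]
    calc c = a * c + b * c := by rw [← add_mul, hab, one_mul]
      _ ≤ _ := by gcongr
  have hevu : ∀ c : ℝ, Convex ℝ {x : E | (x : StrongDual ℝ F) (s n).2 ≤ c} := by
    intro c x hx y hy a b ha hb hab
    simp only [mem_ofPred_eq] at hx hy ⊢
    simp only [Submodule.coe_add, Submodule.coe_smul, add_apply, smul_apply, smul_eq_mul]
    calc _ ≤ a * c + b * c := by gcongr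
      _ = c := by rw [← add_mul, hab, one_mul]
  have hu1 : θ - 3 * η ≤ (u : StrongDual ℝ F) (s n).2 := by
    refine dyAvg_mem h (hevl _) M b fun m hm hm' => ?_
    have h1 := (abs_le.1 (hψ2 (2 ^ N) m n hnN)).1
    have h2 : θ - 2 * η ≤ (s m).1 (s n).2 := by
      rcases (show m ≤ n by omega).eq_or_lt with h | h
      · rw [h]; exact (hs1 n).2.2.2
      · exact (hs2 m n h).2
    simp only [mem_ofPred_eq]
    linarith
  have hv1 : (v : StrongDual ℝ F) (s n).2 ≤ 2 * η := by
    have hm1 : ∀ m, b + 2 ^ M ≤ m → m < b + 2 ^ M + 2 ^ M →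
        h m ∈ {x : E | (x : StrongDual ℝ F) (s n).2 ≤ 2 * η} := by
      intro m hm hm'
      have h1 := (abs_le.1 (hψ2 (2 ^ N) m n hnN)).2
      have hnm : n < m := by omega
      have h2 := (abs_le.1 (hs3 n m hnm)).2
      have h3 : (h m : StrongDual ℝ F) (s n).2 ≤ 2 * η := by linarith
      exact h3
    have := dyAvg_mem h (hevu (2 * η)) M (b + 2 ^ M) hm1
    exact this
  refine ⟨(1 / 2 : ℝ) • (u - v), ?_, (s n).2, (hs1 n).2.1, ?_, ?_⟩
  · have := hUc huU (hUs v hvU) (a := 1 / 2) (b := 1 / 2) (by norm_num) (by norm_num) (by norm_num)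
    have e : (1 / 2 : ℝ) • (u - v) = (1 / 2 : ℝ) • u + (1 / 2 : ℝ) • (-v) := by module
    rw [e]
    exact this
  · have h0 := hB (u - v)
    rw [map_smul, map_smul, LinearMap.smul_apply, smul_eq_mul, smul_eq_mul]
    linarith
  · simp only [Submodule.coe_sub, Submodule.coe_smul, sub_apply, smul_apply, smul_eq_mul]
    linarith

theorem isClosed_range_bidual {F : Type*} [NormedAddCommGroup F]
    [NormedSpace ℝ F] [CompleteSpace F] :
    IsClosed (Set.range (NormedSpace.inclusionInDoubleDualLi ℝ (E := F))) := by
  have h := (NormedSpace.inclusionInDoubleDualLi ℝ (E := F)).isometry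
  have h2 := h.isUniformInducing.isComplete_range
  exact h2.isClosed

/-- A bounded set which is not relatively weakly compact produces a bidual point. -/
theorem exists_bidual_of_not_relWeaklyCompact {F : Type*} [NormedAddCommGroup F]
    [NormedSpace ℝ F] [CompleteSpace F] {Γ : Set F} {C : ℝ} (hC : ∀ x ∈ Γ, ‖x‖ ≤ C)
    (hΓ : ¬ RelWeaklyCompact Γ) :
    ∃ (Λ : StrongDual ℝ (StrongDual ℝ F)) (θ : ℝ) (𝒰 : Ultrafilter F), 0 < θ ∧
      (∀ γ : F, θ ≤ ‖Λ - NormedSpace.inclusionInDoubleDual ℝ F γ‖) ∧ Γ ∈ 𝒰 ∧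
      ∀ φ : StrongDual ℝ F, Tendsto (fun γ => φ γ) 𝒰 (𝓝 (Λ φ)) := by
  have h1 : ¬ (closure (NormedSpace.inclusionInDoubleDualWeak ℝ F '' ((toWeakSpace ℝ F) '' Γ)) ⊆
      Set.range (NormedSpace.inclusionInDoubleDualWeak ℝ F)) := by
    intro h
    apply hΓ
    refine NormedSpace.isCompact_closure_of_isBounded (𝕜 := ℝ) (X := F) _ ?_ h
    rw [(toWeakSpace ℝ F).injective.preimage_image]
    exact (isBounded_iff_forall_norm_le.2 ⟨C, hC⟩)
  rw [Set.not_subset] at h1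
  obtain ⟨Λ, hΛ1, hΛ2⟩ := h1
  let Λ' : StrongDual ℝ (StrongDual ℝ F) := WeakDual.toStrongDual Λ
  let j : F → WeakDual ℝ (StrongDual ℝ F) := fun x =>
    NormedSpace.inclusionInDoubleDualWeak ℝ F (toWeakSpace ℝ F x)
  have hne : NeBot (comap j (𝓝 Λ) ⊓ 𝓟 Γ) := by
    rw [inf_principal_neBot_iff]
    rintro U ⟨t, ht, htU⟩
    obtain ⟨y, hy1, hy2⟩ := mem_closure_iff_nhds.1 hΛ1 t ht
    obtain ⟨_, ⟨x, hx, rfl⟩, rfl⟩ := hy2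
    exact ⟨x, htU hy1, hx⟩
  have hcl : IsClosed (Set.range (NormedSpace.inclusionInDoubleDualLi ℝ (E := F))) :=
    isClosed_range_bidual
  have hnot : Λ' ∉ Set.range (NormedSpace.inclusionInDoubleDualLi ℝ (E := F)) := by
    rintro ⟨x, hx⟩
    apply hΛ2
    refine ⟨toWeakSpace ℝ F x, ?_⟩
    have : WeakDual.toStrongDual (j x) = Λ' := hx
    exact WeakDual.toStrongDual.injective this
  refine ⟨Λ', infDist Λ' (Set.range (NormedSpace.inclusionInDoubleDualLi ℝ (E := F))),
    Ultrafilter.of (comap j (𝓝 Λ) ⊓ 𝓟 Γ), ?_, ?_, ?_, ?_⟩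
  · exact (hcl.notMem_iff_infDist_pos (Set.range_nonempty _)).1 hnot
  · intro γ
    have h := infDist_le_dist_of_mem (x := Λ')
      (s := Set.range (NormedSpace.inclusionInDoubleDualLi ℝ (E := F))) ⟨γ, rfl⟩
    refine h.trans (le_of_eq ?_)
    exact dist_eq_norm (E := StrongDual ℝ (StrongDual ℝ F)) _ _
  · exact (Ultrafilter.of_le _) (mem_inf_of_right (mem_principal_self _))
  · intro φ
    have h1 : Tendsto j (Ultrafilter.of (comap j (𝓝 Λ) ⊓ 𝓟 Γ)) (𝓝 Λ) :=
      tendsto_comap.mono_left ((Ultrafilter.of_le _).trans inf_le_left)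
    exact ((WeakDual.eval_continuous φ).tendsto Λ).comp h1

/-- Limits along ultrafilters of bounded functions. -/
theorem ultra_tendsto {α : Type*} (𝒰 : Ultrafilter α) {f : α → ℝ} {C : ℝ}
    (hf : ∀ a, |f a| ≤ C) : Tendsto f 𝒰 (𝓝 (limUnder (𝒰 : Filter α) f)) := by
  apply tendsto_nhds_limUnder
  have h1 : (𝒰.map f : Filter ℝ) ≤ 𝓟 (Icc (-C) C) := by
    rw [le_principal_iff]
    exact mem_map.2 (univ_mem' fun a => abs_le.1 (hf a))
  obtain ⟨x, -, hx⟩ := isCompact_Icc.ultrafilter_le_nhds (𝒰.map f) h1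
  exact ⟨x, hx⟩

theorem recursion_list {α : Type*} (Q : List α → Prop) (h0 : Q [])
    (hs : ∀ l, Q l → ∃ a, Q (a :: l)) :
    ∃ (f : ℕ → α) (L : ℕ → List α), L 0 = [] ∧ (∀ n, L (n + 1) = f n :: L n) ∧ ∀ n, Q (L n) := by
  obtain ⟨a0, -⟩ := hs [] h0
  have : Nonempty α := ⟨a0⟩
  choose! g hg using hs
  let L : ℕ → List α := fun n => Nat.rec [] (fun _ l => g l :: l) n
  have hL : ∀ n, L (n + 1) = g (L n) :: L n := fun n => rfl
  refine ⟨fun n => g (L n), L, rfl, hL, fun n => ?_⟩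
  induction n with
  | zero => exact h0
  | succ n ih => rw [hL]; exact hg _ ih

/-- The sum of the pointwise norms of a list of fields. -/
def listSum {E P V : Type*} [NormedAddCommGroup V] (D : E → P → V) (l : List E) (x : P) : ℝ :=
  (l.map fun ψ => ‖D ψ x‖).sum

theorem listSum_cons {E P V : Type*} [NormedAddCommGroup V] (D : E → P → V) (a : E) (l : List E)
    (x : P) : listSum D (a :: l) x = ‖D a x‖ + listSum D l x := by
  simp [listSum]

theorem wuc_of_sum_le {F : Type*} [NormedAddCommGroup F] [NormedSpace ℝ F]
    {P V : Type*} [NormedAddCommGroup V] [NormedSpace ℝ V]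
    (E : Submodule ℝ (StrongDual ℝ F)) (D : E →ₗ[ℝ] (P → V))
    (hnorm : ∀ (φ : E) (C : ℝ), 0 ≤ C → (∀ x, ‖D φ x‖ ≤ C) → ‖(φ : StrongDual ℝ F)‖ ≤ C)
    (f : ℕ → E) (hf : ∀ n x, ∑ k ∈ Finset.range n, ‖D (f k) x‖ ≤ 2) :
    IsWUC (fun n => (f n : StrongDual ℝ F)) := by
  intro Φ
  refine summable_of_sum_range_le (c := ‖Φ‖ * 2) (fun n => abs_nonneg _) fun n => ?_
  let ε : ℕ → ℝ := fun k => SignType.sign (Φ (f k))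
  have hε : ∀ k, |ε k| ≤ 1 := by
    intro k
    simp only [ε]
    rcases lt_trichotomy (Φ (f k)) 0 with h | h | h <;> simp [h]
  have h1 : ∑ k ∈ Finset.range n, |Φ (f k)| =
      Φ ((∑ k ∈ Finset.range n, ε k • f k : E) : StrongDual ℝ F) := by
    rw [Submodule.coe_sum, map_sum]
    refine Finset.sum_congr rfl fun k _ => ?_
    rw [Submodule.coe_smul, map_smul, smul_eq_mul]
    simp only [ε]
    exact (sign_mul_self (Φ (f k))).symm
  rw [h1]
  refine (le_abs_self _).trans ((Φ.le_opNorm _).trans ?_)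
  refine mul_le_mul_of_nonneg_left (hnorm _ 2 (by norm_num) fun x => ?_) (norm_nonneg _)
  rw [map_sum, Finset.sum_apply]
  refine (norm_sum_le _ _).trans (le_trans (Finset.sum_le_sum fun k _ => ?_) (hf n x))
  rw [map_smul, Pi.smul_apply, norm_smul]
  exact mul_le_of_le_one_left (norm_nonneg _) (hε k)

/-- Limit bilinear form. -/
theorem exists_limit_form {F : Type*} 
    {P V : Type*} [NormedAddCommGroup V] [InnerProductSpace ℝ V]
    {E : Type*} [AddCommGroup E] [Module ℝ E] (D : E →ₗ[ℝ] (P → V))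
    (hbd : ∀ φ : E, ∃ C, ∀ x, ‖D φ x‖ ≤ C)
    (μ : F → ((P → ℝ) →ₗ[ℝ] ℝ)) (hμ : ∀ γ f g, (∀ x, f x ≤ g x) → μ γ f ≤ μ γ g)
    {C1 : ℝ} (hμ1 : ∀ γ, μ γ (fun _ => 1) ≤ C1) (𝒰 : Ultrafilter F) :
    ∃ B : E →ₗ[ℝ] E →ₗ[ℝ] ℝ, ∀ φ φ', Tendsto (fun γ => μ γ (fun x => inner ℝ (D φ x) (D φ' x)))
      𝒰 (𝓝 (B φ φ')) := by
  have hbound : ∀ φ φ', ∃ C, ∀ γ, |μ γ (fun x => inner ℝ (D φ x) (D φ' x))| ≤ C := by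
    intro φ φ'
    obtain ⟨C, hC⟩ := hbd φ
    obtain ⟨C', hC'⟩ := hbd φ'
    have hK : ∀ x, |inner ℝ (D φ x) (D φ' x)| ≤ |C| * |C'| := fun x =>
      (abs_real_inner_le_norm _ _).trans (mul_le_mul ((hC x).trans (le_abs_self _))
        ((hC' x).trans (le_abs_self _)) (norm_nonneg _) (abs_nonneg _))
    have hc : ∀ γ (c : ℝ), μ γ (fun _ => c) = c * μ γ (fun _ => 1) := by
      intro γ c
      rw [← smul_eq_mul, ← map_smul]
      congr 1
      funext x
      simp
    refine ⟨|C| * |C'| * C1, fun γ => abs_le.2 ⟨?_, ?_⟩⟩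
    · have := hμ γ (fun _ => -(|C| * |C'|)) _ (fun x => (abs_le.1 (hK x)).1)
      rw [hc] at this
      have h2 : |C| * |C'| * μ γ (fun _ => 1) ≤ |C| * |C'| * C1 :=
        mul_le_mul_of_nonneg_left (hμ1 γ) (by positivity)
      linarith
    · have := hμ γ _ (fun _ => (|C| * |C'|)) (fun x => (abs_le.1 (hK x)).2)
      rw [hc] at this
      have h2 : |C| * |C'| * μ γ (fun _ => 1) ≤ |C| * |C'| * C1 :=
        mul_le_mul_of_nonneg_left (hμ1 γ) (by positivity)
      linarith
  have ht : ∀ φ φ', ∃ L, Tendsto (fun γ => μ γ (fun x => inner ℝ (D φ x) (D φ' x))) 𝒰 (𝓝 L) :=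
    fun φ φ' => ⟨_, ultra_tendsto 𝒰 (hbound φ φ').choose_spec⟩
  choose L hL using ht
  refine ⟨LinearMap.mk₂ ℝ L ?_ ?_ ?_ ?_, fun φ φ' => hL φ φ'⟩
  · intro a b c
    refine tendsto_nhds_unique (hL (a + b) c) (((hL a c).add (hL b c)).congr fun γ => ?_)
    rw [← map_add]
    congr 1
    funext x
    simp [inner_add_left]
  · intro r a c
    refine tendsto_nhds_unique (hL (r • a) c) (((hL a c).const_mul r).congr fun γ => ?_)
    rw [← smul_eq_mul, ← map_smul]
    congr 1
    funext x
    simp [inner_smul_left]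
  · intro a b c
    refine tendsto_nhds_unique (hL a (b + c)) (((hL a b).add (hL a c)).congr fun γ => ?_)
    rw [← map_add]
    congr 1
    funext x
    simp [inner_add_right]
  · intro r a c
    refine tendsto_nhds_unique (hL a (r • c)) (((hL a c).const_mul r).congr fun γ => ?_)
    rw [← smul_eq_mul, ← map_smul]
    congr 1
    funext x
    simp [inner_smul_right]

/-- The bilinear form `(φ, φ') ↦ ∑_{γ ∈ S} φ(γ) φ'(γ)`. -/
theorem exists_sum_form {F : Type*} [NormedAddCommGroup F] [NormedSpace ℝ F]
    (E : Submodule ℝ (StrongDual ℝ F)) (S : Finset F) :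
    ∃ B : E →ₗ[ℝ] E →ₗ[ℝ] ℝ, ∀ φ φ', B φ φ' = ∑ γ ∈ S, φ.1 γ * φ'.1 γ := by
  refine ⟨LinearMap.mk₂ ℝ (fun φ φ' => ∑ γ ∈ S, φ.1 γ * φ'.1 γ) ?_ ?_ ?_ ?_, fun _ _ => rfl⟩
  · intro a b c
    simp [add_mul, Finset.sum_add_distrib]
  · intro r a c
    simp [Finset.mul_sum, mul_assoc]
  · intro a b c
    simp [mul_add, Finset.sum_add_distrib]
  · intro r a c
    simp [Finset.mul_sum, mul_left_comm]

/-- The multiplication hypothesis of the abstract criterion. -/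
def MultHyp {F : Type*} [NormedAddCommGroup F] [NormedSpace ℝ F]
    {P V : Type*} [NormedAddCommGroup V] [InnerProductSpace ℝ V]
    (E : Submodule ℝ (StrongDual ℝ F)) (D : E →ₗ[ℝ] (P → V)) : Prop :=
  ∀ C0 > (0 : ℝ), ∀ κ > (0 : ℝ), ∃ (μ : F → ((P → ℝ) →ₗ[ℝ] ℝ)) (C1 : ℝ),
    (∀ γ f g, (∀ x, f x ≤ g x) → μ γ f ≤ μ γ g) ∧ (∀ γ, μ γ (fun _ => 1) ≤ C1) ∧
    ∀ (l : List E) (C : ℝ), 0 ≤ C → C ≤ 2 → (∀ x, listSum D l x ≤ C) → ∀ η > (0 : ℝ),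
      ∃ (S : Finset F) (ε : ℝ), 0 < ε ∧ ∀ φ : E, (∀ x, ‖D φ x‖ ≤ 1) →
        (∀ γ ∈ S, |(φ : StrongDual ℝ F) γ| ≤ ε) →
        ∃ ψ : E, (∀ x, ‖D ψ x‖ ≤ C - listSum D l x + η) ∧ (∀ x, ‖D ψ x‖ ≤ C * ‖D φ x‖ + η) ∧
          ∀ γ : F, ‖γ‖ ≤ C0 → |C * (φ : StrongDual ℝ F) γ - (ψ : StrongDual ℝ F) γ| ≤
            μ γ (listSum D l) + κ

theorem core_step {F : Type*} [NormedAddCommGroup F] [NormedSpace ℝ F]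
    {P V : Type*} [NormedAddCommGroup V] [InnerProductSpace ℝ V]
    (E : Submodule ℝ (StrongDual ℝ F)) (D : E →ₗ[ℝ] (P → V))
    (hbd : ∀ φ : E, ∃ C, ∀ x, ‖D φ x‖ ≤ C)
    (hnorm : ∀ (φ : E) (C : ℝ), 0 ≤ C → (∀ x, ‖D φ x‖ ≤ C) → ‖(φ : StrongDual ℝ F)‖ ≤ C)
    (happrox : ∀ φ : StrongDual ℝ F, ‖φ‖ ≤ 1 → ∀ S : Finset F, ∀ η > (0 : ℝ),
      ∃ ψ : E, (∀ x, ‖D ψ x‖ ≤ 1) ∧ ∀ γ ∈ S, |(ψ : StrongDual ℝ F) γ - φ γ| ≤ η)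
    {Γ : Set F} {C0 : ℝ} (hΓ : ∀ γ ∈ Γ, ‖γ‖ ≤ C0)
    (Λ : StrongDual ℝ (StrongDual ℝ F)) {θ : ℝ} (hθ : 0 < θ)
    (hΛ : ∀ γ : F, θ ≤ ‖Λ - NormedSpace.inclusionInDoubleDual ℝ F γ‖)
    (𝒰 : Ultrafilter F) (hΓ𝒰 : Γ ∈ 𝒰)
    (h𝒰 : ∀ φ : StrongDual ℝ F, Tendsto (fun γ => φ γ) 𝒰 (𝓝 (Λ φ)))
    (μ : F → ((P → ℝ) →ₗ[ℝ] ℝ)) {C1 : ℝ} (hC1 : 0 < C1)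
    (hμ : ∀ γ f g, (∀ x, f x ≤ g x) → μ γ f ≤ μ γ g) (hμ1 : ∀ γ, μ γ (fun _ => 1) ≤ C1)
    {κ : ℝ} (hκ : κ = θ / 24)
    (l : List E) (C : ℝ) (hC1' : 1 ≤ C) (hC2 : C ≤ 2)
    (hmult : ∀ η > (0 : ℝ), ∃ (S : Finset F) (ε : ℝ), 0 < ε ∧ ∀ φ : E, (∀ x, ‖D φ x‖ ≤ 1) →
        (∀ γ ∈ S, |(φ : StrongDual ℝ F) γ| ≤ ε) →
        ∃ ψ : E, (∀ x, ‖D ψ x‖ ≤ C - listSum D l x + η) ∧ (∀ x, ‖D ψ x‖ ≤ C * ‖D φ x‖ + η) ∧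
          ∀ γ : F, ‖γ‖ ≤ C0 → |C * (φ : StrongDual ℝ F) γ - (ψ : StrongDual ℝ F) γ| ≤
            μ γ (listSum D l) + κ)
    (hl : ∀ᶠ γ in (𝒰 : Filter F), μ γ (listSum D l) ≤ κ) {r : ℝ} (hr : 0 < r) :
    ∃ ψ : E, (∀ x, ‖D ψ x‖ + listSum D l x ≤ C + r) ∧
      (∀ᶠ γ in (𝒰 : Filter F), μ γ (fun x => ‖D ψ x‖) ≤ r) ∧
      ∃ γ ∈ Γ, θ / 8 ≤ (ψ : StrongDual ℝ F) γ := by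
  set η : ℝ := min r (r / (2 * C1)) with hηdef
  have hη : 0 < η := lt_min hr (by positivity)
  obtain ⟨S, ε, hε, hS⟩ := hmult η hη
  obtain ⟨B1, hB1⟩ := exists_limit_form (E := E) D hbd μ hμ hμ1 𝒰
  obtain ⟨B2, hB2⟩ := exists_sum_form E S
  have hconst : ∀ γ (c : ℝ), μ γ (fun _ => c) = c * μ γ (fun _ => 1) := by
    intro γ c
    rw [← smul_eq_mul, ← map_smul]
    congr 1
    funext x
    simp
  have hμ0 : ∀ γ, 0 ≤ μ γ (fun _ => 1) := by
    intro γ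
    have h1 := hμ γ (fun _ => 0) (fun _ => 1) (fun _ => zero_le_one)
    rw [hconst] at h1
    simpa using h1
  have hB1n : ∀ φ, 0 ≤ B1 φ φ := by
    intro φ
    refine ge_of_tendsto' (hB1 φ φ) fun γ => ?_
    have h1 := hμ γ (fun _ => 0) _ (fun x => real_inner_self_nonneg (x := D φ x))
    rw [hconst, zero_mul] at h1
    exact h1
  have hB2n : ∀ φ, 0 ≤ B2 φ φ := by
    intro φ
    rw [hB2]
    exact Finset.sum_nonneg fun γ _ => mul_self_nonneg _
  set U : Set E := {φ | ∀ x, ‖D φ x‖ ≤ 1} with hU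
  have hUc : Convex ℝ U := by
    intro a ha b hb s t hs ht hst x
    rw [map_add, map_smul, map_smul, Pi.add_apply, Pi.smul_apply, Pi.smul_apply]
    refine (norm_add_le _ _).trans ?_
    rw [norm_smul, norm_smul, Real.norm_of_nonneg hs, Real.norm_of_nonneg ht, ← hst]
    exact add_le_add (mul_le_of_le_one_right hs (ha x)) (mul_le_of_le_one_right ht (hb x))
  have hUs : ∀ u ∈ U, -u ∈ U := by
    intro u hu x
    have : D (-u) x = - D u x := by
      have e : -u = (-1 : ℝ) • u := by module
      rw [e, map_smul, Pi.smul_apply, neg_one_smul]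
    rw [this, norm_neg]
    exact hu x
  have hBU : ∀ u ∈ U, (B1 + B2) u u ≤ C1 + ∑ γ ∈ S, ‖γ‖ * ‖γ‖ := by
    intro u hu
    rw [LinearMap.add_apply, LinearMap.add_apply]
    refine add_le_add ?_ ?_
    · refine le_of_tendsto' (hB1 u u) fun γ => ?_
      refine le_trans (hμ γ _ (fun _ => 1) fun x => ?_) (hμ1 γ)
      rw [real_inner_self_eq_norm_mul_norm]
      exact mul_le_one₀ (hu x) (norm_nonneg _) (hu x)
    · rw [hB2]
      refine Finset.sum_le_sum fun γ _ => ?_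
      have hn := hnorm u 1 zero_le_one hu
      have h1 : |u.1 γ| ≤ ‖γ‖ := by
        refine (u.1.le_opNorm γ).trans ?_
        exact mul_le_of_le_one_left (norm_nonneg _) hn
      rw [← abs_mul_abs_self]
      exact mul_le_mul h1 h1 (abs_nonneg _) (norm_nonneg _)
  -- parameters
  set τ : ℝ := r / 4 with hτ
  have hτ0 : 0 < τ := by positivity
  set t : ℝ := τ / C1 with ht
  have ht0 : 0 < t := by positivity
  set ε' : ℝ := min (ε * ε) (t * τ / 2) with hε'
  have hε'0 : 0 < ε' := lt_min (by positivity) (by positivity)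
  have hAm : Γ ∩ {γ | μ γ (listSum D l) ≤ κ} ∈ (𝒰 : Filter F) := inter_mem hΓ𝒰 hl
  obtain ⟨φ, hφU, γ, ⟨hγΓ, hγμ⟩, hφB, hφγ⟩ := key_small Λ hθ hΛ 𝒰 h𝒰 E U hUc hUs
    (fun φ hφ S η hη => by
      obtain ⟨ψ, h1, h2⟩ := happrox φ hφ S η hη
      exact ⟨ψ, h1, h2⟩) (B1 + B2)
    (fun φ => by
      rw [LinearMap.add_apply, LinearMap.add_apply]
      exact add_nonneg (hB1n φ) (hB2n φ)) hBU hAm hε'0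
  rw [LinearMap.add_apply, LinearMap.add_apply] at hφB
  have hφS : ∀ γ ∈ S, |(φ : StrongDual ℝ F) γ| ≤ ε := by
    intro γ hγ
    have h1 : φ.1 γ * φ.1 γ ≤ B2 φ φ := by
      rw [hB2]
      exact Finset.single_le_sum (f := fun γ => φ.1 γ * φ.1 γ)
        (fun γ _ => mul_self_nonneg _) hγ
    have h2 : φ.1 γ * φ.1 γ ≤ ε * ε := by
      have := hB1n φ
      have := min_le_left (ε * ε) (t * τ / 2)
      linarith
    exact abs_le_of_sq_le_sq (by nlinarith) hε.le |> fun h => abs_le.2 (abs_le.1 h)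
  obtain ⟨ψ, hψ1, hψ2, hψ3⟩ := hS φ hφU hφS
  refine ⟨ψ, fun x => ?_, ?_, γ, hγΓ, ?_⟩
  · have := hψ1 x
    have := min_le_left r (r / (2 * C1))
    linarith
  · have hlt : B1 φ φ < t * τ := by
      have := hB2n φ
      have := min_le_right (ε * ε) (t * τ / 2)
      have : 0 < t * τ := by positivity
      linarith
    filter_upwards [(hB1 φ φ).eventually (gt_mem_nhds hlt)] with γ' hγ'
    have h1 : μ γ' (fun x => ‖D ψ x‖) ≤
        μ γ' ((C / (2 * t)) • (fun x => inner ℝ (D φ x) (D φ x)) + fun _ => C * t / 2 + η) := by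
      refine hμ γ' _ _ fun x => (hψ2 x).trans ?_
      simp only [Pi.add_apply, Pi.smul_apply, smul_eq_mul]
      rw [real_inner_self_eq_norm_mul_norm]
      have h2 : ‖D φ x‖ ≤ ‖D φ x‖ * ‖D φ x‖ / (2 * t) + t / 2 := by
        rw [div_add' _ _ _ (by positivity), le_div_iff₀ (by positivity)]
        nlinarith [sq_nonneg (‖D φ x‖ - t)]
      have h3 := mul_le_mul_of_nonneg_left h2 (by linarith : (0 : ℝ) ≤ C)
      have h4 : C / (2 * t) * (‖D φ x‖ * ‖D φ x‖) = C * (‖D φ x‖ * ‖D φ x‖ / (2 * t)) := by ring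
      rw [h4]
      linarith
    rw [map_add, map_smul, smul_eq_mul, hconst] at h1
    have h5 : (C / (2 * t)) * μ γ' (fun x => inner ℝ (D φ x) (D φ x)) ≤ τ := by
      calc _ ≤ C / (2 * t) * (t * τ) := by gcongr
        _ = C * τ / 2 := by field_simp
        _ ≤ τ := by nlinarith
    have h6 : (C * t / 2 + η) * μ γ' (fun _ => 1) ≤ τ + r / 2 := by
      have h7 : (C * t / 2 + η) ≤ (τ + r / 2) / C1 := by
        have := min_le_right r (r / (2 * C1))
        have e : (τ + r / 2) / C1 = t + r / (2 * C1) := by rw [ht]; field_simp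
        rw [e]
        nlinarith
      calc _ ≤ (τ + r / 2) / C1 * C1 := by
            refine mul_le_mul h7 (hμ1 γ') (hμ0 _) (by positivity)
        _ = _ := by field_simp
    linarith
  · have h1 := (abs_le.1 (hψ3 γ (hΓ γ hγΓ))).2
    have h2 : μ γ (listSum D l) ≤ κ := hγμ
    have h3 : θ / 4 ≤ C * φ.1 γ := by nlinarith
    linarith

theorem core_vstar {F : Type*} [NormedAddCommGroup F] [NormedSpace ℝ F] [CompleteSpace F]
    {P V : Type*} [NormedAddCommGroup V] [InnerProductSpace ℝ V]
    (E : Submodule ℝ (StrongDual ℝ F)) (D : E →ₗ[ℝ] (P → V))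
    (hbd : ∀ φ : E, ∃ C, ∀ x, ‖D φ x‖ ≤ C)
    (hnorm : ∀ (φ : E) (C : ℝ), 0 ≤ C → (∀ x, ‖D φ x‖ ≤ C) → ‖(φ : StrongDual ℝ F)‖ ≤ C)
    (happrox : ∀ φ : StrongDual ℝ F, ‖φ‖ ≤ 1 → ∀ S : Finset F, ∀ η > (0 : ℝ),
      ∃ ψ : E, (∀ x, ‖D ψ x‖ ≤ 1) ∧ ∀ γ ∈ S, |(ψ : StrongDual ℝ F) γ - φ γ| ≤ η)
    (hmult : MultHyp E D) : HasPropertyVStar F := by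
  intro Γ hΓV
  by_contra hcon
  obtain ⟨C0, hC0, hΓ⟩ := vstar_bounded hΓV
  obtain ⟨Λ, θ, 𝒰, hθ, hΛ, hΓ𝒰, h𝒰⟩ := exists_bidual_of_not_relWeaklyCompact hΓ hcon
  obtain ⟨μ, C1', hμ, hμ1', hm⟩ := hmult C0 hC0 (θ / 24) (by positivity)
  set κ := θ / 24 with hκ
  have hκ0 : 0 < κ := by positivity
  set C1 := max C1' 1 with hC1d
  have hC1 : 0 < C1 := by positivity
  have hμ1 : ∀ γ, μ γ (fun _ => 1) ≤ C1 := fun γ => (hμ1' γ).trans (le_max_left _ _)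
  obtain ⟨f, L, hL0, hLs, hQ⟩ := recursion_list
    (fun l : List E => (∀ x, listSum D l x ≤ 2 - (1 / 2) ^ l.length) ∧
      (∀ᶠ γ in (𝒰 : Filter F), μ γ (listSum D l) ≤ κ * (1 - (1 / 2) ^ l.length)) ∧
      ∀ ψ ∈ l, ∃ γ ∈ Γ, θ / 8 ≤ (ψ : StrongDual ℝ F) γ) (by
      refine ⟨fun x => ?_, ?_, ?_⟩
      · simp [listSum]
      · refine Eventually.of_forall fun γ => ?_
        have : listSum D ([] : List E) = 0 := by funext x; simp [listSum]
        rw [this, map_zero]; simp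
      · simp) (by
      rintro l ⟨h1, h2, h3⟩
      set p : ℝ := (1 / 2) ^ l.length with hp
      have hp0 : 0 < p := by positivity
      have hp1 : p ≤ 1 := pow_le_one₀ (by norm_num) (by norm_num)
      obtain ⟨ψ, hψ1, hψ2, hψ3⟩ := core_step E D hbd hnorm happrox hΓ Λ hθ hΛ 𝒰 hΓ𝒰 h𝒰 μ hC1
        hμ hμ1 hκ l (2 - p) (by linarith) (by linarith)
        (hm l (2 - p) (by linarith) (by linarith) h1)
        (h2.mono fun γ hγ => hγ.trans (by nlinarith)) (r := min (p / 2) (κ * (p / 2)))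
        (lt_min (by positivity) (by positivity))
      refine ⟨ψ, fun x => ?_, ?_, ?_⟩
      · rw [listSum_cons, List.length_cons, pow_succ, ← hp]
        have := hψ1 x
        have := min_le_left (p / 2) (κ * (p / 2))
        linarith
      · filter_upwards [h2, hψ2] with γ ha hb
        have e : listSum D (ψ :: l) = (fun x => ‖D ψ x‖) + listSum D l := by
          funext x
          rw [listSum_cons]; rfl
        rw [e, map_add, List.length_cons, pow_succ, ← hp]
        have := min_le_right (p / 2) (κ * (p / 2))
        linarith
      · intro ψ' hψ'
        rcases List.mem_cons.1 hψ' with rfl | h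
        · exact hψ3
        · exact h3 _ h)
  have hsum : ∀ n x, ∑ k ∈ Finset.range n, ‖D (f k) x‖ = listSum D (L n) x := by
    intro n x
    induction n with
    | zero => simp [hL0, listSum]
    | succ n ih => rw [Finset.sum_range_succ, hLs, listSum_cons, ih, add_comm]
  have hw := wuc_of_sum_le E D hnorm f (fun n x => by
    rw [hsum]
    have h1 := (hQ n).1 x
    have h2 : (0 : ℝ) < (1 / 2) ^ (L n).length := by positivity
    linarith)
  obtain ⟨n, hn⟩ := (hΓV _ hw (θ / 16) (by positivity)).exists
  obtain ⟨γ, hγ, hle⟩ := (hQ (n + 1)).2.2 (f n) (by rw [hLs]; exact List.mem_cons_self)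
  have := (le_abs_self _).trans (hn γ hγ)
  linarith

/-- `γ` is on `[0,b]` the indefinite integral of the bounded measurable function `v`. -/
structure IsPrim {W : Type*} [NormedAddCommGroup W] [NormedSpace ℝ W]
    (b : ℝ) (γ v : ℝ → W) : Prop where
  nonneg : 0 ≤ b
  int : MeasureTheory.IntegrableOn v (Icc 0 b)
  bdd : ∃ K : NNReal, ∀ u ∈ Icc 0 b, ‖v u‖ ≤ K
  eq : ∀ t ∈ Icc 0 b, γ t = γ 0 + ∫ u in (0 : ℝ)..t, v u

theorem integral_lip {W : Type*} [NormedAddCommGroup W] [NormedSpace ℝ W]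
    {b : ℝ} (_hb : 0 ≤ b) {v : ℝ → W} (hv : MeasureTheory.IntegrableOn v (Icc 0 b)) {K : NNReal}
    (hK : ∀ u ∈ Icc 0 b, ‖v u‖ ≤ K) :
    LipschitzOnWith K (fun t => ∫ u in (0 : ℝ)..t, v u) (Icc 0 b) := by
  have hii : ∀ t ∈ Icc 0 b, IntervalIntegrable v MeasureTheory.volume 0 t := by
    intro t ht
    rw [intervalIntegrable_iff_integrableOn_Icc_of_le ht.1]
    exact hv.mono_set (Icc_subset_Icc_right ht.2)
  refine LipschitzOnWith.of_dist_le_mul fun s hs t ht => ?_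
  rw [dist_eq_norm, intervalIntegral.integral_interval_sub_left (hii s hs) (hii t ht)]
  refine (intervalIntegral.norm_integral_le_of_norm_le_const (C := K) fun x hx => ?_).trans ?_
  · apply hK
    have := uIoc_subset_uIcc hx
    exact (convex_Icc 0 b).ordConnected.uIcc_subset ht hs this
  · rw [Real.dist_eq]

theorem IsPrim.lip {W : Type*} [NormedAddCommGroup W] [NormedSpace ℝ W]
    {b : ℝ} {γ v : ℝ → W} (h : IsPrim b γ v) : ∃ K, LipschitzOnWith K γ (Icc 0 b) := by
  obtain ⟨K, hK⟩ := h.bdd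
  refine ⟨K, LipschitzOnWith.of_dist_le_mul fun s hs t ht => ?_⟩
  rw [h.eq s hs, h.eq t ht, dist_add_left]
  exact (integral_lip h.nonneg h.int hK).dist_le_mul s hs t ht

theorem IsPrim.continuousOn {W : Type*} [NormedAddCommGroup W] [NormedSpace ℝ W]
    {b : ℝ} {γ v : ℝ → W} (h : IsPrim b γ v) : ContinuousOn γ (Icc 0 b) := by
  obtain ⟨K, hK⟩ := h.lip
  exact hK.continuousOn

/-- integrability of `A(t) v(t)` -/
theorem prim_apply {W W' : Type*} [NormedAddCommGroup W] [NormedSpace ℝ W]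
    [NormedAddCommGroup W'] [NormedSpace ℝ W'] {b : ℝ} {v : ℝ → W}
    (hv : MeasureTheory.IntegrableOn v (Icc 0 b)) (hK : ∃ K : NNReal, ∀ u ∈ Icc 0 b, ‖v u‖ ≤ K)
    {A : ℝ → W →L[ℝ] W'} (hA : ContinuousOn A (Icc 0 b)) :
    MeasureTheory.IntegrableOn (fun u => A u (v u)) (Icc 0 b) ∧
      ∃ K : NNReal, ∀ u ∈ Icc 0 b, ‖A u (v u)‖ ≤ K := by
  obtain ⟨K, hK⟩ := hK
  obtain ⟨C, hC⟩ := isCompact_Icc.exists_bound_of_continuousOn hA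
  have hbd : ∀ u ∈ Icc 0 b, ‖A u (v u)‖ ≤ |C| * K := fun u hu =>
    (ContinuousLinearMap.le_opNorm _ _).trans
      (mul_le_mul ((hC u hu).trans (le_abs_self _)) (hK u hu) (norm_nonneg _) (abs_nonneg _))
  refine ⟨?_, ⟨⟨|C| * K, by positivity⟩, hbd⟩⟩
  have hm : MeasureTheory.AEStronglyMeasurable (fun u => A u (v u))
      (MeasureTheory.volume.restrict (Icc 0 b)) :=
    isBoundedBilinearMap_apply.continuous.comp_aestronglyMeasurable
      ((hA.aestronglyMeasurable_of_isCompact isCompact_Icc measurableSet_Icc).prodMk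
        hv.aestronglyMeasurable)
  have hfin : MeasureTheory.IsFiniteMeasure (MeasureTheory.volume.restrict (Icc 0 b)) :=
    ⟨by simp⟩
  refine MeasureTheory.Integrable.of_bound hm (|C| * K) ?_
  rw [MeasureTheory.ae_restrict_iff' measurableSet_Icc]
  exact Eventually.of_forall hbd

/-- Chain rule for curves which are indefinite integrals. -/
theorem IsPrim.chain {W W' : Type*} [NormedAddCommGroup W] [NormedSpace ℝ W]
    [FiniteDimensional ℝ W]
    [NormedAddCommGroup W'] [NormedSpace ℝ W'] [CompleteSpace W'] {b : ℝ} {γ v : ℝ → W}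
    (h : IsPrim b γ v) {Φ : W → W'} (hΦ : ContDiff ℝ 1 Φ) :
    IsPrim b (fun t => Φ (γ t)) (fun t => fderiv ℝ Φ (γ t) (v t)) := by
  have : ProperSpace W := FiniteDimensional.proper ℝ W
  have hA : ContinuousOn (fun t => fderiv ℝ Φ (γ t)) (Icc 0 b) :=
    (hΦ.continuous_fderiv one_ne_zero).comp_continuousOn h.continuousOn
  obtain ⟨hi, hbd⟩ := prim_apply h.int h.bdd hA
  refine ⟨h.nonneg, hi, hbd, ?_⟩
  obtain ⟨K, hK⟩ := h.lip
  obtain ⟨K', hK'⟩ := hbd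
  -- Φ is Lipschitz on a big ball
  obtain ⟨R, hR⟩ : ∃ R, ∀ t ∈ Icc 0 b, γ t ∈ closedBall (0 : W) R := by
    obtain ⟨C, hC⟩ := isCompact_Icc.exists_bound_of_continuousOn h.continuousOn
    exact ⟨C, fun t ht => by simpa using hC t ht⟩
  obtain ⟨L, hL⟩ : ∃ L, LipschitzOnWith L Φ (closedBall (0 : W) R) := by
    obtain ⟨C, hC⟩ := (isCompact_closedBall (0 : W) R).exists_bound_of_continuousOn
      (hΦ.continuous_fderiv one_ne_zero).continuousOn
    refine ⟨⟨|C|, abs_nonneg _⟩, (convex_closedBall _ _).lipschitzOnWith_of_nnnorm_fderiv_le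
      (𝕜 := ℝ) (fun x _ => (hΦ.differentiable one_ne_zero) x) fun x hx => ?_⟩
    exact (hC x hx).trans (le_abs_self _)
  have hL2 : LipschitzOnWith (L * K) (fun t => Φ (γ t)) (Icc 0 b) :=
    hL.comp hK hR
  have hL3 := integral_lip h.nonneg hi hK'
  have hac : AbsolutelyContinuousOnInterval
      (fun t => Φ (γ t) - ∫ u in (0 : ℝ)..t, fderiv ℝ Φ (γ u) (v u)) 0 b := by
    have hL4 := hL2.sub hL3
    rw [← uIcc_of_le h.nonneg] at hL4
    exact hL4.absolutelyContinuousOnInterval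
  have hd : ∀ᵐ x : ℝ, x ∈ uIcc 0 b → HasDerivAt
      (fun t => Φ (γ t) - ∫ u in (0 : ℝ)..t, fderiv ℝ Φ (γ u) (v u)) 0 x := by
    have h1 := ((intervalIntegrable_iff_integrableOn_Icc_of_le h.nonneg).2 h.int).ae_hasDerivAt_integral
    have h2 := ((intervalIntegrable_iff_integrableOn_Icc_of_le h.nonneg).2 hi).ae_hasDerivAt_integral
    have h3 : ∀ᵐ x : ℝ, x ≠ 0 := by simp [MeasureTheory.ae_iff, MeasureTheory.measure_singleton]
    have h4 : ∀ᵐ x : ℝ, x ≠ b := by simp [MeasureTheory.ae_iff, MeasureTheory.measure_singleton]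
    filter_upwards [h1, h2, h3, h4] with x h1 h2 h3 h4 hx
    have h0 : (0 : ℝ) ∈ uIcc 0 b := left_mem_uIcc
    have hx' := hx
    rw [uIcc_of_le h.nonneg] at hx'
    have hxi : x ∈ Ioo 0 b := ⟨lt_of_le_of_ne hx'.1 (Ne.symm h3), lt_of_le_of_ne hx'.2 h4⟩
    have hγ : HasDerivAt γ (v x) x := by
      refine ((h1 hx 0 h0).const_add (γ 0)).congr_of_eventuallyEq ?_
      filter_upwards [Ioo_mem_nhds hxi.1 hxi.2] with t ht
      exact h.eq t (Ioo_subset_Icc_self ht)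
    have h5 := ((hΦ.differentiable one_ne_zero) (γ x)).hasFDerivAt.comp_hasDerivAt x hγ
    have h6 := h5.sub (h2 hx 0 h0)
    rw [sub_self] at h6
    exact h6
  obtain ⟨C, hC⟩ := hac.const_of_ae_hasDerivAt_zero hd
  rw [uIcc_of_le h.nonneg] at hC
  intro t ht
  have e1 := hC t ht
  have e2 := hC 0 ⟨le_rfl, h.nonneg⟩
  simp only [intervalIntegral.integral_same, sub_zero] at e2
  rw [e2, ← e1]
  abel

/-- The group as a type. -/
def LG {d : ℕ} (_Gd : LieGroupData d) : Type := Euc d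

instance LG.instGroup {d : ℕ} (Gd : LieGroupData d) : Group (LG Gd) :=
  letI : Mul (LG Gd) := ⟨Gd.mul⟩
  letI : One (LG Gd) := ⟨Gd.one⟩
  letI : Inv (LG Gd) := ⟨Gd.inv⟩
  Group.ofLeftAxioms Gd.mul_assoc Gd.one_mul Gd.inv_mul

theorem lg_mul_inv {d : ℕ} (Gd : LieGroupData d) (a : Euc d) : Gd.mul a (Gd.inv a) = Gd.one :=
  mul_inv_cancel (G := LG Gd) a

theorem lg_inv_one {d : ℕ} (Gd : LieGroupData d) : Gd.inv Gd.one = Gd.one :=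
  inv_one (G := LG Gd)

theorem lg_inv_inv {d : ℕ} (Gd : LieGroupData d) (a : Euc d) : Gd.inv (Gd.inv a) = a :=
  inv_inv (G := LG Gd) a

theorem lg_mul_inv_rev {d : ℕ} (Gd : LieGroupData d) (a b : Euc d) :
    Gd.inv (Gd.mul a b) = Gd.mul (Gd.inv b) (Gd.inv a) :=
  mul_inv_rev (G := LG Gd) a b

theorem lg_inv_mul_cancel_left {d : ℕ} (Gd : LieGroupData d) (a b : Euc d) :
    Gd.mul (Gd.inv a) (Gd.mul a b) = b :=
  inv_mul_cancel_left (G := LG Gd) a b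

theorem lg_mul_inv_cancel_left {d : ℕ} (Gd : LieGroupData d) (a b : Euc d) :
    Gd.mul a (Gd.mul (Gd.inv a) b) = b :=
  mul_inv_cancel_left (G := LG Gd) a b

/-- Multiplication as a function on the product. -/
def mulP {d : ℕ} (Gd : LieGroupData d) (p : Euc d × Euc d) : Euc d := Gd.mul p.1 p.2

theorem mulP_smooth {d : ℕ} (Gd : LieGroupData d) : ContDiff ℝ (⊤ : ℕ∞) (mulP Gd) := Gd.smooth_mul

theorem mulP_diff {d : ℕ} (Gd : LieGroupData d) : Differentiable ℝ (mulP Gd) :=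
  (mulP_smooth Gd).differentiable (by simp)

theorem mul_hasFDerivAt_right {d : ℕ} (Gd : LieGroupData d) (x y : Euc d) :
    HasFDerivAt (Gd.mul x) ((fderiv ℝ (mulP Gd) (x, y)).comp
      (ContinuousLinearMap.inr ℝ (Euc d) (Euc d))) y :=
  ((mulP_diff Gd) (x, y)).hasFDerivAt.comp y (hasFDerivAt_prodMk_right x y)

theorem mul_hasFDerivAt_left {d : ℕ} (Gd : LieGroupData d) (x y : Euc d) :
    HasFDerivAt (fun z => Gd.mul z y) ((fderiv ℝ (mulP Gd) (x, y)).comp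
      (ContinuousLinearMap.inl ℝ (Euc d) (Euc d))) x :=
  ((mulP_diff Gd) (x, y)).hasFDerivAt.comp (f := fun z => (z, y)) x (hasFDerivAt_prodMk_left x y)

theorem lvf_eq {d : ℕ} (Gd : LieGroupData d) (v x : Euc d) :
    Gd.lvf v x = fderiv ℝ (mulP Gd) (x, Gd.one) (0, v) := by
  rw [LieGroupData.lvf, (mul_hasFDerivAt_right Gd x Gd.one).fderiv]
  simp

theorem lvf_smooth {d : ℕ} (Gd : LieGroupData d) (v : Euc d) :
    ContDiff ℝ (⊤ : ℕ∞) (Gd.lvf v) := by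
  have : Gd.lvf v = fun x => fderiv ℝ (mulP Gd) (x, Gd.one) (0, v) := by
    funext x; exact lvf_eq Gd v x
  rw [this]
  have h1 : ContDiff ℝ (⊤ : ℕ∞) (fderiv ℝ (mulP Gd)) :=
    (mulP_smooth Gd).fderiv_right (by simp)
  exact (h1.comp (contDiff_id.prodMk contDiff_const)).clm_apply contDiff_const

theorem mul_smooth_right {d : ℕ} (Gd : LieGroupData d) (a : Euc d) :
    ContDiff ℝ (⊤ : ℕ∞) (Gd.mul a) :=
  (mulP_smooth Gd).comp (contDiff_const.prodMk contDiff_id)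

theorem mul_smooth_left {d : ℕ} (Gd : LieGroupData d) (a : Euc d) :
    ContDiff ℝ (⊤ : ℕ∞) (fun x => Gd.mul x a) :=
  (mulP_smooth Gd).comp (contDiff_id.prodMk contDiff_const)

theorem lvf_one {d : ℕ} (Gd : LieGroupData d) (v : Euc d) : Gd.lvf v Gd.one = v := by
  have : Gd.mul Gd.one = id := by funext x; exact Gd.one_mul x
  rw [LieGroupData.lvf, this]
  simp

theorem lvf_left_inv {d : ℕ} (Gd : LieGroupData d) (v a y : Euc d) :
    fderiv ℝ (Gd.mul a) y (Gd.lvf v y) = Gd.lvf v (Gd.mul a y) := by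
  have e : Gd.mul (Gd.mul a y) = Gd.mul a ∘ Gd.mul y := by
    funext z; exact Gd.mul_assoc a y z
  have h1 : DifferentiableAt ℝ (Gd.mul a) (Gd.mul y Gd.one) :=
    (mul_smooth_right Gd a).differentiable (by simp) _
  have h2 : DifferentiableAt ℝ (Gd.mul y) Gd.one :=
    (mul_smooth_right Gd y).differentiable (by simp) _
  rw [LieGroupData.lvf, LieGroupData.lvf, e, fderiv_comp _ h1 h2, Gd.mul_one]
  rfl

theorem lvf_sum {d s : ℕ} (Gd : LieGroupData d) (Xb : Fin s → Euc d) (c : Fin s → ℝ) (x : Euc d) :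
    Gd.lvf (∑ j, c j • Xb j) x = ∑ j, c j • Gd.lvf (Xb j) x := by
  simp [LieGroupData.lvf, map_sum]

/-- Horizontal curves of speed at most one. -/
def Hor {d s : ℕ} (Gd : LieGroupData d) (Xb : Fin s → Euc d) (b : ℝ) (γ : ℝ → Euc d) : Prop :=
  ∃ c : Fin s → ℝ → ℝ, (∀ j, Measurable (c j)) ∧ (∀ t ∈ Icc 0 b, ∑ j, (c j t) ^ 2 ≤ 1) ∧
    IsPrim b γ (fun t => ∑ j, c j t • Gd.lvf (Xb j) (γ t))

/-- bounded measurable coefficients give integrable velocity -/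
theorem hor_aux {d s : ℕ} (Gd : LieGroupData d) (Xb : Fin s → Euc d) {b : ℝ} {γ : ℝ → Euc d}
    {c : Fin s → ℝ → ℝ} (hc : ∀ j, Measurable (c j))
    (hc1 : ∀ t ∈ Icc 0 b, ∑ j, (c j t) ^ 2 ≤ 1) (hγ : ContinuousOn γ (Icc 0 b)) :
    MeasureTheory.IntegrableOn (fun t => ∑ j, c j t • Gd.lvf (Xb j) (γ t)) (Icc 0 b) ∧
      ∃ K : NNReal, ∀ u ∈ Icc 0 b, ‖∑ j, c j u • Gd.lvf (Xb j) (γ u)‖ ≤ K := by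
  have hcj : ∀ j, ∀ t ∈ Icc 0 b, |c j t| ≤ 1 := by
    intro j t ht
    have h1 : (c j t) ^ 2 ≤ 1 := (Finset.single_le_sum (f := fun j => (c j t) ^ 2)
      (fun i _ => sq_nonneg _) (Finset.mem_univ j)).trans (hc1 t ht)
    exact abs_le_one_iff_mul_self_le_one.2 (by nlinarith)
  have hfin : MeasureTheory.IsFiniteMeasure (MeasureTheory.volume.restrict (Icc 0 b)) :=
    ⟨by simp⟩
  have key : ∀ j, MeasureTheory.IntegrableOn (fun t => c j t • Gd.lvf (Xb j) (γ t)) (Icc 0 b) ∧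
      ∃ K : NNReal, ∀ u ∈ Icc 0 b, ‖c j u • Gd.lvf (Xb j) (γ u)‖ ≤ K := by
    intro j
    have hi : MeasureTheory.IntegrableOn (c j) (Icc 0 b) := by
      refine MeasureTheory.Integrable.of_bound (hc j).aestronglyMeasurable 1 ?_
      rw [MeasureTheory.ae_restrict_iff' measurableSet_Icc]
      exact Eventually.of_forall (hcj j)
    have hA : ContinuousOn (fun t => ContinuousLinearMap.toSpanSingleton ℝ
        (Gd.lvf (Xb j) (γ t))) (Icc 0 b) :=
      (ContinuousLinearMap.toSpanSingletonCLE (𝕜 := ℝ) (E := Euc d)).continuous.comp_continuousOn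
        ((lvf_smooth Gd (Xb j)).continuous.comp_continuousOn hγ)
    have := prim_apply hi ⟨1, hcj j⟩ hA
    simpa [ContinuousLinearMap.toSpanSingleton_apply] using this
  refine ⟨MeasureTheory.integrable_finsetSum _ fun j _ => (key j).1, ?_⟩
  choose K hK using fun j => (key j).2
  refine ⟨∑ j, K j, fun u hu => (norm_sum_le _ _).trans ?_⟩
  push_cast
  exact Finset.sum_le_sum fun j _ => hK j u hu

theorem hor_of_admissible {d s : ℕ} {Gd : LieGroupData d} {Xb : Fin s → Euc d} {S : CCData d s}
    (hX : S.X = fun j => Gd.lvf (Xb j)) {b : ℝ} {γ : ℝ → Euc d} (h : S.Admissible b γ) :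
    Hor Gd Xb b γ := by
  obtain ⟨hb, -, c, hc, hc1, hi, he⟩ := h
  simp only [hX] at hi he
  have hcont : ContinuousOn γ (Icc 0 b) := by
    have h1 := (intervalIntegral.continuousOn_primitive_interval (a := 0) (b := b) (μ := MeasureTheory.volume) (f := fun t => ∑ j, c j t • Gd.lvf (Xb j) (γ t)) (by
      rwa [uIcc_of_le hb]))
    rw [uIcc_of_le hb] at h1
    exact (continuousOn_const.add h1).congr he
  exact ⟨c, hc, hc1, hb, hi, (hor_aux Gd Xb hc hc1 hcont).2, he⟩

theorem admissible_of_hor {d s : ℕ} {Gd : LieGroupData d} {Xb : Fin s → Euc d} {S : CCData d s}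
    (hG : S.G = Set.univ)
    (hX : S.X = fun j => Gd.lvf (Xb j)) {b : ℝ} {γ : ℝ → Euc d} (h : Hor Gd Xb b γ) :
    S.Admissible b γ := by
  obtain ⟨c, hc, hc1, hp⟩ := h
  refine ⟨hp.nonneg, fun t _ => by rw [hG]; trivial, c, hc, hc1, ?_, ?_⟩
  · simp only [hX]; exact hp.int
  · simp only [hX]; exact hp.eq

theorem Hor.translate {d s : ℕ} {Gd : LieGroupData d} {Xb : Fin s → Euc d} {b : ℝ}
    {γ : ℝ → Euc d} (h : Hor Gd Xb b γ) (a : Euc d) : Hor Gd Xb b (fun t => Gd.mul a (γ t)) := by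
  obtain ⟨c, hc, hc1, hp⟩ := h
  refine ⟨c, hc, hc1, ?_⟩
  have := hp.chain (Φ := Gd.mul a) ((mul_smooth_right Gd a).of_le (by exact_mod_cast le_top))
  simp only [map_sum, map_smul, lvf_left_inv] at this
  exact this

theorem IsPrim.restrict {W : Type*} [NormedAddCommGroup W] [NormedSpace ℝ W] [CompleteSpace W]
    {b : ℝ} {γ v : ℝ → W} (h : IsPrim b γ v) {p q : ℝ} (hp : 0 ≤ p) (hpq : p ≤ q) (hq : q ≤ b) :
    IsPrim (q - p) (fun t => γ (t + p)) (fun t => v (t + p)) := by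
  have hmem : ∀ t ∈ Icc 0 (q - p), t + p ∈ Icc 0 b := fun t ht =>
    ⟨by linarith [ht.1], by linarith [ht.2]⟩
  have hii : ∀ t ∈ Icc 0 b, IntervalIntegrable v MeasureTheory.volume 0 t := by
    intro t ht
    rw [intervalIntegrable_iff_integrableOn_Icc_of_le ht.1]
    exact h.int.mono_set (Icc_subset_Icc_right ht.2)
  have hpm : p ∈ Icc 0 b := ⟨hp, hpq.trans hq⟩
  obtain ⟨K, hK⟩ := h.bdd
  refine ⟨by linarith, ?_, ⟨K, fun u hu => hK _ (hmem u hu)⟩, ?_⟩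
  · rw [← intervalIntegrable_iff_integrableOn_Icc_of_le (by linarith)]
    have h1 : IntervalIntegrable v MeasureTheory.volume p q :=
      (hii p hpm).symm.trans (hii q ⟨hp.trans hpq, hq⟩)
    have h2 := h1.comp_add_right p
    simpa using h2
  · intro t ht
    have e1 := h.eq _ (hmem t ht)
    have e2 := h.eq p hpm
    have e3 : ∫ u in (0 : ℝ)..t, v (u + p) = ∫ u in p..(t + p), v u := by
      rw [intervalIntegral.integral_comp_add_right]
      simp
    simp only [zero_add]
    rw [e1, e2, e3, add_assoc, intervalIntegral.integral_add_adjacent_intervals (hii p hpm)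
      ((hii p hpm).symm.trans (hii _ (hmem t ht)))]

theorem Hor.restrict {d s : ℕ} {Gd : LieGroupData d} {Xb : Fin s → Euc d} {b : ℝ}
    {γ : ℝ → Euc d} (h : Hor Gd Xb b γ) {p q : ℝ} (hp : 0 ≤ p) (hpq : p ≤ q) (hq : q ≤ b) :
    Hor Gd Xb (q - p) (fun t => γ (t + p)) := by
  obtain ⟨c, hc, hc1, hpr⟩ := h
  exact ⟨fun j t => c j (t + p), fun j => (hc j).comp (measurable_id.add_const p),
    fun t ht => hc1 _ ⟨by linarith [ht.1], by linarith [ht.2]⟩, hpr.restrict hp hpq hq⟩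

/-- The horizontal gradient. -/
def hgrad {d s : ℕ} (Gd : LieGroupData d) (Xb : Fin s → Euc d) (f : Euc d → ℝ) (x : Euc d) :
    EuclideanSpace ℝ (Fin s) :=
  WithLp.toLp 2 fun j => fderiv ℝ f x (Gd.lvf (Xb j) x)

theorem hgrad_pair {d s : ℕ} (Gd : LieGroupData d) (Xb : Fin s → Euc d) (f : Euc d → ℝ)
    (x : Euc d) (c : Fin s → ℝ) :
    fderiv ℝ f x (∑ j, c j • Gd.lvf (Xb j) x) =
      inner ℝ (hgrad Gd Xb f x) (WithLp.toLp 2 c : EuclideanSpace ℝ (Fin s)) := by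
  simp [hgrad, map_sum, PiLp.inner_apply]

theorem hgrad_le {d s : ℕ} (Gd : LieGroupData d) (Xb : Fin s → Euc d) (f : Euc d → ℝ)
    (x : Euc d) (c : Fin s → ℝ) (hc : ∑ j, c j ^ 2 ≤ 1) :
    |fderiv ℝ f x (∑ j, c j • Gd.lvf (Xb j) x)| ≤ ‖hgrad Gd Xb f x‖ := by
  rw [hgrad_pair]
  refine (abs_real_inner_le_norm _ _).trans (mul_le_of_le_one_right (norm_nonneg _) ?_)
  rw [EuclideanSpace.norm_eq]
  simp only [Real.norm_eq_abs, sq_abs]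
  rw [Real.sqrt_le_one]
  exact hc

theorem Hor.lipschitz {d s : ℕ} {Gd : LieGroupData d} {Xb : Fin s → Euc d} {b : ℝ}
    {γ : ℝ → Euc d} (h : Hor Gd Xb b γ) {f : Euc d → ℝ} (hf : ContDiff ℝ 1 f) {C : ℝ}
    (hC : ∀ x, ‖hgrad Gd Xb f x‖ ≤ C) : |f (γ b) - f (γ 0)| ≤ C * b := by
  obtain ⟨c, hc, hc1, hp⟩ := h
  have h1 := (hp.chain hf).eq b ⟨hp.nonneg, le_rfl⟩
  rw [h1, add_sub_cancel_left]
  have h2 := intervalIntegral.norm_integral_le_of_norm_le_const (a := 0) (b := b) (C := C)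
    (f := fun u => fderiv ℝ f (γ u) (∑ j, c j u • Gd.lvf (Xb j) (γ u))) (fun u hu => by
      rw [uIoc_of_le hp.nonneg] at hu
      exact (hgrad_le Gd Xb f (γ u) (fun j => c j u) (hc1 u ⟨hu.1.le, hu.2⟩)).trans (hC _))
  rwa [sub_zero, abs_of_nonneg hp.nonneg, Real.norm_eq_abs] at h2

/-- The Carnot-Caratheodory distance of the group. -/
def ccd {d s : ℕ} (Gd : LieGroupData d) (Xb : Fin s → Euc d) (x y : Euc d) : ℝ :=
  sInf {b | ∃ γ : ℝ → Euc d, Hor Gd Xb b γ ∧ γ 0 = x ∧ γ b = y}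

/-- The distance is finite and a metric. -/
structure IsGeo {d s : ℕ} (Gd : LieGroupData d) (Xb : Fin s → Euc d) : Prop where
  conn : ∀ x y, ∃ b γ, Hor Gd Xb b γ ∧ γ 0 = x ∧ γ b = y
  self : ∀ x, ccd Gd Xb x x = 0
  symm : ∀ x y, ccd Gd Xb x y = ccd Gd Xb y x
  tri : ∀ x y z, ccd Gd Xb x z ≤ ccd Gd Xb x y + ccd Gd Xb y z

theorem ccDist_eq {d s : ℕ} {Gd : LieGroupData d} {Xb : Fin s → Euc d} {S : CCData d s}
    (hG : S.G = Set.univ) (hX : S.X = fun j => Gd.lvf (Xb j)) (x y : Euc d) :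
    S.ccDist x y = ccd Gd Xb x y := by
  rw [CCData.ccDist, ccd]
  congr 1
  ext b
  exact ⟨fun ⟨γ, h, h0⟩ => ⟨γ, hor_of_admissible hX h, h0⟩,
    fun ⟨γ, h, h0⟩ => ⟨γ, admissible_of_hor hG hX h, h0⟩⟩

theorem isGeo_of_rep {d s : ℕ} {Gd : LieGroupData d} {Xb : Fin s → Euc d} {S : CCData d s}
    (hG : S.G = Set.univ) (hX : S.X = fun j => Gd.lvf (Xb j)) (hconn : S.Connects)
    {M : Type*} [MetricSpace M] {ι : M → Euc d} (hrep : CCRepresentation S M ι) :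
    IsGeo Gd Xb := by
  have hs : ∀ x, ∃ m, ι m = x := by
    intro x
    have : x ∈ Set.range ι := by rw [hrep.range_eq, hG]; trivial
    exact this
  have he : ∀ m m', ccd Gd Xb (ι m) (ι m') = dist m m' := fun m m' => by
    rw [hrep.dist_eq, ccDist_eq hG hX]
  refine ⟨fun x y => ?_, fun x => ?_, fun x y => ?_, fun x y z => ?_⟩
  · obtain ⟨b, γ, h, h0⟩ := hconn x (by rw [hG]; trivial) y (by rw [hG]; trivial)
    exact ⟨b, γ, hor_of_admissible hX h, h0⟩
  · obtain ⟨m, rfl⟩ := hs x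
    rw [he, dist_self]
  · obtain ⟨m, rfl⟩ := hs x
    obtain ⟨m', rfl⟩ := hs y
    rw [he, he, dist_comm]
  · obtain ⟨m, rfl⟩ := hs x
    obtain ⟨m', rfl⟩ := hs y
    obtain ⟨m'', rfl⟩ := hs z
    rw [he, he, he]
    exact dist_triangle _ _ _

theorem ccd_bddBelow {d s : ℕ} (Gd : LieGroupData d) (Xb : Fin s → Euc d) (x y : Euc d) :
    BddBelow {b | ∃ γ : ℝ → Euc d, Hor Gd Xb b γ ∧ γ 0 = x ∧ γ b = y} := by
  refine ⟨0, ?_⟩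
  rintro b ⟨γ, ⟨c, -, -, hp⟩, -⟩
  exact hp.nonneg

theorem ccd_le {d s : ℕ} {Gd : LieGroupData d} {Xb : Fin s → Euc d} {b : ℝ} {γ : ℝ → Euc d}
    (h : Hor Gd Xb b γ) {x y : Euc d} (hx : γ 0 = x) (hy : γ b = y) : ccd Gd Xb x y ≤ b :=
  csInf_le (ccd_bddBelow Gd Xb _ _) ⟨γ, h, hx, hy⟩

theorem ccd_nonneg {d s : ℕ} (Gd : LieGroupData d) (Xb : Fin s → Euc d) (x y : Euc d) :
    0 ≤ ccd Gd Xb x y := by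
  apply Real.sInf_nonneg
  rintro b ⟨γ, ⟨c, -, -, hp⟩, -⟩
  exact hp.nonneg

theorem IsGeo.exists_lt {d s : ℕ} {Gd : LieGroupData d} {Xb : Fin s → Euc d} (hg : IsGeo Gd Xb)
    {x y : Euc d} {r : ℝ} (h : ccd Gd Xb x y < r) :
    ∃ b γ, b < r ∧ Hor Gd Xb b γ ∧ γ 0 = x ∧ γ b = y := by
  obtain ⟨b0, γ0, h0⟩ := hg.conn x y
  have hne : {b | ∃ γ : ℝ → Euc d, Hor Gd Xb b γ ∧ γ 0 = x ∧ γ b = y}.Nonempty := ⟨b0, γ0, h0⟩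
  obtain ⟨b, ⟨γ, hγ⟩, hb⟩ := exists_lt_of_csInf_lt hne h
  exact ⟨b, γ, hb, hγ⟩

theorem IsGeo.lipschitz {d s : ℕ} {Gd : LieGroupData d} {Xb : Fin s → Euc d} (hg : IsGeo Gd Xb)
    {f : Euc d → ℝ} (hf : ContDiff ℝ 1 f) {C : ℝ} (hC0 : 0 ≤ C)
    (hC : ∀ x, ‖hgrad Gd Xb f x‖ ≤ C) (x y : Euc d) : |f x - f y| ≤ C * ccd Gd Xb x y := by
  refine le_of_forall_pos_le_add fun ε hε => ?_
  obtain ⟨b, γ, hb, hγ, rfl, rfl⟩ := hg.exists_lt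
    (lt_add_of_pos_right (ccd Gd Xb x y) (show 0 < ε / (C + 1) by positivity))
  rw [abs_sub_comm]
  refine (hγ.lipschitz hf hC).trans ?_
  calc C * b ≤ C * (ccd Gd Xb (γ 0) (γ b) + ε / (C + 1)) := by gcongr
    _ = C * ccd Gd Xb (γ 0) (γ b) + C / (C + 1) * ε := by field_simp
    _ ≤ C * ccd Gd Xb (γ 0) (γ b) + 1 * ε := by
      gcongr
      rw [div_le_one (by positivity)]
      linarith
    _ = _ := by ring

theorem IsGeo.left_le {d s : ℕ} {Gd : LieGroupData d} {Xb : Fin s → Euc d} (hg : IsGeo Gd Xb)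
    (a x y : Euc d) : ccd Gd Xb (Gd.mul a x) (Gd.mul a y) ≤ ccd Gd Xb x y := by
  refine le_of_forall_pos_le_add fun ε hε => ?_
  obtain ⟨b, γ, hb, hγ, rfl, rfl⟩ := hg.exists_lt (lt_add_of_pos_right (ccd Gd Xb x y) hε)
  exact (ccd_le (hγ.translate a) rfl rfl).trans hb.le

theorem IsGeo.left {d s : ℕ} {Gd : LieGroupData d} {Xb : Fin s → Euc d} (hg : IsGeo Gd Xb)
    (a x y : Euc d) : ccd Gd Xb (Gd.mul a x) (Gd.mul a y) = ccd Gd Xb x y := by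
  refine le_antisymm (hg.left_le a x y) ?_
  have := hg.left_le (Gd.inv a) (Gd.mul a x) (Gd.mul a y)
  rwa [lg_inv_mul_cancel_left, lg_inv_mul_cancel_left] at this

/-- The homogeneous norm. -/
def ccN {d s : ℕ} (Gd : LieGroupData d) (Xb : Fin s → Euc d) (x : Euc d) : ℝ :=
  ccd Gd Xb Gd.one x

theorem IsGeo.eq_N {d s : ℕ} {Gd : LieGroupData d} {Xb : Fin s → Euc d} (hg : IsGeo Gd Xb)
    (x y : Euc d) : ccd Gd Xb x y = ccN Gd Xb (Gd.mul (Gd.inv x) y) := by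
  rw [ccN, ← hg.left (Gd.inv x) x y, Gd.inv_mul]

theorem IsGeo.N_mul {d s : ℕ} {Gd : LieGroupData d} {Xb : Fin s → Euc d} (hg : IsGeo Gd Xb)
    (x y : Euc d) : ccN Gd Xb (Gd.mul x y) ≤ ccN Gd Xb x + ccN Gd Xb y := by
  refine (hg.tri _ x _).trans ?_
  have := hg.left x Gd.one y
  rw [Gd.mul_one] at this
  rw [this]
  rfl

theorem IsGeo.N_inv {d s : ℕ} {Gd : LieGroupData d} {Xb : Fin s → Euc d} (hg : IsGeo Gd Xb)
    (x : Euc d) : ccN Gd Xb (Gd.inv x) = ccN Gd Xb x := by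
  have := hg.eq_N x Gd.one
  rw [Gd.mul_one] at this
  rw [← this, hg.symm]
  rfl

theorem IsGeo.N_one {d s : ℕ} {Gd : LieGroupData d} {Xb : Fin s → Euc d} (hg : IsGeo Gd Xb) :
    ccN Gd Xb Gd.one = 0 := hg.self _

/-- curves with derivative in a constant horizontal direction -/
theorem hor_of_hasDerivAt {d s : ℕ} (Gd : LieGroupData d) (Xb : Fin s → Euc d) {c : Fin s → ℝ}
    (hc : ∑ j, c j ^ 2 ≤ 1) {b : ℝ} (hb : 0 ≤ b) {γ : ℝ → Euc d}
    (hγ : ∀ t ∈ Icc 0 b, HasDerivAt γ (Gd.lvf (∑ j, c j • Xb j) (γ t)) t) : Hor Gd Xb b γ := by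
  have hcont : ContinuousOn γ (Icc 0 b) := fun t ht => (hγ t ht).continuousAt.continuousWithinAt
  obtain ⟨hi, hbd⟩ := hor_aux Gd Xb (c := fun j _ => c j) (fun j => measurable_const)
    (fun t _ => hc) hcont
  refine ⟨fun j _ => c j, fun j => measurable_const, fun t _ => hc, hb, hi, hbd, ?_⟩
  intro t ht
  have h1 : ∀ u ∈ uIcc 0 t, HasDerivAt γ (∑ j, c j • Gd.lvf (Xb j) (γ u)) u := by
    intro u hu
    rw [uIcc_of_le ht.1] at hu
    rw [← lvf_sum]
    exact hγ u ⟨hu.1, hu.2.trans ht.2⟩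
  rw [intervalIntegral.integral_eq_sub_of_hasDerivAt h1]
  · abel
  · rw [intervalIntegrable_iff_integrableOn_Icc_of_le ht.1]
    exact hi.mono_set (Icc_subset_Icc_right ht.2)

/-- Local one-parameter curves. -/
theorem exists_flow {d s : ℕ} (Gd : LieGroupData d) (Xb : Fin s → Euc d) {c : Fin s → ℝ}
    (hc : ∑ j, c j ^ 2 ≤ 1) : ∃ (k : ℝ → Euc d) (τ : ℝ), 0 < τ ∧ k 0 = Gd.one ∧
      HasStrictDerivAt k (∑ j, c j • Xb j) 0 ∧ ∀ t, |t| < τ → ccN Gd Xb (k t) ≤ |t| := by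
  set w := ∑ j, c j • Xb j with hw
  obtain ⟨k, hk0, τ, hτ, hk⟩ := ContDiffAt.exists_forall_mem_closedBall_exists_eq_forall_mem_Ioo_hasDerivAt₀
    (f := Gd.lvf w) (x₀ := Gd.one)
    (((lvf_smooth Gd w).of_le (by exact_mod_cast le_top)).contDiffAt) 0
  have hk' : ∀ t, |t| < τ → HasDerivAt k (Gd.lvf w (k t)) t := fun t ht => by
    rw [abs_lt] at ht
    exact hk t ⟨by linarith [ht.1], by linarith [ht.2]⟩
  have h0 : HasDerivAt k (Gd.lvf w (k 0)) 0 := hk' 0 (by simpa using hτ)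
  refine ⟨k, τ, hτ, hk0, ?_, ?_⟩
  · have h1 : HasStrictDerivAt k (Gd.lvf w (k 0)) 0 := by
      refine hasStrictDerivAt_of_hasDerivAt_of_continuousAt (f' := fun t => Gd.lvf w (k t)) ?_ ?_
      · have : ∀ᶠ t : ℝ in 𝓝 0, t ∈ Metric.ball (0 : ℝ) τ := Metric.ball_mem_nhds 0 hτ
        filter_upwards [this] with t ht
        refine hk' t ?_
        simpa using ht
      · exact ((lvf_smooth Gd w).continuous.continuousAt).comp h0.continuousAt
    rwa [hk0, lvf_one] at h1
  · intro t ht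
    rcases le_total 0 t with h | h
    · rw [abs_of_nonneg h] at ht ⊢
      refine ccd_le (hor_of_hasDerivAt Gd Xb hc h (γ := k) fun u hu => hk' u ?_) hk0 rfl
      rw [abs_of_nonneg hu.1]
      exact hu.2.trans_lt ht
    · rw [abs_of_nonpos h] at ht ⊢
      refine ccd_le (hor_of_hasDerivAt Gd Xb (c := fun j => - c j) (by simpa using hc)
        (b := -t) (by linarith) (γ := fun u => k (-u)) fun u hu => ?_) (by simpa using hk0) (by simp)
      have h2 := (hk' (-u) (by rw [abs_neg, abs_of_nonneg hu.1]; exact hu.2.trans_lt ht)).scomp u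
        (hasDerivAt_neg u)
      have h3 : Gd.lvf (∑ j, (- c j) • Xb j) (k (-u)) = (-1 : ℝ) • Gd.lvf w (k (-u)) := by
        rw [hw, lvf_sum, lvf_sum]
        simp
      rw [h3]
      exact h2

/-- The horizontal gradient of a Lipschitz function is bounded. -/
theorem IsGeo.hgrad_le_of_lip {d s : ℕ} {Gd : LieGroupData d} {Xb : Fin s → Euc d}
    (hg : IsGeo Gd Xb) {f : Euc d → ℝ} (hf : Differentiable ℝ f) {C : ℝ} (hC0 : 0 ≤ C)
    (hC : ∀ x y, |f x - f y| ≤ C * ccd Gd Xb x y) (x : Euc d) : ‖hgrad Gd Xb f x‖ ≤ C := by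
  by_cases hz : ‖hgrad Gd Xb f x‖ = 0
  · rw [hz]; exact hC0
  set v := hgrad Gd Xb f x with hv
  have hvpos : 0 < ‖v‖ := lt_of_le_of_ne (norm_nonneg _) (Ne.symm hz)
  set c : Fin s → ℝ := fun j => ‖v‖⁻¹ * v j with hcdef
  have hcv : (WithLp.toLp 2 c : EuclideanSpace ℝ (Fin s)) = ‖v‖⁻¹ • v := by
    ext j; simp [hcdef]
  have hc : ∑ j, c j ^ 2 ≤ 1 := by
    have h1 : ‖(WithLp.toLp 2 c : EuclideanSpace ℝ (Fin s))‖ = 1 := by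
      rw [hcv, norm_smul, norm_inv, norm_norm, inv_mul_cancel₀ hz]
    rw [EuclideanSpace.norm_eq, Real.sqrt_eq_one] at h1
    simp only [Real.norm_eq_abs, sq_abs] at h1
    exact h1.le
  obtain ⟨k, τ, hτ, hk0, hkd, hkN⟩ := exists_flow Gd Xb hc
  have h1 : HasDerivAt (fun t => Gd.mul x (k t)) (Gd.lvf (∑ j, c j • Xb j) x) 0 := by
    have := (mul_hasFDerivAt_right Gd x (k 0)).comp_hasDerivAt 0 hkd.hasDerivAt
    rw [hk0] at this
    rw [lvf_eq]
    rw [ContinuousLinearMap.comp_apply, ContinuousLinearMap.inr_apply] at this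
    exact this
  have h2 : HasDerivAt (fun t => f (Gd.mul x (k t))) ‖v‖ 0 := by
    have := (hf (Gd.mul x (k 0))).hasFDerivAt.comp_hasDerivAt (0:ℝ) h1
    rw [hk0, Gd.mul_one, lvf_sum, hgrad_pair, hcv, ← hv, inner_smul_right,
      real_inner_self_eq_norm_sq] at this
    rw [sq, inv_mul_cancel_left₀ hz] at this
    exact this
  have h3 := h2.le_of_lip' hC0 (C := C) ?_
  · simpa using h3
  · have : ∀ᶠ t : ℝ in 𝓝 0, t ∈ Metric.ball (0 : ℝ) τ := Metric.ball_mem_nhds 0 hτ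
    filter_upwards [this] with t ht
    have ht' : |t| < τ := by simpa using ht
    refine (hC _ _).trans ?_
    rw [hg.left, hk0, hg.symm, sub_zero]
    gcongr
    exact hkN t ht'

/-- conjugation as a function on the product -/
def cjP {d : ℕ} (Gd : LieGroupData d) (p : Euc d × Euc d) : Euc d :=
  Gd.mul (Gd.mul p.1 p.2) (Gd.inv p.1)

theorem cjP_smooth {d : ℕ} (Gd : LieGroupData d) : ContDiff ℝ (⊤ : ℕ∞) (cjP Gd) := by
  have h1 : ContDiff ℝ (⊤ : ℕ∞) fun p : Euc d × Euc d => (Gd.mul p.1 p.2, Gd.inv p.1) :=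
    Gd.smooth_mul.prodMk (Gd.smooth_inv.comp contDiff_fst)
  exact Gd.smooth_mul.comp h1

/-- The adjoint representation. -/
def Adj {d : ℕ} (Gd : LieGroupData d) (x : Euc d) : Euc d →L[ℝ] Euc d :=
  (fderiv ℝ (cjP Gd) (x, Gd.one)).comp (ContinuousLinearMap.inr ℝ (Euc d) (Euc d))

theorem Adj_apply {d : ℕ} (Gd : LieGroupData d) (x z : Euc d) :
    Adj Gd x z = fderiv ℝ (cjP Gd) (x, Gd.one) (0, z) := by simp [Adj]

theorem cj_one {d : ℕ} (Gd : LieGroupData d) (x : Euc d) : cjP Gd (x, Gd.one) = Gd.one := by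
  simp [cjP, Gd.mul_one, lg_mul_inv]

theorem Adj_hasFDerivAt {d : ℕ} (Gd : LieGroupData d) (x : Euc d) :
    HasFDerivAt (fun y => cjP Gd (x, y)) (Adj Gd x) Gd.one :=
  ((cjP_smooth Gd).differentiable (by simp) (x, Gd.one)).hasFDerivAt.comp Gd.one
    (hasFDerivAt_prodMk_right x Gd.one)

theorem Adj_smooth {d : ℕ} (Gd : LieGroupData d) (z : Euc d) :
    ContDiff ℝ (⊤ : ℕ∞) (fun x => Adj Gd x z) := by
  simp only [Adj_apply]
  have h1 : ContDiff ℝ (⊤ : ℕ∞) (fderiv ℝ (cjP Gd)) :=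
    (cjP_smooth Gd).fderiv_right (by simp)
  exact (h1.comp (contDiff_id.prodMk contDiff_const)).clm_apply contDiff_const

theorem Adj_mul {d : ℕ} (Gd : LieGroupData d) (x y z : Euc d) :
    Adj Gd (Gd.mul x y) z = Adj Gd x (Adj Gd y z) := by
  have h1 : HasFDerivAt (fun w => cjP Gd (x, w)) (Adj Gd x) (cjP Gd (y, Gd.one)) := by
    rw [cj_one]; exact Adj_hasFDerivAt Gd x
  have h2 := h1.comp Gd.one (Adj_hasFDerivAt Gd y)
  have h3 : (fun w => cjP Gd (x, w)) ∘ (fun w => cjP Gd (y, w)) =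
      fun w => cjP Gd (Gd.mul x y, w) := by
    funext w
    simp only [Function.comp, cjP, lg_mul_inv_rev, Gd.mul_assoc]
  rw [h3] at h2
  rw [(Adj_hasFDerivAt Gd (Gd.mul x y)).unique h2]
  rfl

theorem Adj_one {d : ℕ} (Gd : LieGroupData d) (z : Euc d) : Adj Gd Gd.one z = z := by
  have h3 : (fun w => cjP Gd (Gd.one, w)) = id := by
    funext w
    simp [cjP, Gd.one_mul, lg_inv_one, Gd.mul_one]
  have h := Adj_hasFDerivAt Gd Gd.one
  rw [h3] at h
  rw [h.unique (hasFDerivAt_id _)]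
  rfl

theorem mulP_Adj {d : ℕ} (Gd : LieGroupData d) (x z : Euc d) :
    fderiv ℝ (mulP Gd) (Gd.one, x) (Adj Gd x z, 0) = Gd.lvf z x := by
  have h1 : HasFDerivAt (fun w => Gd.mul w x) ((fderiv ℝ (mulP Gd) (Gd.one, x)).comp
      (ContinuousLinearMap.inl ℝ (Euc d) (Euc d))) (cjP Gd (x, Gd.one)) := by
    rw [cj_one]; exact mul_hasFDerivAt_left Gd Gd.one x
  have h2 := h1.comp Gd.one (Adj_hasFDerivAt Gd x)
  have h3 : (fun w => Gd.mul w x) ∘ (fun w => cjP Gd (x, w)) = Gd.mul x := by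
    funext w
    simp only [Function.comp, cjP, Gd.mul_assoc, Gd.inv_mul, Gd.mul_one]
  rw [h3] at h2
  rw [LieGroupData.lvf, h2.fderiv]
  simp

/-- the second derivative of multiplication at the unit -/
def mul2 {d : ℕ} (Gd : LieGroupData d) : (Euc d × Euc d) →L[ℝ] (Euc d × Euc d) →L[ℝ] Euc d :=
  fderiv ℝ (fderiv ℝ (mulP Gd)) (Gd.one, Gd.one)

theorem mul2_hasFDerivAt {d : ℕ} (Gd : LieGroupData d) :
    HasFDerivAt (fderiv ℝ (mulP Gd)) (mul2 Gd) (Gd.one, Gd.one) := by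
  have h1 : ContDiff ℝ (⊤ : ℕ∞) (fderiv ℝ (mulP Gd)) :=
    (mulP_smooth Gd).fderiv_right (by simp)
  exact (h1.differentiable (by simp) _).hasFDerivAt

theorem mul2_symm {d : ℕ} (Gd : LieGroupData d) (p q : Euc d × Euc d) :
    mul2 Gd p q = mul2 Gd q p := by
  have h := (mulP_smooth Gd).contDiffAt (x := (Gd.one, Gd.one))
  have := h.isSymmSndFDerivAt (by
    rw [minSmoothness_of_isRCLikeNormedField]
    show ((2 : ℕ∞) : WithTop ℕ∞) ≤ _
    exact WithTop.coe_le_coe.2 le_top)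
  exact this p q

theorem fderiv_lvf {d : ℕ} (Gd : LieGroupData d) (v w : Euc d) :
    fderiv ℝ (Gd.lvf w) Gd.one v = mul2 Gd (v, 0) (0, w) := by
  have e : Gd.lvf w = fun x => fderiv ℝ (mulP Gd) (x, Gd.one) (0, w) := by
    funext x; exact lvf_eq Gd w x
  have h1 := (mul2_hasFDerivAt Gd).comp (f := fun e => (e, Gd.one)) Gd.one (hasFDerivAt_prodMk_left Gd.one Gd.one)
  have h2 := h1.clm_apply (hasFDerivAt_const ((0 : Euc d), w) Gd.one)
  rw [e]
  have h3 := h2.fderiv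
  simp only [Function.comp_def] at h3
  rw [h3]
  simp

theorem bracket_eq {d : ℕ} (Gd : LieGroupData d) (v w : Euc d) :
    Gd.bracket v w = mul2 Gd (v, 0) (0, w) - mul2 Gd (w, 0) (0, v) := by
  rw [LieGroupData.bracket, vfBracket, lvf_one, lvf_one, fderiv_lvf, fderiv_lvf]

theorem fderiv_Adj {d : ℕ} (Gd : LieGroupData d) (v z : Euc d) :
    fderiv ℝ (fun x => Adj Gd x z) Gd.one v = Gd.bracket v z := by
  have hA : HasFDerivAt (fun x => Adj Gd x z) (fderiv ℝ (fun x => Adj Gd x z) Gd.one) Gd.one :=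
    ((Adj_smooth Gd z).differentiable (by simp) _).hasFDerivAt
  have h1 := (mul2_hasFDerivAt Gd).comp Gd.one (hasFDerivAt_prodMk_right Gd.one Gd.one)
  have h2 := h1.clm_apply (hA.prodMk (hasFDerivAt_const (0 : Euc d) Gd.one))
  have e : (fun x => fderiv ℝ (mulP Gd) (Gd.one, x) (Adj Gd x z, 0)) = Gd.lvf z := by
    funext x; exact mulP_Adj Gd x z
  have h3 := h2.fderiv
  simp only [Function.comp_def] at h3
  rw [e] at h3
  have h4 := congrArg (fun T => T v) h3
  simp only [fderiv_lvf] at h4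
  have h5 : ∀ u : Euc d, fderiv ℝ (mulP Gd) (Gd.one, Gd.one) (u, 0) = u := by
    intro u
    have := mulP_Adj Gd Gd.one u
    rwa [Adj_one, lvf_one] at this
  rw [bracket_eq, h4, mul2_symm Gd (z, 0) (0, v)]
  simp [h5, Adj_one]

theorem mem_of_hasDerivAt {d : ℕ} (L : Submodule ℝ (Euc d)) {g : ℝ → Euc d} {v : Euc d}
    (hg : HasDerivAt g v 0) (hL : ∀ᶠ t in 𝓝 0, g t ∈ L) : v ∈ L := by
  have h1 := hasDerivAt_iff_tendsto_slope.1 hg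
  have hc : IsClosed (L : Set (Euc d)) := L.closed_of_finiteDimensional
  refine hc.mem_of_tendsto h1 ?_
  filter_upwards [hL.filter_mono nhdsWithin_le_nhds] with t ht
  rw [slope_def_module]
  exact L.smul_mem _ (L.sub_mem ht hL.self_of_nhds)

/-- vectors reached by short conjugations -/
def gens {d s : ℕ} (Gd : LieGroupData d) (Xb : Fin s → Euc d) (ε : ℝ) : Set (Euc d) :=
  {z | ∃ x j, ccN Gd Xb x < ε ∧ z = Adj Gd x (Xb j)}

theorem single_sq {s : ℕ} (j : Fin s) : ∑ i, (Pi.single j (1 : ℝ) : Fin s → ℝ) i ^ 2 ≤ 1 := by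
  rw [Finset.sum_eq_single j]
  · simp
  · intro b _ hb; simp [hb]
  · simp

theorem single_sum {d s : ℕ} (Xb : Fin s → Euc d) (j : Fin s) :
    ∑ i, (Pi.single j (1 : ℝ) : Fin s → ℝ) i • Xb i = Xb j := by
  rw [Finset.sum_eq_single j]
  · simp
  · intro b _ hb; simp [hb]
  · simp

theorem gens_span {d s n : ℕ} {Gd : LieGroupData d} (strat : Gd.Stratification n)
    {Xb : Fin s → Euc d} (hg : IsGeo Gd Xb)
    (hXb_span : Submodule.span ℝ (Set.range Xb) = strat.V ⟨0, strat.npos⟩) {ε : ℝ} (hε : 0 < ε) :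
    Submodule.span ℝ (gens Gd Xb ε) = ⊤ := by
  set L := Submodule.span ℝ (gens Gd Xb ε) with hL
  have hb : ∀ i, ∀ z ∈ L, Gd.bracket (Xb i) z ∈ L := by
    intro i z hz
    induction hz using Submodule.span_induction with
    | mem z hz =>
      obtain ⟨x, j, hx, rfl⟩ := hz
      obtain ⟨k, τ, hτ, hk0, hkd, hkN⟩ := exists_flow Gd Xb (single_sq i)
      rw [single_sum] at hkd
      have h1 : HasFDerivAt (fun y => Adj Gd y (Adj Gd x (Xb j)))
          (fderiv ℝ (fun y => Adj Gd y (Adj Gd x (Xb j))) (k 0)) (k 0) :=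
        ((Adj_smooth Gd _).differentiable (by simp) _).hasFDerivAt
      have h2 := h1.comp_hasDerivAt 0 hkd.hasDerivAt
      rw [hk0, fderiv_Adj] at h2
      refine mem_of_hasDerivAt L h2 ?_
      have : ∀ᶠ t : ℝ in 𝓝 0, t ∈ Metric.ball (0 : ℝ) (min τ (ε - ccN Gd Xb x)) :=
        Metric.ball_mem_nhds 0 (lt_min hτ (by linarith))
      filter_upwards [this] with t ht
      have ht' : |t| < min τ (ε - ccN Gd Xb x) := by simpa using ht
      rw [lt_min_iff] at ht'
      refine Submodule.subset_span ⟨Gd.mul (k t) x, j, ?_, (Adj_mul _ _ _ _).symm⟩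
      have := hg.N_mul (k t) x
      linarith [hkN t ht'.1, ht'.2]
    | zero => 
      have : Gd.bracket (Xb i) 0 = 0 := by rw [← fderiv_Adj]; simp
      rw [this]; exact L.zero_mem
    | add a b _ _ ha hb =>
      have : Gd.bracket (Xb i) (a + b) = Gd.bracket (Xb i) a + Gd.bracket (Xb i) b := by
        rw [bracket_eq, bracket_eq, bracket_eq]
        have h1 : ((0 : Euc d), a + b) = (0, a) + (0, b) := by simp
        have h2 : (a + b, (0 : Euc d)) = (a, 0) + (b, 0) := by simp
        rw [h1, h2, map_add, map_add, add_apply]; abel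
      rw [this]; exact L.add_mem ha hb
    | smul r a _ ha =>
      have : Gd.bracket (Xb i) (r • a) = r • Gd.bracket (Xb i) a := by
        rw [bracket_eq, bracket_eq]
        have h1 : ((0 : Euc d), r • a) = r • (0, a) := by simp
        have h2 : (r • a, (0 : Euc d)) = r • (a, 0) := by simp
        rw [h1, h2, map_smul, map_smul, smul_apply, smul_sub]
      rw [this]; exact L.smul_mem _ ha
  have hb' : ∀ v ∈ strat.V ⟨0, strat.npos⟩, ∀ z ∈ L, Gd.bracket v z ∈ L := by
    intro v hv z hz
    rw [← hXb_span] at hv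
    induction hv using Submodule.span_induction with
    | mem v hv => obtain ⟨i, rfl⟩ := hv; exact hb i z hz
    | zero => rw [← fderiv_Adj, map_zero]; exact L.zero_mem
    | add a b _ _ ha hb => rw [← fderiv_Adj, map_add, fderiv_Adj, fderiv_Adj]; exact L.add_mem ha hb
    | smul r a _ ha => rw [← fderiv_Adj, map_smul, fderiv_Adj]; exact L.smul_mem _ ha
  have hV : ∀ m (hm : m < n), strat.V ⟨m, hm⟩ ≤ L := by
    intro m
    induction m with
    | zero =>
      intro hm
      rw [← hXb_span, Submodule.span_le]
      rintro _ ⟨j, rfl⟩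
      exact Submodule.subset_span ⟨Gd.one, j, by rw [hg.N_one]; exact hε, (Adj_one _ _).symm⟩
    | succ m ih =>
      intro hm
      rw [← strat.bracket_succ ⟨m, by omega⟩ hm, LieGroupData.bracketSpan, Submodule.span_le]
      rintro _ ⟨a, ha, b, hb, rfl⟩
      exact hb' a ha b (ih (by omega) hb)
  rw [eq_top_iff, ← strat.isInternal.submodule_iSup_eq_top]
  exact iSup_le fun i => hV i.1 i.2

theorem prod_list {d s : ℕ} {Gd : LieGroupData d} {Xb : Fin s → Euc d} (hg : IsGeo Gd Xb)
    {ι W : Type*} [NormedAddCommGroup W] [NormedSpace ℝ W] (g : ι → W → Euc d)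
    (A : ι → W →L[ℝ] Euc d) (hg0 : ∀ i, g i 0 = Gd.one)
    (hgd : ∀ i, HasStrictFDerivAt (g i) (A i) 0) (l : List ι) :
    ∃ Ψ : W → Euc d, Ψ 0 = Gd.one ∧ HasStrictFDerivAt Ψ (l.map A).sum 0 ∧
      ∀ w, ccN Gd Xb (Ψ w) ≤ (l.map fun i => ccN Gd Xb (g i w)).sum := by
  induction l with
  | nil => exact ⟨fun _ => Gd.one, rfl, by simpa using hasStrictFDerivAt_const _ _,
      fun w => by simp [hg.N_one]⟩
  | cons i l ih =>
    obtain ⟨Ψ, h0, hd, hN⟩ := ih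
    refine ⟨fun w => Gd.mul (g i w) (Ψ w), by
      show Gd.mul (g i 0) (Ψ 0) = _
      rw [hg0, h0, Gd.mul_one], ?_, fun w => ?_⟩
    · have h1 : HasStrictFDerivAt (mulP Gd) (fderiv ℝ (mulP Gd) (g i 0, Ψ 0)) (g i 0, Ψ 0) :=
        ((mulP_smooth Gd).contDiffAt).hasStrictFDerivAt (by simp)
      have h2 := h1.comp (0 : W) ((hgd i).prodMk hd)
      refine HasStrictFDerivAt.congr_fderiv (f := fun w => Gd.mul (g i w) (Ψ w)) h2 ?_
      ext1 w
      rw [hg0, h0]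
      have h5 : ∀ u : Euc d, fderiv ℝ (mulP Gd) (Gd.one, Gd.one) (u, 0) = u := by
        intro u
        have := mulP_Adj Gd Gd.one u
        rwa [Adj_one, lvf_one] at this
      have h6 : ∀ u : Euc d, fderiv ℝ (mulP Gd) (Gd.one, Gd.one) (0, u) = u := by
        intro u
        rw [← lvf_eq, lvf_one]
      have h7 : ∀ u v : Euc d, fderiv ℝ (mulP Gd) (Gd.one, Gd.one) (u, v) = u + v := by
        intro u v
        have : (u, v) = (u, 0) + ((0 : Euc d), v) := by simp
        rw [this, map_add, h5, h6]
      simp [h7]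
    · simp only [List.map_cons, List.sum_cons]
      exact (hg.N_mul _ _).trans (by gcongr; exact hN w)

theorem N_small {d s n : ℕ} {Gd : LieGroupData d} (strat : Gd.Stratification n)
    {Xb : Fin s → Euc d} (hg : IsGeo Gd Xb)
    (hXb_span : Submodule.span ℝ (Set.range Xb) = strat.V ⟨0, strat.npos⟩) {ε : ℝ} (hε : 0 < ε) :
    ∀ᶠ y in 𝓝 Gd.one, ccN Gd Xb y ≤ d * (3 * ε) := by
  have hsp := gens_span strat hg hXb_span hε
  obtain ⟨ι, b, hbs⟩ : ∃ (ι : Type) (b : Module.Basis ι ℝ (Euc d)),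
      Set.range b ⊆ gens Gd Xb ε := ⟨_, _, Module.Basis.ofSpan_subset hsp.ge⟩
  have : Fintype ι := FiniteDimensional.fintypeBasisIndex b
  have hcard : Fintype.card ι = d := by
    rw [← Module.finrank_eq_card_basis b]; simp
  have hmem : ∀ i, ∃ x j, ccN Gd Xb x < ε ∧ b i = Adj Gd x (Xb j) := fun i => hbs (mem_range_self i)
  choose x j hx hbx using hmem
  have hfl := fun i : ι => exists_flow Gd Xb (single_sq (j i))
  choose k τ hτ hk0 hkd hkN using hfl
  simp only [single_sum] at hkd
  obtain ⟨Ψ, h0, hd, hN⟩ := prod_list hg (W := ι → ℝ)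
    (fun i w => cjP Gd (x i, k i (w i)))
    (fun i => (ContinuousLinearMap.proj (R := ℝ) (φ := fun _ : ι => ℝ) i).smulRight (b i))
    (fun i => by simp only [Pi.zero_apply, hk0, cj_one]) (fun i => by
      have h1 : HasStrictFDerivAt (fun y => cjP Gd (x i, y)) (Adj Gd (x i)) (k i 0) := by
        rw [hk0]
        have h2 : ContDiff ℝ (⊤ : ℕ∞) (fun y => cjP Gd (x i, y)) :=
          (cjP_smooth Gd).comp (contDiff_const.prodMk contDiff_id)
        have h3 := (h2.contDiffAt (x := Gd.one)).hasStrictFDerivAt (by simp)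
        rwa [(Adj_hasFDerivAt Gd (x i)).fderiv] at h3
      have h2 := h1.comp_hasStrictDerivAt 0 (hkd i)
      have h3 : HasStrictFDerivAt (fun w : ι → ℝ => w i)
        (ContinuousLinearMap.proj (R := ℝ) (φ := fun _ : ι => ℝ) i) 0 :=
        (ContinuousLinearMap.proj (R := ℝ) (φ := fun _ : ι => ℝ) i).hasStrictFDerivAt
      have h4 := HasStrictDerivAt.hasStrictFDerivAt h2
      have h5 := HasStrictFDerivAt.comp (f := fun w : ι → ℝ => w i) (0 : ι → ℝ) h4 h3
      refine HasStrictFDerivAt.congr_fderiv h5 ?_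
      ext1 w
      simp [hbx])
    Finset.univ.toList
  rw [Finset.sum_map_toList] at hd
  simp only [Finset.sum_map_toList] at hN
  have hsurj : (∑ i, (ContinuousLinearMap.proj (R := ℝ) (φ := fun _ : ι => ℝ) i).smulRight (b i)).range = ⊤ := by
    rw [eq_top_iff]
    intro v _
    refine ⟨b.equivFun v, ?_⟩
    have := b.sum_equivFun v
    simpa using this
  have hmap := hd.map_nhds_eq_of_surj hsurj
  rw [h0] at hmap
  rw [← hmap, eventually_map]
  have hev : ∀ i, ∀ᶠ w : ι → ℝ in 𝓝 0, |w i| < min (τ i) ε := by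
    intro i
    have hc : Continuous fun w : ι → ℝ => |w i| := (continuous_apply i).abs
    have := hc.tendsto 0
    simp only [Pi.zero_apply, abs_zero] at this
    exact this.eventually_lt_const (lt_min (hτ i) hε)
  filter_upwards [eventually_all.2 hev] with w hw
  refine (hN w).trans ?_
  calc _ ≤ ∑ i : ι, 3 * ε := by
        refine Finset.sum_le_sum fun i _ => ?_
        have h1 := hg.N_mul (Gd.mul (x i) (k i (w i))) (Gd.inv (x i))
        have h2 := hg.N_mul (x i) (k i (w i))
        rw [hg.N_inv] at h1
        have h3 := hkN i (w i) ((hw i).trans_le (min_le_left _ _))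
        have h4 := (hw i).trans_le (min_le_right _ _)
        simp only [cjP]
        linarith [hx i]
    _ = _ := by simp [hcard]

theorem N_tendsto {d s n : ℕ} {Gd : LieGroupData d} (strat : Gd.Stratification n)
    {Xb : Fin s → Euc d} (hg : IsGeo Gd Xb)
    (hXb_span : Submodule.span ℝ (Set.range Xb) = strat.V ⟨0, strat.npos⟩) :
    ∀ ε > 0, ∀ᶠ y in 𝓝 Gd.one, ccN Gd Xb y < ε := by
  intro ε hε
  filter_upwards [N_small strat hg hXb_span (ε := ε / (3 * (d + 1))) (by positivity)] with y hy
  refine hy.trans_lt ?_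
  have : (d : ℝ) * (3 * (ε / (3 * (d + 1)))) = ε * (d / (d + 1)) := by field_simp
  rw [this]
  refine mul_lt_of_lt_one_right hε ?_
  rw [div_lt_one (by positivity)]
  linarith

/-- The distance is finite, a metric, and continuous. -/
structure IsGeoC {d s : ℕ} (Gd : LieGroupData d) (Xb : Fin s → Euc d) : Prop extends
    IsGeo Gd Xb where
  small : ∀ ε > 0, ∀ᶠ y in 𝓝 Gd.one, ccN Gd Xb y < ε

theorem mul_cont {d : ℕ} (Gd : LieGroupData d) : Continuous fun p : Euc d × Euc d => Gd.mul p.1 p.2 :=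
  Gd.smooth_mul.continuous

theorem IsGeoC.tendsto {d s : ℕ} {Gd : LieGroupData d} {Xb : Fin s → Euc d} (hg : IsGeoC Gd Xb)
    (x : Euc d) : ∀ ε > 0, ∀ᶠ y in 𝓝 x, ccd Gd Xb x y < ε := by
  intro ε hε
  have h1 : Continuous fun y => Gd.mul (Gd.inv x) y := (mul_smooth_right Gd _).continuous
  have h2 := h1.tendsto x
  rw [Gd.inv_mul] at h2
  filter_upwards [h2.eventually (hg.small ε hε)] with y hy
  rwa [hg.eq_N]

theorem IsGeoC.continuous_of_lip {d s : ℕ} {Gd : LieGroupData d} {Xb : Fin s → Euc d}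
    (hg : IsGeoC Gd Xb) {f : Euc d → ℝ} {C : ℝ}
    (hC : ∀ x y, |f x - f y| ≤ C * ccd Gd Xb x y) : Continuous f := by
  rw [continuous_iff_continuousAt]
  intro x
  rw [ContinuousAt, Metric.tendsto_nhds]
  intro ε hε
  filter_upwards [hg.tendsto x (ε / (|C| + 1)) (by positivity)] with y hy
  rw [dist_comm, Real.dist_eq]
  refine (hC x y).trans_lt ?_
  have h0 := ccd_nonneg Gd Xb x y
  rw [lt_div_iff₀ (by positivity)] at hy
  nlinarith [le_abs_self C]

theorem IsGeo.ccd_lip {d s : ℕ} {Gd : LieGroupData d} {Xb : Fin s → Euc d}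
    (hg : IsGeo Gd Xb) (o x y : Euc d) : |ccd Gd Xb o x - ccd Gd Xb o y| ≤ ccd Gd Xb x y := by
  rw [abs_le]
  constructor
  · linarith [hg.tri o x y]
  · linarith [hg.tri o y x, hg.symm x y]

theorem IsGeoC.ccd_cont {d s : ℕ} {Gd : LieGroupData d} {Xb : Fin s → Euc d}
    (hg : IsGeoC Gd Xb) (o : Euc d) : Continuous (ccd Gd Xb o) :=
  hg.continuous_of_lip (C := 1) fun x y => by rw [one_mul]; exact hg.ccd_lip o x y

theorem hgrad_cont {d s : ℕ} (Gd : LieGroupData d) (Xb : Fin s → Euc d) {f : Euc d → ℝ}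
    (hf : ContDiff ℝ 1 f) : Continuous (hgrad Gd Xb f) := by
  have : Continuous fun x => fun j => fderiv ℝ f x (Gd.lvf (Xb j) x) :=
    continuous_pi fun j => (hf.continuous_fderiv one_ne_zero).clm_apply (lvf_smooth Gd _).continuous
  exact (PiLp.continuous_toLp 2 _).comp this

theorem hgrad_supp {d s : ℕ} (Gd : LieGroupData d) (Xb : Fin s → Euc d) {f : Euc d → ℝ}
    (hf : HasCompactSupport (fderiv ℝ f)) : HasCompactSupport (hgrad Gd Xb f) := by
  refine hf.mono' fun x hx => subset_closure ?_
  contrapose! hx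
  have h0 : fderiv ℝ f x = 0 := by simpa using hx
  have : hgrad Gd Xb f x = 0 := by
    ext j; simp [hgrad, h0]
  simpa using this

theorem hgrad_bdd {d s : ℕ} (Gd : LieGroupData d) (Xb : Fin s → Euc d) {f : Euc d → ℝ}
    (hf : ContDiff ℝ 1 f) (hs : HasCompactSupport (fderiv ℝ f)) :
    ∃ C, ∀ x, ‖hgrad Gd Xb f x‖ ≤ C :=
  (hgrad_supp Gd Xb hs).exists_bound_of_continuous (hgrad_cont Gd Xb hf)

theorem IsGeo.ball_one {d s : ℕ} {Gd : LieGroupData d} {Xb : Fin s → Euc d}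
    (hg : IsGeo Gd Xb) : ∃ r > 0, ∀ x, ccN Gd Xb x < r → x ∈ Metric.closedBall Gd.one 1 := by
  let f : ContDiffBump Gd.one := ⟨1/2, 1, by norm_num, by norm_num⟩
  have hf : ContDiff ℝ 1 f := f.contDiff
  have hs : HasCompactSupport (f : Euc d → ℝ) := f.hasCompactSupport
  obtain ⟨C, hC⟩ := hgrad_bdd Gd Xb hf (hs.fderiv ℝ)
  refine ⟨1 / (|C| + 1), by positivity, fun x hx => ?_⟩
  by_contra hcon
  have h0 : f x = 0 := f.zero_of_le_dist (by
    simp only [Metric.mem_closedBall, not_le] at hcon; exact hcon.le)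
  have h1 : f Gd.one = 1 := f.one_of_mem_closedBall (by simp; norm_num)
  have := hg.lipschitz hf (C := |C|) (abs_nonneg _) (fun y => (hC y).trans (le_abs_self C)) Gd.one x
  rw [h0, h1] at this
  rw [lt_div_iff₀ (by positivity)] at hx
  have h3 : 0 ≤ ccN Gd Xb x := ccd_nonneg _ _ _ _
  change _ ≤ |C| * ccN Gd Xb x at this
  norm_num at this
  nlinarith

theorem IsGeo.ball_compact {d s : ℕ} {Gd : LieGroupData d} {Xb : Fin s → Euc d}
    (hg : IsGeo Gd Xb) (R : ℝ) : ∃ K : Set (Euc d), IsCompact K ∧ ∀ x, ccN Gd Xb x ≤ R → x ∈ K := by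
  obtain ⟨r, hr, hball⟩ := hg.ball_one
  have key : ∀ n : ℕ, ∃ K : Set (Euc d), IsCompact K ∧ ∀ x, ccN Gd Xb x < (n + 1) * r → x ∈ K := by
    intro n
    induction n with
    | zero => exact ⟨_, isCompact_closedBall Gd.one 1, fun x hx => hball x (by simpa using hx)⟩
    | succ n ih =>
      obtain ⟨K, hK, hKx⟩ := ih
      refine ⟨(fun p : Euc d × Euc d => Gd.mul p.1 p.2) '' (K ×ˢ Metric.closedBall Gd.one 1),
        (hK.prod (isCompact_closedBall _ _)).image (mul_cont Gd), fun x hx => ?_⟩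
      obtain ⟨b, γ, hb, hγ, h0, h1⟩ := hg.exists_lt hx
      have hb0 : 0 ≤ b := by obtain ⟨c, _, _, hp⟩ := hγ; exact hp.nonneg
      push_cast at hb
      have hn : (0:ℝ) ≤ n := n.cast_nonneg
      set p := b * ((n + 1) / (n + 2)) with hp
      have hp0 : 0 ≤ p := by positivity
      have hbp : b - p = b / (n + 2) := by rw [hp]; field_simp; ring
      have hpb : p ≤ b := by
        have : 0 ≤ b / (n + 2) := by positivity
        linarith
      have hb' : b / (n + 2) < r := by
        rw [div_lt_iff₀ (by positivity)]; linarith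
      have hpr : p = (n + 1) * (b / (n + 2)) := by rw [hp]; ring
      have e1 : ccN Gd Xb (γ p) ≤ p := by
        have := hγ.restrict le_rfl hp0 hpb
        refine ccd_le (b := p) (by simpa using this) (by simpa using h0) rfl
      have e2 : ccd Gd Xb (γ p) x ≤ b - p :=
        ccd_le (hγ.restrict hp0 hpb le_rfl) (by simp) (by simpa using h1)
      rw [hg.eq_N] at e2
      refine ⟨(γ p, Gd.mul (Gd.inv (γ p)) x), ⟨hKx _ ?_, hball _ ?_⟩, ?_⟩
      · refine e1.trans_lt ?_
        rw [hpr]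
        gcongr
      · exact e2.trans_lt (by rw [hbp]; exact hb')
      · exact lg_mul_inv_cancel_left Gd _ _
  obtain ⟨n, hn⟩ := exists_nat_gt (R / r)
  obtain ⟨K, hK, hKx⟩ := key n
  refine ⟨K, hK, fun x hx => hKx x (hx.trans_lt ?_)⟩
  rw [div_lt_iff₀ hr] at hn
  nlinarith

theorem hgrad_add {d s : ℕ} (Gd : LieGroupData d) (Xb : Fin s → Euc d) {f g : Euc d → ℝ}
    (hf : Differentiable ℝ f) (hg : Differentiable ℝ g) (x : Euc d) :
    hgrad Gd Xb (fun y => f y + g y) x = hgrad Gd Xb f x + hgrad Gd Xb g x := by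
  ext j
  simp [hgrad, fderiv_fun_add (hf x) (hg x)]

theorem hgrad_smul {d s : ℕ} (Gd : LieGroupData d) (Xb : Fin s → Euc d) {f : Euc d → ℝ}
    (hf : Differentiable ℝ f) (c : ℝ) (x : Euc d) :
    hgrad Gd Xb (fun y => c * f y) x = c • hgrad Gd Xb f x := by
  ext j
  simp [hgrad, fderiv_const_mul (hf x)]

theorem hgrad_mul {d s : ℕ} (Gd : LieGroupData d) (Xb : Fin s → Euc d) {f g : Euc d → ℝ}
    (hf : Differentiable ℝ f) (hg : Differentiable ℝ g) (x : Euc d) :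
    hgrad Gd Xb (fun y => f y * g y) x = f x • hgrad Gd Xb g x + g x • hgrad Gd Xb f x := by
  ext j
  simp [hgrad, fderiv_fun_mul (hf x) (hg x)]

theorem hgrad_normsq {d s : ℕ} (Gd : LieGroupData d) (Xb : Fin s → Euc d) {f : Euc d → ℝ}
    (hf : ContDiff ℝ (⊤ : ℕ∞) f) : ContDiff ℝ (⊤ : ℕ∞) fun x => ‖hgrad Gd Xb f x‖ ^ 2 := by
  simp only [EuclideanSpace.norm_sq_eq, hgrad, Real.norm_eq_abs, sq_abs]
  refine ContDiff.sum fun j _ => ContDiff.pow ?_ 2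
  have h1 : ContDiff ℝ (⊤ : ℕ∞) (fderiv ℝ f) := hf.fderiv_right (by simp)
  exact h1.clm_apply (lvf_smooth Gd _)

theorem exists_haar {d : ℕ} (Gd : LieGroupData d) :
    ∃ μ : MeasureTheory.Measure (Euc d), MeasureTheory.IsFiniteMeasureOnCompacts μ ∧
      MeasureTheory.Measure.IsOpenPosMeasure μ ∧
      ∀ (a : Euc d) (f : Euc d → ℝ), ∫ x, f (Gd.mul a x) ∂μ = ∫ x, f x ∂μ := by
  let _ : TopologicalSpace (LG Gd) := inferInstanceAs (TopologicalSpace (Euc d))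
  let _ : MeasurableSpace (LG Gd) := inferInstanceAs (MeasurableSpace (Euc d))
  have : BorelSpace (LG Gd) := inferInstanceAs (BorelSpace (Euc d))
  have : LocallyCompactSpace (LG Gd) := inferInstanceAs (LocallyCompactSpace (Euc d))
  have : IsTopologicalGroup (LG Gd) :=
    { continuous_mul := mul_cont Gd
      continuous_inv := Gd.smooth_inv.continuous }
  let μ : MeasureTheory.Measure (LG Gd) := MeasureTheory.Measure.haar
  have h1 : MeasureTheory.IsFiniteMeasureOnCompacts μ := inferInstance
  have h2 : MeasureTheory.Measure.IsOpenPosMeasure μ := inferInstance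
  exact ⟨μ, h1, h2, fun a f => MeasureTheory.integral_mul_left_eq_self (μ := μ) f a⟩

theorem smooth_param {d : ℕ} (Gd : LieGroupData d) (μ : MeasureTheory.Measure (Euc d))
    [MeasureTheory.IsFiniteMeasureOnCompacts μ] {g χ : Euc d → ℝ} (hg : Continuous g)
    (hχ : ContDiff ℝ (⊤ : ℕ∞) χ) (hs : HasCompactSupport χ) :
    ContDiff ℝ (⊤ : ℕ∞) fun x => ∫ z, g z * χ (Gd.mul x z) ∂μ := by
  rw [contDiff_iff_contDiffAt]
  intro x0
  set k : Set (Euc d) := (fun p : Euc d × Euc d => - Gd.mul (Gd.inv p.1) p.2) ''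
    (Metric.closedBall x0 1 ×ˢ tsupport χ) with hk
  have hkc : IsCompact k := by
    refine ((isCompact_closedBall x0 1).prod hs).image ?_
    exact ((mul_cont Gd).comp ((Gd.smooth_inv.continuous.comp continuous_fst).prodMk
      continuous_snd)).neg
  have h := MeasureTheory.contDiffOn_convolution_right_with_param (μ := μ) (f := g) (n := ⊤)
    (ContinuousLinearMap.mul ℝ ℝ) (g := fun p t => χ (Gd.mul p (-t)))
    (s := Metric.ball x0 1) (k := k) Metric.isOpen_ball hkc ?_ (hg.locallyIntegrable) ?_
  · have h1 : ContDiffAt ℝ (⊤ : ℕ∞) (fun q : Euc d × Euc d => MeasureTheory.convolution g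
        (fun t => χ (Gd.mul q.1 (-t))) (ContinuousLinearMap.mul ℝ ℝ) μ q.2) (x0, 0) :=
      h.contDiffAt ((Metric.isOpen_ball.prod isOpen_univ).mem_nhds
        ⟨Metric.mem_ball_self one_pos, trivial⟩)
    have h2 : ContDiffAt ℝ (⊤ : ℕ∞) (fun x : Euc d => (x, (0 : Euc d))) x0 :=
      (contDiff_id.prodMk contDiff_const).contDiffAt
    have h3 := ContDiffAt.comp (f := fun x : Euc d => (x, (0 : Euc d))) x0 h1 h2
    simp only [MeasureTheory.convolution_def, Function.comp_def, ContinuousLinearMap.mul_apply',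
      zero_sub, neg_neg] at h3
    exact h3
  · intro p t hp ht
    by_contra hne
    refine ht ⟨(p, Gd.mul p (-t)), ⟨Metric.ball_subset_closedBall hp, subset_closure hne⟩, ?_⟩
    simp [lg_inv_mul_cancel_left]
  · have : ContDiff ℝ (⊤ : ℕ∞) fun q : Euc d × Euc d => χ (Gd.mul q.1 (-q.2)) :=
      hχ.comp (Gd.smooth_mul.comp (contDiff_fst.prodMk contDiff_snd.neg))
    exact this.contDiffOn

theorem IsGeoC.mollify {d s : ℕ} {Gd : LieGroupData d} {Xb : Fin s → Euc d} (hg : IsGeoC Gd Xb)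
    {f : Euc d → ℝ} (hf : ∀ x y, |f x - f y| ≤ ccd Gd Xb x y) (hs : HasCompactSupport f)
    (A : Finset (Euc d)) {η : ℝ} (hη : 0 < η) :
    ∃ ψ : Euc d → ℝ, ContDiff ℝ (⊤ : ℕ∞) ψ ∧ HasCompactSupport ψ ∧
      (∀ x y, |ψ x - ψ y| ≤ ccd Gd Xb x y) ∧ ∀ x ∈ A, |ψ x - f x| ≤ η := by
  have hfc : Continuous f := hg.continuous_of_lip (C := 1) (by simpa using hf)
  obtain ⟨μ, hμ1, hμ2, hμ⟩ := exists_haar Gd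
  have hev : ∀ᶠ y in 𝓝 Gd.one, ∀ x ∈ A, ccd Gd Xb x (Gd.mul (Gd.inv y) x) < η := by
    rw [Filter.eventually_all_finset]
    intro x hx
    have h1 : Continuous fun y => ccd Gd Xb x (Gd.mul (Gd.inv y) x) :=
      (hg.ccd_cont x).comp ((mul_smooth_left Gd x).continuous.comp Gd.smooth_inv.continuous)
    have h2 := h1.tendsto Gd.one
    rw [lg_inv_one, Gd.one_mul, hg.self] at h2
    exact h2.eventually_lt_const hη
  obtain ⟨ρ, hρ, hball⟩ := Metric.eventually_nhds_iff_ball.1 hev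
  let χ : ContDiffBump Gd.one := ⟨ρ / 2, ρ, by positivity, by linarith⟩
  have hχ : ContDiff ℝ (⊤ : ℕ∞) χ := χ.contDiff
  have hχs : HasCompactSupport (χ : Euc d → ℝ) := χ.hasCompactSupport
  set c := ∫ y, χ y ∂μ with hc
  have hcpos : 0 < c := χ.integral_pos
  have hχi : MeasureTheory.Integrable (χ : Euc d → ℝ) μ :=
    hχ.continuous.integrable_of_hasCompactSupport hχs
  have hintg : ∀ x, MeasureTheory.Integrable (fun y => f (Gd.mul (Gd.inv y) x) * χ y) μ := by
    intro x
    refine Continuous.integrable_of_hasCompactSupport ?_ hχs.mul_left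
    exact (hfc.comp ((mul_smooth_left Gd x).continuous.comp Gd.smooth_inv.continuous)).mul
      hχ.continuous
  set Ψ : Euc d → ℝ := fun x => ∫ y, f (Gd.mul (Gd.inv y) x) * χ y ∂μ with hΨ
  have hΨ' : Ψ = fun x => ∫ z, f (Gd.inv z) * χ (Gd.mul x z) ∂μ := by
    funext x
    rw [hΨ]
    simp only
    rw [← hμ x]
    congr 1
    funext z
    rw [lg_mul_inv_rev, Gd.mul_assoc, Gd.inv_mul, Gd.mul_one]
  refine ⟨fun x => c⁻¹ * Ψ x, ?_, ?_, ?_, ?_⟩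
  · refine contDiff_const.mul ?_
    rw [hΨ']
    exact smooth_param Gd μ (hfc.comp Gd.smooth_inv.continuous) hχ hχs
  · refine HasCompactSupport.intro (K := (fun p : Euc d × Euc d => Gd.mul p.1 p.2) ''
      (tsupport χ ×ˢ tsupport f)) ((hχs.prod hs).image (mul_cont Gd)) fun x hx => ?_
    have : Ψ x = 0 := by
      rw [hΨ]
      refine (MeasureTheory.integral_congr_ae (g := fun _ => 0) (Eventually.of_forall fun y => ?_)).trans
        (by simp)
      by_contra hne
      have hne' : f (Gd.mul (Gd.inv y) x) * χ y ≠ 0 := hne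
      refine hx ⟨(y, Gd.mul (Gd.inv y) x), ⟨subset_closure (right_ne_zero_of_mul hne'),
        subset_closure (left_ne_zero_of_mul hne')⟩, ?_⟩
      exact lg_mul_inv_cancel_left Gd _ _
    simp [this]
  · intro x y
    have h1 : |Ψ x - Ψ y| ≤ ccd Gd Xb x y * c := by
      rw [hΨ]
      simp only
      rw [← MeasureTheory.integral_sub (hintg x) (hintg y), hc, ← MeasureTheory.integral_const_mul]
      rw [← Real.norm_eq_abs]
      refine MeasureTheory.norm_integral_le_of_norm_le (hχi.const_mul _)
        (Eventually.of_forall fun z => ?_)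
      rw [← sub_mul, norm_mul, Real.norm_eq_abs, Real.norm_eq_abs, abs_of_nonneg χ.nonneg]
      gcongr
      · exact χ.nonneg
      · refine (hf _ _).trans ?_
        rw [hg.left]
    rw [← mul_sub, abs_mul, abs_of_pos (inv_pos.2 hcpos), inv_mul_le_iff₀ hcpos]
    linarith
  · intro x hx
    have h1 : |Ψ x - f x * c| ≤ η * c := by
      rw [hΨ]
      simp only
      rw [hc, ← MeasureTheory.integral_const_mul, ← MeasureTheory.integral_const_mul,
        ← MeasureTheory.integral_sub (hintg x) (hχi.const_mul _)]
      rw [← Real.norm_eq_abs]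
      refine MeasureTheory.norm_integral_le_of_norm_le (hχi.const_mul _)
        (Eventually.of_forall fun z => ?_)
      rw [← sub_mul, norm_mul, Real.norm_eq_abs, Real.norm_eq_abs, abs_of_nonneg χ.nonneg]
      by_cases hz : z ∈ Metric.ball Gd.one ρ
      · gcongr
        · exact χ.nonneg
        · refine (hf _ _).trans ?_
          rw [hg.symm]
          exact (hball z hz x hx).le
      · have : χ z = 0 := χ.zero_of_le_dist (by simpa using hz)
        simp [this]
    have h2 : c⁻¹ * Ψ x - f x = c⁻¹ * (Ψ x - f x * c) := by field_simp
    rw [h2, abs_mul, abs_of_pos (inv_pos.2 hcpos), inv_mul_le_iff₀ hcpos]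
    linarith

/-- Lipschitz functions vanishing at `o` are approximated on finite sets by smooth ones. -/
theorem IsGeoC.smooth_approx {d s : ℕ} {Gd : LieGroupData d} {Xb : Fin s → Euc d}
    (hg : IsGeoC Gd Xb) (o : Euc d)
    {f : Euc d → ℝ} (hf : ∀ x y, |f x - f y| ≤ ccd Gd Xb x y) (hfo : f o = 0)
    (A : Finset (Euc d)) {η : ℝ} (hη : 0 < η) :
    ∃ ψ : Euc d → ℝ, ContDiff ℝ (⊤ : ℕ∞) ψ ∧ HasCompactSupport (fderiv ℝ ψ) ∧ ψ o = 0 ∧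
      (∀ x y, |ψ x - ψ y| ≤ ccd Gd Xb x y) ∧ ∀ x ∈ A, |ψ x - f x| ≤ η := by
  obtain ⟨R, hR⟩ : ∃ R : ℝ, ∀ x ∈ A, ccd Gd Xb o x ≤ R := by
    refine ⟨∑ x ∈ A, ccd Gd Xb o x, fun x hx => ?_⟩
    exact Finset.single_le_sum (f := fun x => ccd Gd Xb o x) (fun i _ => ccd_nonneg Gd Xb o i) hx
  set u : Euc d → ℝ := fun x => max 0 (2 * R - ccd Gd Xb o x) with hu
  set g : Euc d → ℝ := fun x => max (min (f x) (u x)) (-(u x)) with hgd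
  have hul : ∀ x y, |u x - u y| ≤ ccd Gd Xb x y := by
    intro x y
    have h1 := hg.ccd_lip o x y
    have h2 := abs_max_sub_max_le_max 0 (2 * R - ccd Gd Xb o x) 0 (2 * R - ccd Gd Xb o y)
    refine h2.trans (max_le (by simpa using ccd_nonneg Gd Xb x y) ?_)
    rw [abs_sub_comm] at h1
    rw [show (2 * R - ccd Gd Xb o x) - (2 * R - ccd Gd Xb o y) = ccd Gd Xb o y - ccd Gd Xb o x by ring]
    exact h1
  have hgl : ∀ x y, |g x - g y| ≤ ccd Gd Xb x y := by
    intro x y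
    refine (abs_max_sub_max_le_max _ _ _ _).trans (max_le ?_ ?_)
    · exact (abs_min_sub_min_le_max _ _ _ _).trans (max_le (hf x y) (hul x y))
    · have := hul x y
      rw [abs_sub_comm] at this
      rw [show - u x - - u y = u y - u x by ring]
      exact this
  have hgs : HasCompactSupport g := by
    obtain ⟨K, hK, hKx⟩ := hg.ball_compact (2 * R + ccN Gd Xb o)
    refine HasCompactSupport.intro hK fun x hx => ?_
    have h1 : 2 * R ≤ ccd Gd Xb o x := by
      by_contra hcon
      push Not at hcon
      refine hx (hKx x ?_)
      have := hg.tri Gd.one o x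
      change ccd Gd Xb Gd.one x ≤ 2 * R + ccd Gd Xb Gd.one o
      linarith
    have h2 : u x = 0 := max_eq_left (by linarith)
    simp only [hgd, h2, neg_zero]
    exact max_eq_right (min_le_right _ _)
  have hga : ∀ x, ccd Gd Xb o x ≤ R → g x = f x := by
    intro x hx
    have h1 := hf x o
    rw [hfo, sub_zero, hg.symm, abs_le] at h1
    have h2 : R ≤ u x := le_max_of_le_right (by linarith)
    simp only [hgd]
    rw [min_eq_left (by linarith), max_eq_left (by linarith)]
  obtain ⟨ψ, h1, h2, h3, h4⟩ := hg.mollify hgl hgs (insert o A) (half_pos hη)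
  by_cases hA : A.Nonempty
  · have hR0 : 0 ≤ R := by
      obtain ⟨x, hx⟩ := hA
      exact (ccd_nonneg Gd Xb o x).trans (hR x hx)
    have ho := h4 o (Finset.mem_insert_self _ _)
    rw [hga o (by rw [hg.self]; exact hR0), hfo, sub_zero] at ho
    refine ⟨fun x => ψ x - ψ o, h1.sub contDiff_const, ?_, by simp, fun x y => by simpa using h3 x y, ?_⟩
    · have : fderiv ℝ (fun x => ψ x - ψ o) = fderiv ℝ ψ := by
        funext x; rw [fderiv_sub_const]
      rw [this]
      exact h2.fderiv ℝ
    · intro x hx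
      have h5 := h4 x (Finset.mem_insert_of_mem hx)
      rw [hga x (hR x hx)] at h5
      rw [abs_le] at h5 ho ⊢
      constructor <;> linarith [h5.1, h5.2, ho.1, ho.2]
  · rw [Finset.not_nonempty_iff_eq_empty] at hA
    subst hA
    refine ⟨fun _ => 0, contDiff_const, ?_, rfl, fun x y => by simpa using ccd_nonneg Gd Xb x y, by simp⟩
    have : fderiv ℝ (fun _ : Euc d => (0:ℝ)) = 0 := by funext x; simp
    rw [this]
    exact HasCompactSupport.zero

/-- The free space, seen through coordinates. -/
structure FreeOn {d s : ℕ} (Gd : LieGroupData d) (Xb : Fin s → Euc d) (o : Euc d)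
    {F : Type*} [NormedAddCommGroup F] [NormedSpace ℝ F] (D : Euc d → F) : Prop where
  iso : ∀ x y, ‖D x - D y‖ = ccd Gd Xb x y
  base : D o = 0
  dense : Dense (Submodule.span ℝ (Set.range D) : Set F)
  lift : ∀ (C : ℝ) (f : Euc d → ℝ), 0 ≤ C → (∀ x y, |f x - f y| ≤ C * ccd Gd Xb x y) → f o = 0 →
    ∃ φ : StrongDual ℝ F, ‖φ‖ ≤ C ∧ ∀ x, φ (D x) = f x

section free
variable {d s : ℕ} {Gd : LieGroupData d} {Xb : Fin s → Euc d} {o : Euc d}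
  {F : Type*} [NormedAddCommGroup F] [NormedSpace ℝ F] {D : Euc d → F}

theorem FreeOn.ext (hF : FreeOn Gd Xb o D) {φ ψ : StrongDual ℝ F}
    (h : ∀ x, φ (D x) = ψ (D x)) : φ = ψ := by
  refine ContinuousLinearMap.ext_on hF.dense ?_
  rintro _ ⟨x, rfl⟩
  exact h x

theorem FreeOn.norm_le (hF : FreeOn Gd Xb o D) {φ : StrongDual ℝ F} {C : ℝ} (hC : 0 ≤ C)
    (h : ∀ x y, |φ (D x) - φ (D y)| ≤ C * ccd Gd Xb x y) : ‖φ‖ ≤ C := by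
  obtain ⟨ψ, hψ, he⟩ := hF.lift C (fun x => φ (D x)) hC h (by simp [hF.base])
  rwa [← hF.ext (φ := ψ) (ψ := φ) he]

theorem FreeOn.lip (hF : FreeOn Gd Xb o D) (φ : StrongDual ℝ F) (x y : Euc d) :
    |φ (D x) - φ (D y)| ≤ ‖φ‖ * ccd Gd Xb x y := by
  rw [← map_sub, ← hF.iso]
  exact φ.le_opNorm _

/-- smooth functionals -/
def smoothE (D : Euc d → F) : Submodule ℝ (StrongDual ℝ F) where
  carrier := {φ | ContDiff ℝ (⊤ : ℕ∞) (fun x => φ (D x)) ∧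
    HasCompactSupport (fderiv ℝ (fun x => φ (D x)))}
  zero_mem' := by
    refine ⟨by simpa using contDiff_const, ?_⟩
    have : fderiv ℝ (fun x => (0 : StrongDual ℝ F) (D x)) = 0 := by funext x; simp
    rw [this]
    exact HasCompactSupport.zero
  add_mem' := by
    rintro φ ψ ⟨h1, h2⟩ ⟨h3, h4⟩
    refine ⟨h1.add h3, ?_⟩
    have : fderiv ℝ (fun x => (φ + ψ) (D x)) =
        fderiv ℝ (fun x => φ (D x)) + fderiv ℝ (fun x => ψ (D x)) := by
      funext x
      exact fderiv_fun_add (h1.differentiable (by simp) x) (h3.differentiable (by simp) x)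
    rw [this]
    exact h2.add h4
  smul_mem' := by
    rintro c φ ⟨h1, h2⟩
    refine ⟨contDiff_const.mul h1, ?_⟩
    have : fderiv ℝ (fun x => (c • φ) (D x)) =
        fun x => c • fderiv ℝ (fun x => φ (D x)) x := by
      funext x
      exact fderiv_const_mul (h1.differentiable (by simp) x) c
    rw [this]
    exact h2.smul_left (f := fun _ => c)

theorem smoothE_smooth (φ : smoothE D) :
    ContDiff ℝ (⊤ : ℕ∞) (fun x => (φ : StrongDual ℝ F) (D x)) := φ.2.1

theorem smoothE_diff (φ : smoothE D) :
    Differentiable ℝ (fun x => (φ : StrongDual ℝ F) (D x)) := φ.2.1.differentiable (by simp)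

theorem smoothE_C1 (φ : smoothE D) :
    ContDiff ℝ 1 (fun x => (φ : StrongDual ℝ F) (D x)) := φ.2.1.of_le (by exact_mod_cast le_top)

/-- horizontal gradient of smooth functionals -/
def gradE (Gd : LieGroupData d) (Xb : Fin s → Euc d) (D : Euc d → F) :
    smoothE D →ₗ[ℝ] (Euc d → EuclideanSpace ℝ (Fin s)) where
  toFun φ := hgrad Gd Xb (fun x => (φ : StrongDual ℝ F) (D x))
  map_add' φ ψ := by
    funext x
    exact hgrad_add Gd Xb (smoothE_diff φ) (smoothE_diff ψ) x
  map_smul' c φ := by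
    funext x
    exact hgrad_smul Gd Xb (smoothE_diff φ) c x

theorem gradE_bdd (φ : smoothE D) : ∃ C, ∀ x, ‖gradE Gd Xb D φ x‖ ≤ C :=
  hgrad_bdd Gd Xb (smoothE_C1 φ) φ.2.2

theorem gradE_lip (hg : IsGeoC Gd Xb) (φ : smoothE D) {C : ℝ} (hC : 0 ≤ C)
    (h : ∀ x, ‖gradE Gd Xb D φ x‖ ≤ C) (x y : Euc d) :
    |(φ : StrongDual ℝ F) (D x) - (φ : StrongDual ℝ F) (D y)| ≤ C * ccd Gd Xb x y :=
  hg.lipschitz (smoothE_C1 φ) hC h x y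

theorem gradE_norm (hg : IsGeoC Gd Xb) (hF : FreeOn Gd Xb o D) (φ : smoothE D) {C : ℝ}
    (hC : 0 ≤ C) (h : ∀ x, ‖gradE Gd Xb D φ x‖ ≤ C) : ‖(φ : StrongDual ℝ F)‖ ≤ C :=
  hF.norm_le hC (gradE_lip hg φ hC h)

theorem FreeOn.test (hF : FreeOn Gd Xb o D) (γ : F) :
    ∀ η > (0 : ℝ), ∃ (A : Finset (Euc d)) (ε : ℝ), 0 < ε ∧ ∀ θ : StrongDual ℝ F, ‖θ‖ ≤ 2 →
      (∀ x ∈ A, |θ (D x)| ≤ ε) → |θ γ| ≤ η := by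
  classical
  have hspan : ∀ γ ∈ Submodule.span ℝ (Set.range D), ∀ η > (0 : ℝ),
      ∃ (A : Finset (Euc d)) (ε : ℝ), 0 < ε ∧ ∀ θ : StrongDual ℝ F, 
      (∀ x ∈ A, |θ (D x)| ≤ ε) → |θ γ| ≤ η := by
    intro γ hγ
    induction hγ using Submodule.span_induction with
    | mem z hz =>
      obtain ⟨x, rfl⟩ := hz
      intro η hη
      exact ⟨{x}, η, hη, fun θ h => h x (by simp)⟩
    | zero => intro η hη; exact ⟨∅, 1, one_pos, fun θ h => by simpa using hη.le⟩
    | add a b _ _ ha hb =>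
      intro η hη
      obtain ⟨A, ε, hε, h⟩ := ha (η / 2) (by positivity)
      obtain ⟨A', ε', hε', h'⟩ := hb (η / 2) (by positivity)
      refine ⟨A ∪ A', min ε ε', lt_min hε hε', fun θ hθ => ?_⟩
      have h1 := h θ fun x hx => (hθ x (Finset.mem_union_left _ hx)).trans (min_le_left _ _)
      have h2 := h' θ fun x hx => (hθ x (Finset.mem_union_right _ hx)).trans (min_le_right _ _)
      rw [map_add]
      exact (abs_add_le _ _).trans (by linarith)
    | smul r a _ ha =>
      intro η hη
      obtain ⟨A, ε, hε, h⟩ := ha (η / (|r| + 1)) (by positivity)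
      refine ⟨A, ε, hε, fun θ hθ => ?_⟩
      have h1 := h θ hθ
      rw [le_div_iff₀ (by positivity)] at h1
      rw [map_smul, smul_eq_mul, abs_mul]
      nlinarith [abs_nonneg r, abs_nonneg (θ a)]
  intro η hη
  obtain ⟨γ', hγ', hd⟩ := Metric.mem_closure_iff.1 (hF.dense γ) (η / 4) (by positivity)
  obtain ⟨A, ε, hε, h⟩ := hspan γ' hγ' (η / 2) (by positivity)
  refine ⟨A, ε, hε, fun θ hθ2 hθ => ?_⟩
  have h1 := h θ hθ
  have h2 : |θ (γ - γ')| ≤ 2 * (η / 4) := by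
    refine (θ.le_opNorm _).trans ?_
    rw [dist_eq_norm] at hd
    gcongr
  have h3 : θ γ = θ γ' + θ (γ - γ') := by rw [map_sub]; ring
  rw [h3]
  exact (abs_add_le _ _).trans (by linarith)

theorem FreeOn.test_finset (hF : FreeOn Gd Xb o D) (S : Finset F) :
    ∀ η > (0 : ℝ), ∃ (A : Finset (Euc d)) (ε : ℝ), 0 < ε ∧ ∀ θ : StrongDual ℝ F, ‖θ‖ ≤ 2 →
      (∀ x ∈ A, |θ (D x)| ≤ ε) → ∀ γ ∈ S, |θ γ| ≤ η := by
  classical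
  intro η hη
  induction S using Finset.induction_on with
  | empty => exact ⟨∅, 1, one_pos, by simp⟩
  | insert a S _ ih =>
    obtain ⟨A, ε, hε, h⟩ := ih
    obtain ⟨A', ε', hε', h'⟩ := hF.test a η hη
    refine ⟨A ∪ A', min ε ε', lt_min hε hε', fun θ hθ2 hθ γ hγ => ?_⟩
    rcases Finset.mem_insert.1 hγ with rfl | hγ
    · exact h' θ hθ2 fun x hx => (hθ x (Finset.mem_union_right _ hx)).trans (min_le_right _ _)
    · exact h θ hθ2 (fun x hx => (hθ x (Finset.mem_union_left _ hx)).trans (min_le_left _ _)) γ hγ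

theorem gradE_approx (hg : IsGeoC Gd Xb) (hF : FreeOn Gd Xb o D) (φ : StrongDual ℝ F)
    (hφ : ‖φ‖ ≤ 1) (S : Finset F) (η : ℝ) (hη : 0 < η) :
    ∃ ψ : smoothE D, (∀ x, ‖gradE Gd Xb D ψ x‖ ≤ 1) ∧
      ∀ γ ∈ S, |(ψ : StrongDual ℝ F) γ - φ γ| ≤ η := by
  obtain ⟨A, ε, hε, h⟩ := hF.test_finset S η hη
  obtain ⟨f, h1, h2, h3, h4, h5⟩ := hg.smooth_approx o (f := fun x => φ (D x)) (fun x y =>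
    (hF.lip φ x y).trans (mul_le_of_le_one_left (ccd_nonneg _ _ _ _) hφ)) (by simp [hF.base]) A hε
  obtain ⟨ψ, hψ, he⟩ := hF.lift 1 f zero_le_one (by simpa using h4) h3
  have hef : (fun x => ψ (D x)) = f := funext he
  refine ⟨⟨ψ, ?_⟩, ?_, ?_⟩
  · show _ ∧ _
    rw [hef]
    exact ⟨h1, h2⟩
  · intro x
    show ‖hgrad Gd Xb (fun x => ψ (D x)) x‖ ≤ 1
    rw [hef]
    exact hg.hgrad_le_of_lip (h1.differentiable (by simp)) zero_le_one (by simpa using h4) x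
  · intro γ hγ
    refine h (ψ - φ) ?_ ?_ γ hγ
    · exact (norm_sub_le _ _).trans (by linarith)
    · intro x hx
      rw [sub_apply, he]
      exact h5 x hx

/-- combination of elementary molecules -/
def rsum (D : Euc d → F) (l : List (ℝ × Euc d × Euc d)) : F :=
  (l.map fun q => q.1 • (D q.2.1 - D q.2.2)).sum

/-- total weight -/
def rwt (Gd : LieGroupData d) (Xb : Fin s → Euc d) (l : List (ℝ × Euc d × Euc d)) : ℝ :=
  (l.map fun q => |q.1| * ccd Gd Xb q.2.1 q.2.2).sum

theorem rsum_scale (c : ℝ) (l : List (ℝ × Euc d × Euc d)) :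
    rsum D (l.map fun q => (c * q.1, q.2)) = c • rsum D l := by
  induction l with
  | nil => simp [rsum]
  | cons a l ih =>
    simp only [rsum, List.map_cons, List.sum_cons, smul_add] at ih ⊢
    rw [ih, mul_smul]

theorem rwt_scale {c : ℝ} (hc : 0 ≤ c) (l : List (ℝ × Euc d × Euc d)) :
    rwt Gd Xb (l.map fun q => (c * q.1, q.2)) = c * rwt Gd Xb l := by
  induction l with
  | nil => simp [rwt]
  | cons a l ih =>
    simp only [rwt, List.map_cons, List.sum_cons, mul_add] at ih ⊢
    rw [ih, abs_mul, abs_of_nonneg hc, mul_assoc]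

theorem FreeOn.exists_rep (hF : FreeOn Gd Xb o D) {C0 : ℝ} (hC0 : 0 < C0) {γ : F} (hγ : ‖γ‖ ≤ C0)
    {κ : ℝ} (hκ : 0 < κ) :
    ∃ l, rwt Gd Xb l ≤ C0 ∧ ‖γ - rsum D l‖ ≤ κ := by
  set A : Set F := {z | ∃ l, rwt Gd Xb l ≤ C0 ∧ z = rsum D l} with hA
  have hconv : Convex ℝ A := by
    rintro _ ⟨l, hl, rfl⟩ _ ⟨l', hl', rfl⟩ a b ha hb hab
    refine ⟨(l.map fun q => (a * q.1, q.2)) ++ (l'.map fun q => (b * q.1, q.2)), ?_, ?_⟩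
    · have : ∀ l₁ l₂, rwt Gd Xb (l₁ ++ l₂) = rwt Gd Xb l₁ + rwt Gd Xb l₂ := by
        intro l₁ l₂; simp [rwt]
      rw [this, rwt_scale ha, rwt_scale hb]
      calc a * rwt Gd Xb l + b * rwt Gd Xb l' ≤ a * C0 + b * C0 := by gcongr
        _ = C0 := by rw [← add_mul, hab, one_mul]
    · have : ∀ l₁ l₂, rsum D (l₁ ++ l₂) = rsum D l₁ + rsum D l₂ := by
        intro l₁ l₂; simp [rsum]
      rw [this, rsum_scale, rsum_scale]
  have hmem : γ ∈ closure A := by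
    by_contra hcon
    obtain ⟨θ, u, h1, h2⟩ := geometric_hahn_banach_closed_point hconv.closure isClosed_closure hcon
    have h1' : ∀ l, rwt Gd Xb l ≤ C0 → θ (rsum D l) < u := fun l hl =>
      h1 _ (subset_closure ⟨l, hl, rfl⟩)
    have hu : 0 < u := by
      have := h1' [] (by simpa [rwt] using hC0.le)
      simpa [rsum] using this
    have h3 : ∀ x y, θ (D x) - θ (D y) ≤ u / C0 * ccd Gd Xb x y := by
      intro x y
      rcases (ccd_nonneg Gd Xb x y).eq_or_lt with h0 | h0
      · have : D x - D y = 0 := by rw [← norm_eq_zero, hF.iso, ← h0]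
        rw [← map_sub, this, ← h0]; simp
      · have := h1' [(C0 / ccd Gd Xb x y, x, y)] (by
          simp only [rwt, List.map_cons, List.map_nil, List.sum_cons, List.sum_nil, add_zero]
          rw [abs_of_pos (by positivity)]
          field_simp
          exact le_rfl)
        simp only [rsum, List.map_cons, List.map_nil, List.sum_cons, List.sum_nil, add_zero,
          map_smul, map_sub, smul_eq_mul] at this
        rw [div_mul_eq_mul_div, div_lt_iff₀ h0] at this
        rw [div_mul_eq_mul_div, le_div_iff₀ hC0]
        linarith
    have h3' : ∀ x y, ccd Gd Xb x y = ccd Gd Xb y x := fun x y => by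
      rw [← hF.iso, ← hF.iso, norm_sub_rev]
    have h4 : ‖θ‖ ≤ u / C0 := hF.norm_le (by positivity) fun x y => by
      rw [abs_le]
      refine ⟨?_, h3 x y⟩
      have := h3 y x
      rw [h3' y x] at this
      linarith
    have h5 := (le_abs_self _).trans (θ.le_opNorm γ)
    have h6 : ‖θ‖ * ‖γ‖ ≤ u / C0 * C0 := by gcongr
    rw [div_mul_cancel₀ _ hC0.ne'] at h6
    linarith
  obtain ⟨z, ⟨l, hl, rfl⟩, hd⟩ := Metric.mem_closure_iff.1 hmem κ hκ
  rw [dist_eq_norm] at hd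
  exact ⟨l, hl, hd.le⟩

/-- the measure attached to a combination of molecules -/
def rmu (Gd : LieGroupData d) (Xb : Fin s → Euc d) (l : List (ℝ × Euc d × Euc d)) :
    (Euc d → ℝ) →ₗ[ℝ] ℝ :=
  (l.map fun q => (|q.1| * ccd Gd Xb q.2.1 q.2.2) •
    ((LinearMap.proj q.2.1 : (Euc d → ℝ) →ₗ[ℝ] ℝ) + LinearMap.proj q.2.2)).sum

theorem rmu_cons (q : ℝ × Euc d × Euc d) (l : List (ℝ × Euc d × Euc d)) (h : Euc d → ℝ) :
    rmu Gd Xb (q :: l) h =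
      |q.1| * ccd Gd Xb q.2.1 q.2.2 * (h q.2.1 + h q.2.2) + rmu Gd Xb l h := by
  simp [rmu]
  ring

theorem rmu_mono (l : List (ℝ × Euc d × Euc d)) {f g : Euc d → ℝ} (h : ∀ x, f x ≤ g x) :
    rmu Gd Xb l f ≤ rmu Gd Xb l g := by
  induction l with
  | nil => simp [rmu]
  | cons q l ih =>
    rw [rmu_cons, rmu_cons]
    have := ccd_nonneg Gd Xb q.2.1 q.2.2
    gcongr
    · exact h _
    · exact h _

theorem rmu_one (l : List (ℝ × Euc d × Euc d)) :
    rmu Gd Xb l (fun _ => 1) = 2 * rwt Gd Xb l := by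
  induction l with
  | nil => simp [rmu, rwt]
  | cons q l ih =>
    rw [rmu_cons, ih]
    simp only [rwt, List.map_cons, List.sum_cons]
    ring

theorem rmu_bound (l : List (ℝ × Euc d × Euc d)) {Φ : StrongDual ℝ F} {h : Euc d → ℝ} {t : ℝ}
    (hb : ∀ x y, |Φ (D x) - Φ (D y)| ≤ ccd Gd Xb x y * (h x + h y + t)) :
    |Φ (rsum D l)| ≤ rmu Gd Xb l h + t * rwt Gd Xb l := by
  induction l with
  | nil => simp [rmu, rwt, rsum]
  | cons q l ih =>
    rw [rmu_cons]
    simp only [rwt, rsum, List.map_cons, List.sum_cons] at ih ⊢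
    rw [map_add, map_smul, map_sub, smul_eq_mul]
    refine (abs_add_le _ _).trans ?_
    rw [abs_mul]
    have := mul_le_mul_of_nonneg_left (hb q.2.1 q.2.2) (abs_nonneg q.1)
    linarith

theorem exists_h (l : List (smoothE D)) :
    ∀ η > (0 : ℝ), ∃ h : Euc d → ℝ, ContDiff ℝ (⊤ : ℕ∞) h ∧ HasCompactSupport h ∧ (∀ x, 0 ≤ h x) ∧
      (∀ x, h x ≤ listSum (gradE Gd Xb D) l x) ∧ ∀ x, listSum (gradE Gd Xb D) l x ≤ h x + η := by
  induction l with
  | nil => 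
    intro η hη
    exact ⟨fun _ => 0, contDiff_const, HasCompactSupport.zero, fun _ => le_rfl,
      fun x => by simp [listSum], fun x => by simpa [listSum] using hη.le⟩
  | cons ψ l ih =>
    intro η hη
    obtain ⟨h, h1, h2, h3, h4, h5⟩ := ih (η / 2) (by positivity)
    have hη2 : 0 < η / 2 := by positivity
    set q : Euc d → ℝ := fun x => √((η / 2) ^ 2 + ‖gradE Gd Xb D ψ x‖ ^ 2) - η / 2 with hq
    have q1 : ContDiff ℝ (⊤ : ℕ∞) q := by
      refine ContDiff.sub (ContDiff.sqrt (contDiff_const.add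
        (hgrad_normsq Gd Xb (smoothE_smooth ψ))) fun x => ?_) contDiff_const
      positivity
    have q2 : HasCompactSupport q := by
      refine (hgrad_supp Gd Xb ψ.2.2).mono' fun x hx => subset_closure ?_
      contrapose! hx
      have h0 : gradE Gd Xb D ψ x = 0 := Function.notMem_support.1 hx
      simp [hq, h0, Real.sqrt_sq hη2.le]
    have q3 : ∀ x, 0 ≤ q x := fun x => by
      rw [hq]
      simp only [sub_nonneg]
      apply Real.le_sqrt_of_sq_le
      nlinarith [sq_nonneg ‖gradE Gd Xb D ψ x‖]
    have q4 : ∀ x, q x ≤ ‖gradE Gd Xb D ψ x‖ := fun x => by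
      rw [hq]
      simp only [tsub_le_iff_right]
      apply Real.sqrt_le_iff.2
      refine ⟨by positivity, ?_⟩
      nlinarith [norm_nonneg (gradE Gd Xb D ψ x)]
    have q5 : ∀ x, ‖gradE Gd Xb D ψ x‖ ≤ q x + η / 2 := fun x => by
      rw [hq]
      simp only [sub_add_cancel]
      apply Real.le_sqrt_of_sq_le
      nlinarith
    refine ⟨fun x => q x + h x, q1.add h1, q2.add h2, fun x => add_nonneg (q3 x) (h3 x),
      fun x => ?_, fun x => ?_⟩
    · rw [listSum_cons]; linarith [q4 x, h4 x]
    · rw [listSum_cons]; linarith [q5 x, h5 x]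

theorem IsGeoC.net (hg : IsGeoC Gd Xb) {K : Set (Euc d)} (hK : IsCompact K) {t : ℝ} (ht : 0 < t) :
    ∃ A : Finset (Euc d), ∀ x ∈ K, ∃ a ∈ A, ccd Gd Xb a x < t := by
  obtain ⟨A, -, hA⟩ := hK.elim_nhds_subcover (fun a => {x | ccd Gd Xb a x < t})
    fun a _ => hg.tendsto a t ht
  refine ⟨A, fun x hx => ?_⟩
  have := hA hx
  simp only [mem_iUnion] at this
  obtain ⟨a, ha, h⟩ := this
  exact ⟨a, ha, h⟩

end free

section mult
variable {d s : ℕ} {Gd : LieGroupData d} {Xb : Fin s → Euc d} {o : Euc d}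
  {F : Type*} [NormedAddCommGroup F] [NormedSpace ℝ F] {D : Euc d → F}

theorem gradE_mult (hg : IsGeoC Gd Xb) (hF : FreeOn Gd Xb o D) :
    MultHyp (smoothE D) (gradE Gd Xb D) := by
  classical
  intro C0 hC0 κ hκ
  have hL : ∀ γ : F, ∃ L, rwt Gd Xb L ≤ C0 ∧ (‖γ‖ ≤ C0 → ‖γ - rsum D L‖ ≤ κ / 10) := by
    intro γ
    by_cases h : ‖γ‖ ≤ C0
    · obtain ⟨L, h1, h2⟩ := hF.exists_rep hC0 h (show 0 < κ / 10 by positivity)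
      exact ⟨L, h1, fun _ => h2⟩
    · exact ⟨[], by simpa [rwt] using hC0.le, fun h' => absurd h' h⟩
  choose L hL1 hL2 using hL
  refine ⟨fun γ => rmu Gd Xb (L γ), 2 * C0, fun γ f g h => rmu_mono _ h, fun γ => ?_, ?_⟩
  · rw [rmu_one]
    linarith [hL1 γ]
  intro l C hC hC2 hl η hη
  set η1 := min η 1 with hη1
  have hηpos : 0 < η1 := lt_min hη one_pos
  have hηle : η1 ≤ η := min_le_left _ _
  have hηone : η1 ≤ 1 := min_le_right _ _
  obtain ⟨h, h1, h2, h3, h4, h5⟩ := exists_h (Gd := Gd) (Xb := Xb) l (η1 / 2) (by positivity)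
  have h1' : ContDiff ℝ 1 h := h1.of_le (by exact_mod_cast le_top)
  have h1d : Differentiable ℝ h := h1.differentiable (by simp)
  obtain ⟨Lh, hLh⟩ := hgrad_bdd Gd Xb h1' (h2.fderiv ℝ)
  have hLh0 : 0 ≤ Lh := (norm_nonneg _).trans (hLh 0)
  set t := min (η1 / 2) (κ / (2 * C0)) / (Lh + 1) with ht
  have htm : 0 < min (η1 / 2) (κ / (2 * C0)) := lt_min (by positivity) (by positivity)
  have ht0 : 0 < t := by positivity
  have htL : t * Lh ≤ min (η1 / 2) (κ / (2 * C0)) := by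
    rw [ht, div_mul_eq_mul_div, div_le_iff₀ (by positivity)]
    nlinarith
  have hT0 : 0 ≤ t * Lh := by positivity
  have hT1 : t * Lh ≤ η1 / 2 := htL.trans (min_le_left _ _)
  have hT2 : C0 * (t * Lh) ≤ κ / 2 := by
    have := htL.trans (min_le_right _ _)
    rw [le_div_iff₀ (by positivity)] at this
    linarith
  obtain ⟨A, hA⟩ := hg.net h2 (show 0 < t / 2 by positivity)
  refine ⟨A.image D, t / 2, by positivity, fun φ hφ hφS => ?_⟩
  have hlip := gradE_lip hg φ zero_le_one hφ
  have hsm : ∀ x ∈ tsupport h, |(φ : StrongDual ℝ F) (D x)| ≤ t := by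
    intro x hx
    obtain ⟨a, ha, hax⟩ := hA x hx
    have e1 := hφS (D a) (Finset.mem_image_of_mem _ ha)
    have e2 := hlip a x
    rw [abs_le] at e1 e2 ⊢
    constructor <;> linarith
  have hhl := hg.lipschitz h1' hLh0 hLh
  have hout : ∀ x, x ∉ tsupport h → h x = 0 := fun x hx => image_eq_zero_of_notMem_tsupport hx
  set u : Euc d → ℝ := fun x => (φ : StrongDual ℝ F) (D x) with hu
  have hb : ∀ x y, |h x * u x - h y * u y| ≤ ccd Gd Xb x y * (h x + h y + t * Lh) := by
    have key : ∀ x y, x ∈ tsupport h →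
        |h x * u x - h y * u y| ≤ ccd Gd Xb x y * (h x + h y + t * Lh) := by
      intro x y hx
      have e : h x * u x - h y * u y = h y * (u x - u y) + u x * (h x - h y) := by ring
      have hc := ccd_nonneg Gd Xb x y
      rw [e]
      refine (abs_add_le _ _).trans ?_
      rw [abs_mul, abs_mul, abs_of_nonneg (h3 y)]
      have a1 : h y * |u x - u y| ≤ h y * (1 * ccd Gd Xb x y) :=
        mul_le_mul_of_nonneg_left (hlip x y) (h3 y)
      have a2 : |u x| * |h x - h y| ≤ t * (Lh * ccd Gd Xb x y) :=
        mul_le_mul (hsm x hx) (hhl x y) (abs_nonneg _) ht0.le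
      have a3 := mul_nonneg hc (h3 x)
      linarith
    intro x y
    by_cases hx : x ∈ tsupport h
    · exact key x y hx
    by_cases hy : y ∈ tsupport h
    · rw [abs_sub_comm, hg.symm x y, add_comm (h x)]
      exact key y x hy
    · rw [hout x hx, hout y hy]
      have hc := ccd_nonneg Gd Xb x y
      simp only [zero_mul, sub_zero, abs_zero, zero_add]
      positivity
  have hhC : ∀ x, h x ≤ C := fun x => (h4 x).trans (hl x)
  obtain ⟨Φ, hΦ, hΦe⟩ := hF.lift 5 (fun x => h x * u x) (by norm_num) (fun x y => by
    refine (hb x y).trans ?_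
    rw [mul_comm]
    refine mul_le_mul_of_nonneg_right ?_ (ccd_nonneg Gd Xb x y)
    linarith [hhC x, hhC y]) (by simp [hu, hF.base])
  have hΦf : (fun x => Φ (D x)) = fun x => h x * u x := funext hΦe
  have hΦE : Φ ∈ smoothE D := by
    show _ ∧ _
    rw [hΦf]
    exact ⟨h1.mul (smoothE_smooth φ), (h2.mul_right (f' := u)).fderiv ℝ⟩
  have hgr : ∀ x, gradE Gd Xb D (C • φ - ⟨Φ, hΦE⟩) x =
      (C - h x) • gradE Gd Xb D φ x - u x • hgrad Gd Xb h x := by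
    intro x
    have e : (C • φ - ⟨Φ, hΦE⟩ : smoothE D) = C • φ + (-1 : ℝ) • ⟨Φ, hΦE⟩ := by
      apply Subtype.ext
      show C • (φ : StrongDual ℝ F) - Φ = C • (φ : StrongDual ℝ F) + (-1 : ℝ) • Φ
      ext z
      show C * (φ : StrongDual ℝ F) z - Φ z = C * (φ : StrongDual ℝ F) z + (-1 : ℝ) * Φ z
      ring
    rw [e, map_add, map_smul, map_smul]
    show C • gradE Gd Xb D φ x + (-1 : ℝ) • hgrad Gd Xb (fun x => Φ (D x)) x = _
    rw [hΦf, hgrad_mul Gd Xb h1d (smoothE_diff φ) x, sub_smul]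
    show _ + (-1 : ℝ) • (h x • gradE Gd Xb D φ x + _) = _
    rw [neg_one_smul]
    abel
  have hgb : ∀ x, ‖gradE Gd Xb D (C • φ - ⟨Φ, hΦE⟩) x‖ ≤
      (C - h x) * ‖gradE Gd Xb D φ x‖ + η1 / 2 := by
    intro x
    rw [hgr]
    refine (norm_sub_le _ _).trans ?_
    rw [norm_smul, Real.norm_of_nonneg (sub_nonneg.2 (hhC x)), norm_smul, Real.norm_eq_abs]
    gcongr
    by_cases hx : x ∈ tsupport h
    · exact (mul_le_mul (hsm x hx) (hLh x) (norm_nonneg _) ht0.le).trans hT1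
    · have : hgrad Gd Xb h x = 0 := by
        ext j; simp [hgrad, fderiv_of_notMem_tsupport ℝ hx]
      rw [this]
      simp only [norm_zero, mul_zero]
      positivity
  refine ⟨C • φ - ⟨Φ, hΦE⟩, fun x => ?_, fun x => ?_, fun γ hγ => ?_⟩
  · refine (hgb x).trans ?_
    have := mul_le_mul_of_nonneg_left (hφ x) (sub_nonneg.2 (hhC x))
    linarith [h5 x]
  · refine (hgb x).trans ?_
    have := mul_nonneg (h3 x) (norm_nonneg (gradE Gd Xb D φ x))
    linarith
  · have e : C * (φ : StrongDual ℝ F) γ -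
        ((C • φ - ⟨Φ, hΦE⟩ : smoothE D) : StrongDual ℝ F) γ = Φ γ := by
      simp
    rw [e]
    have e1 : Φ γ = Φ (rsum D (L γ)) + Φ (γ - rsum D (L γ)) := by rw [map_sub]; ring
    have e2 : |Φ (γ - rsum D (L γ))| ≤ 5 * (κ / 10) := by
      refine (Φ.le_opNorm _).trans ?_
      exact mul_le_mul hΦ (hL2 γ hγ) (norm_nonneg _) (by norm_num)
    have e3 := rmu_bound (Gd := Gd) (Xb := Xb) (D := D) (L γ) (Φ := Φ) (h := h) (t := t * Lh)
      (fun x y => by rw [hΦe, hΦe]; exact hb x y)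
    have e4 := rmu_mono (Gd := Gd) (Xb := Xb) (L γ) h4
    have e5 : t * Lh * rwt Gd Xb (L γ) ≤ t * Lh * C0 := mul_le_mul_of_nonneg_left (hL1 γ) hT0
    rw [e1]
    refine (abs_add_le _ _).trans ?_
    linarith

end mult

/-- **If `G` is a Carnot group (with its Carnot–Carathéodory metric), then `F(G)` has
property (V*).**  Here the Carnot group is given by a Lie group structure on `ℝ^d`
(connected and simply connected) with a stratified Lie algebra `V₁ ⊕ ⋯ ⊕ Vₙ`; the
vector fields defining the Carnot–Carathéodory metric are the left-invariant extensions
of a basis `X₁, …, X_s` of the first stratum `V₁`, and `M` is the resulting pointed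
metric space `(G, d_cc)`. -/
theorem propertyVStar_lipschitzFree_carnotGroup
    {d s n : ℕ} (Gd : LieGroupData d) (strat : Gd.Stratification n)
    (Xb : Fin s → Euc d)
    (hXb_indep : LinearIndependent ℝ Xb)
    (hXb_span : Submodule.span ℝ (Set.range Xb) = strat.V ⟨0, strat.npos⟩)
    (S : CCData d s) (hG : S.G = Set.univ) (hX : S.X = fun j => Gd.lvf (Xb j))
    (hconn : S.Connects)
    {M : Type*} [MetricSpace M] (ι : M → Euc d) (hrep : CCRepresentation S M ι) (o : M)
    {F : Type*} [NormedAddCommGroup F] [NormedSpace ℝ F] [CompleteSpace F]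
    (δ : M → F) (hδ : IsLipschitzFree o δ) :
    HasPropertyVStar F := by
  have hgeo := isGeo_of_rep hG hX hconn hrep
  have hg : IsGeoC Gd Xb := ⟨hgeo, N_tendsto strat hgeo hXb_span⟩
  have hs : Function.Surjective ι := by
    intro x
    have : x ∈ Set.range ι := by rw [hrep.range_eq, hG]; trivial
    exact this
  choose p hp using hs
  have hpi : ∀ m, p (ι m) = m := fun m => hrep.injective (hp _)
  have hd : ∀ m m', dist m m' = ccd Gd Xb (ι m) (ι m') := fun m m' => by
    rw [hrep.dist_eq, ccDist_eq hG hX]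
  have hF : FreeOn Gd Xb (ι o) (fun x => δ (p x)) := by
    refine ⟨fun x y => ?_, ?_, ?_, fun C f hC hf hfo => ?_⟩
    · rw [← dist_eq_norm, hδ.isometry.dist_eq, hd, hp, hp]
    · simp only [hpi, hδ.map_base]
    · have : Set.range (fun x => δ (p x)) = Set.range δ := by
        ext z
        constructor
        · rintro ⟨x, rfl⟩
          exact ⟨_, rfl⟩
        · rintro ⟨m, rfl⟩
          exact ⟨ι m, by simp only [hpi]⟩
      rw [this]
      exact hδ.dense_span
    · obtain ⟨φ, h1, h2⟩ := hδ.lift ⟨C, hC⟩ (fun m => f (ι m))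
        (LipschitzWith.of_dist_le_mul fun m m' => by
          rw [Real.dist_eq, hd]
          exact hf _ _) hfo
      exact ⟨φ, h1, fun x => by rw [h2, hp]⟩
  exact core_vstar (smoothE fun x => δ (p x)) (gradE Gd Xb fun x => δ (p x)) gradE_bdd
    (fun φ C hC h => gradE_norm hg hF φ hC h) (fun φ hφ S η hη => gradE_approx hg hF φ hφ S η hη)
    (gradE_mult hg hF)
end
end

section
/- Let P be a standard Banach space property and let M be a complete pointed metric space. Suppose that every x ∈ M has a neighborhood U such that F(cl(U)) satisfies P. Then every compact subset K ⊂ M has a neighborhood U such that F(cl(U)) satisfies P, and moreover F(K) satisfies P. -/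
open Filter Topology Metric Set

noncomputable section

universe v

/-- A Banach space property is standard if it is stable under isomorphism, finite
direct sums, and passing to closed subspaces. -/
def StandardProperty
    (P : ∀ (X : Type v) [NormedAddCommGroup X] [NormedSpace ℝ X], Prop) : Prop :=
  (∀ (X Y : Type v) [NormedAddCommGroup X] [NormedSpace ℝ X]
      [NormedAddCommGroup Y] [NormedSpace ℝ Y], (X ≃L[ℝ] Y) → P X → P Y) ∧
  (∀ (X Y : Type v) [NormedAddCommGroup X] [NormedSpace ℝ X]
      [NormedAddCommGroup Y] [NormedSpace ℝ Y], P X → P Y → P (X × Y)) ∧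
  (∀ (X : Type v) [NormedAddCommGroup X] [NormedSpace ℝ X] (S : Submodule ℝ X),
      IsClosed (S : Set X) → P X → P ↥S)

theorem lift_vec {M : Type*} [MetricSpace M] {o : M}
    {F : Type*} [NormedAddCommGroup F] [NormedSpace ℝ F] [CompleteSpace F]
    {δ : M → F} (hδ : IsLipschitzFree o δ) (C : NNReal) (g : M → F)
    (hg : LipschitzWith C g) (hgo : g o = 0) :
    ∃ T : F →L[ℝ] F, ∀ x, T (δ x) = g x := by
  have key : ∀ a : M →₀ ℝ, ‖Finsupp.linearCombination ℝ g a‖ ≤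
      C * ‖Finsupp.linearCombination ℝ δ a‖ := by
    intro a
    obtain ⟨f, hf1, hf2⟩ := exists_dual_vector'' ℝ (Finsupp.linearCombination ℝ g a)
    have hl : LipschitzWith C (fun x => f (g x)) := by
      have h1 := (f.lipschitz.comp hg)
      refine h1.weaken ?_
      have : ‖f‖₊ ≤ 1 := hf1
      calc ‖f‖₊ * C ≤ 1 * C := by gcongr
        _ = C := one_mul _
    obtain ⟨φ, hφ1, hφ2⟩ := hδ.lift C _ hl (by simp [hgo])
    have e : f (Finsupp.linearCombination ℝ g a) = φ (Finsupp.linearCombination ℝ δ a) := by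
      simp [Finsupp.linearCombination_apply, Finsupp.sum, map_sum, hφ2]
    have h2 : ‖Finsupp.linearCombination ℝ g a‖ = φ (Finsupp.linearCombination ℝ δ a) := by
      rw [← e, hf2]; simp
    rw [h2]
    refine (le_abs_self _).trans ?_
    rw [← Real.norm_eq_abs]
    refine (φ.le_opNorm _).trans ?_
    gcongr
  have hd : DenseRange (Finsupp.linearCombination ℝ δ) := by
    have := hδ.dense_span
    rw [← Finsupp.range_linearCombination] at this
    exact this
  refine ⟨(Finsupp.linearCombination ℝ g).extendOfNorm (Finsupp.linearCombination ℝ δ), ?_⟩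
  intro x
  have := LinearMap.extendOfNorm_eq hd ⟨C, key⟩ (Finsupp.single x 1)
  simpa using this

theorem freeSpan_closed {M : Type*} [MetricSpace M] {F : Type*} [NormedAddCommGroup F]
    [NormedSpace ℝ F] (δ : M → F) (S : Set M) : IsClosed (freeSpan δ S : Set F) :=
  Submodule.isClosed_topologicalClosure _

theorem freeSpan_le {M : Type*} [MetricSpace M] {F : Type*} [NormedAddCommGroup F]
    [NormedSpace ℝ F] (δ : M → F) (S : Set M) (Z : Submodule ℝ F)
    (hZ : IsClosed (Z : Set F)) (h : ∀ x ∈ S, δ x ∈ Z) : freeSpan δ S ≤ Z := by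
  refine Submodule.topologicalClosure_minimal _ ?_ hZ
  rw [Submodule.span_le]
  rintro _ ⟨x, hx, rfl⟩
  exact h x hx

theorem split_lemma
    (P : ∀ (X : Type v) [NormedAddCommGroup X] [NormedSpace ℝ X], Prop)
    (hP : StandardProperty P)
    {F : Type v} [NormedAddCommGroup F] [NormedSpace ℝ F]
    (A B Z : Submodule ℝ F) (hZ : IsClosed (Z : Set F)) (hA : P A) (hB : P B)
    (T : F →L[ℝ] F) (h1 : ∀ v ∈ Z, T v ∈ A) (h2 : ∀ v ∈ Z, v - T v ∈ B) : P Z := by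
  obtain ⟨hiso, hprod, hsub⟩ := hP
  let a : (A × B) →L[ℝ] F := A.subtypeL.comp (ContinuousLinearMap.fst ℝ A B)
  let b : (A × B) →L[ℝ] F := B.subtypeL.comp (ContinuousLinearMap.snd ℝ A B)
  let S : Submodule ℝ (A × B) :=
    Z.comap (a + b).toLinearMap ⊓ (T.comp (a + b) - a).toLinearMap.ker
  have hS : IsClosed (S : Set (A × B)) := by
    refine IsClosed.inter (hZ.preimage (a + b).continuous) ?_
    exact (T.comp (a + b) - a).isClosed_ker
  have hPS := hsub (A × B) S hS (hprod A B hA hB)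
  have mem : ∀ p : A × B, p ∈ S ↔ ((p.1 : F) + p.2 ∈ Z ∧ T ((p.1 : F) + p.2) = p.1) := by
    intro p
    simp only [S, Submodule.mem_inf, Submodule.mem_comap, LinearMap.mem_ker]
    refine and_congr Iff.rfl ?_
    exact sub_eq_zero
  let fwd : S →L[ℝ] Z := ((a + b).comp S.subtypeL).codRestrict Z
    (fun p => ((mem p.1).1 p.2).1)
  let u : Z →L[ℝ] A := (T.comp Z.subtypeL).codRestrict A (fun p => h1 p.1 p.2)
  let w : Z →L[ℝ] B := (Z.subtypeL - T.comp Z.subtypeL).codRestrict B (fun p => h2 p.1 p.2)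
  let bwd : Z →L[ℝ] S := (u.prod w).codRestrict S (by
    intro z
    rw [mem]
    have e : (((u.prod w) z).1 : F) + ((u.prod w) z).2 = z := by
      change T z + (z - T z) = z
      abel
    rw [e]
    exact ⟨z.2, rfl⟩)
  refine hiso S Z (ContinuousLinearEquiv.equivOfInverse fwd bwd ?_ ?_) hPS
  · intro p
    have hp := ((mem p.1).1 p.2).2
    apply Subtype.ext
    apply Prod.ext
    · apply Subtype.ext
      exact hp
    · apply Subtype.ext
      change ((p.1.1 : F) + p.1.2) - T ((p.1.1 : F) + p.1.2) = p.1.2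
      rw [hp]; abel
  · intro z
    apply Subtype.ext
    change T z + (z - T z) = z
    abel

theorem local_op {M : Type*} [MetricSpace M] {o : M}
    {F : Type*} [NormedAddCommGroup F] [NormedSpace ℝ F] [CompleteSpace F]
    {δ : M → F} (hδ : IsLipschitzFree o δ) (x : M) (ε : ℝ) (hε : 0 < ε) :
    ∃ (T : F →L[ℝ] F) (ψ : M → ℝ), (∀ y, T (δ y) = ψ y • δ y) ∧
      (∀ y, dist y x ≤ ε / 2 → ψ y = 1) ∧ (∀ y, ε ≤ dist y x → ψ y = 0) := by
  let ψ : M → ℝ := fun y => max 0 (min 1 (2 - 2 / ε * dist y x))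
  have h0 : ∀ y, 0 ≤ ψ y := fun y => le_max_left _ _
  have h1 : ∀ y, ψ y ≤ 1 := fun y => max_le zero_le_one (min_le_left _ _)
  have hone : ∀ y, dist y x ≤ ε / 2 → ψ y = 1 := by
    intro y hy
    have : 2 / ε * dist y x ≤ 1 := by
      rw [div_mul_eq_mul_div, div_le_one hε]; linarith
    simp only [ψ]
    rw [min_eq_left (by linarith), max_eq_right zero_le_one]
  have hzero : ∀ y, ε ≤ dist y x → ψ y = 0 := by
    intro y hy
    have : 2 ≤ 2 / ε * dist y x := by
      rw [div_mul_eq_mul_div, le_div_iff₀ hε]; linarith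
    simp only [ψ]
    exact max_eq_left ((min_le_right _ _).trans (by linarith))
  have hlip : ∀ y z, |ψ y - ψ z| ≤ 2 / ε * dist y z := by
    intro y z
    have e1 : |ψ y - ψ z| ≤ |(2 - 2 / ε * dist y x) - (2 - 2 / ε * dist z x)| := by
      refine (abs_max_sub_max_le_max _ _ _ _).trans ?_
      rw [sub_self, abs_zero, max_eq_right (abs_nonneg _)]
      refine (abs_min_sub_min_le_max _ _ _ _).trans ?_
      rw [sub_self, abs_zero, max_eq_right (abs_nonneg _)]
    refine e1.trans ?_
    have e2 : (2 - 2 / ε * dist y x) - (2 - 2 / ε * dist z x)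
        = 2 / ε * (dist z x - dist y x) := by ring
    rw [e2, abs_mul, abs_of_pos (by positivity : 0 < 2 / ε)]
    gcongr
    rw [dist_comm y z]
    exact abs_dist_sub_le z y x
  have hnorm : ∀ y, ‖δ y‖ = dist y o := by
    intro y
    rw [← hδ.isometry.dist_eq, hδ.map_base, dist_zero_right]
  let C : ℝ := 2 / ε * (ε + dist x o) + 1
  have hC : 0 ≤ C := by positivity
  have main : ∀ y z, dist y x < ε → ‖ψ y • δ y - ψ z • δ z‖ ≤ C * dist y z := by
    intro y z hy
    have e : ψ y • δ y - ψ z • δ z = (ψ y - ψ z) • δ y + ψ z • (δ y - δ z) := by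
      rw [sub_smul, smul_sub]; abel
    rw [e]
    refine (norm_add_le _ _).trans ?_
    rw [norm_smul, norm_smul, hnorm, ← dist_eq_norm (δ y), hδ.isometry.dist_eq,
      Real.norm_eq_abs, Real.norm_eq_abs, abs_of_nonneg (h0 z)]
    have hyo : dist y o ≤ ε + dist x o := (dist_triangle y x o).trans (by linarith)
    calc |ψ y - ψ z| * dist y o + ψ z * dist y z
        ≤ (2 / ε * dist y z) * (ε + dist x o) + 1 * dist y z := by
          gcongr
          · exact hlip y z
          · exact h1 z
      _ = C * dist y z := by simp only [C]; ring
  have hg : LipschitzWith ⟨C, hC⟩ (fun y => ψ y • δ y) := by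
    refine LipschitzWith.of_dist_le_mul ?_
    intro y z
    rw [dist_eq_norm]
    change _ ≤ C * dist y z
    by_cases hy : dist y x < ε
    · exact main y z hy
    by_cases hz : dist z x < ε
    · rw [norm_sub_rev, dist_comm]
      exact main z y hz
    · rw [hzero y (not_lt.1 hy), hzero z (not_lt.1 hz)]
      simp only [zero_smul, sub_self, norm_zero]
      positivity
  obtain ⟨T, hT⟩ := lift_vec hδ _ _ hg (by simp [hδ.map_base])
  exact ⟨T, ψ, hT, hone, hzero⟩

/-- Let `P` be a standard Banach space property and `M` a complete pointed metric space.
If every point of `M` has a neighborhood `U` such that `F(cl(U))` satisfies `P`, then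
every compact `K ⊆ M` has a neighborhood `U` such that `F(cl(U))` satisfies `P`,
and `F(K)` satisfies `P` as well. -/
theorem standardProperty_local_to_compact
    (P : ∀ (X : Type v) [NormedAddCommGroup X] [NormedSpace ℝ X], Prop)
    (hP : StandardProperty P)
    {M : Type*} [MetricSpace M] [CompleteSpace M] (o : M)
    {F : Type v} [NormedAddCommGroup F] [NormedSpace ℝ F] [CompleteSpace F]
    (δ : M → F) (hδ : IsLipschitzFree o δ)
    (hloc : ∀ x : M, ∃ U ∈ 𝓝 x, P ↥(freeSpan δ (closure U ∪ {o})))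
    (K : Set M) (hK : IsCompact K) :
    (∃ U ∈ 𝓝ˢ K, P ↥(freeSpan δ (closure U ∪ {o}))) ∧
      P ↥(freeSpan δ (K ∪ {o})) := by
  have hbot : P (⊥ : Submodule ℝ F) := by
    obtain ⟨U, -, hU⟩ := hloc o
    refine split_lemma P hP _ _ ⊥ isClosed_singleton hU hU (ContinuousLinearMap.id ℝ F) ?_ ?_
    · intro v hv
      rw [(Submodule.mem_bot ℝ).1 hv]; simp
    · intro v _
      simp
  have main : ∃ R : F →L[ℝ] F, (∀ B : Submodule ℝ F, IsClosed (B : Set F) → P B →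
      P (B.comap R.toLinearMap)) ∧ (∀ x, ∃ c : ℝ, R (δ x) = c • δ x) ∧
      ∃ U : Set M, IsOpen U ∧ K ⊆ U ∧ ∀ x ∈ closure U, R (δ x) = 0 := by
    refine hK.induction_on (p := fun K => ∃ R : F →L[ℝ] F,
      (∀ B : Submodule ℝ F, IsClosed (B : Set F) → P B →
      P (B.comap R.toLinearMap)) ∧ (∀ x, ∃ c : ℝ, R (δ x) = c • δ x) ∧
      ∃ U : Set M, IsOpen U ∧ K ⊆ U ∧ ∀ x ∈ closure U, R (δ x) = 0) ?_ ?_ ?_ ?_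
    · refine ⟨ContinuousLinearMap.id ℝ F, fun B _ hB => hB, fun x => ⟨1, by simp⟩,
        ∅, isOpen_empty, subset_rfl, by simp⟩
    · rintro s t hst ⟨R, h1, h2, U, h3, h4, h5⟩
      exact ⟨R, h1, h2, U, h3, hst.trans h4, h5⟩
    · rintro s t ⟨R, h1, h2, U, h3, h4, h5⟩ ⟨R', h1', h2', U', h3', h4', h5'⟩
      refine ⟨R.comp R', ?_, ?_, U ∪ U', h3.union h3', union_subset_union h4 h4', ?_⟩
      · intro B hBc hB
        exact h1' (B.comap R.toLinearMap) (hBc.preimage R.continuous) (h1 B hBc hB)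
      · intro x
        obtain ⟨c, hc⟩ := h2 x
        obtain ⟨c', hc'⟩ := h2' x
        refine ⟨c' * c, ?_⟩
        simp [hc, hc', smul_smul]
      · intro x hx
        rw [closure_union] at hx
        rcases hx with hx | hx
        · obtain ⟨c', hc'⟩ := h2' x
          simp [hc', h5 x hx]
        · simp [h5' x hx]
    · intro x _
      obtain ⟨U, hU, hPU⟩ := hloc x
      obtain ⟨ε, hε, hεU⟩ := Metric.mem_nhds_iff.1 hU
      obtain ⟨T, ψ, hT, hone, hzero⟩ := local_op hδ x ε hε
      refine ⟨ball x (ε / 2), mem_nhdsWithin_of_mem_nhds (ball_mem_nhds x (by positivity)),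
        ContinuousLinearMap.id ℝ F - T, ?_, ?_, ball x (ε / 2), isOpen_ball, subset_rfl, ?_⟩
      · intro B hBc hB
        have hTA : ∀ v, T v ∈ freeSpan δ (closure U ∪ {o}) := by
          intro v
          have hle : freeSpan δ univ ≤ (freeSpan δ (closure U ∪ {o})).comap T.toLinearMap := by
            refine freeSpan_le δ _ _ ((freeSpan_closed δ _).preimage T.continuous) ?_
            intro y _
            change T (δ y) ∈ freeSpan δ (closure U ∪ {o})
            rw [hT]
            by_cases hy : dist y x < ε
            · exact Submodule.smul_mem _ _
                (mem_freeSpan δ (Or.inl (subset_closure (hεU hy))))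
            · rw [hzero y (not_lt.1 hy), zero_smul]
              exact Submodule.zero_mem _
          refine hle ?_
          change v ∈ closure (Submodule.span ℝ (δ '' univ) : Set F)
          rw [image_univ]
          exact hδ.dense_span v
        refine split_lemma P hP _ B _
          (hBc.preimage (ContinuousLinearMap.id ℝ F - T).continuous) hPU hB T
          (fun v _ => hTA v) (fun v hv => hv)
      · intro y
        refine ⟨1 - ψ y, ?_⟩
        simp [hT, sub_smul]
      · intro y hy
        have : dist y x ≤ ε / 2 := closure_ball_subset_closedBall hy
        simp [hT, hone y this]
  obtain ⟨R, h1, -, U, hUo, hKU, hU⟩ := main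
  have hker := h1 ⊥ isClosed_singleton hbot
  have hclosed : IsClosed (((⊥ : Submodule ℝ F).comap R.toLinearMap : Submodule ℝ F) : Set F) :=
    IsClosed.preimage R.continuous isClosed_singleton
  have fin : ∀ S : Set M, S ⊆ closure U → P ↥(freeSpan δ (S ∪ {o})) := by
    intro S hS
    have hle : freeSpan δ (S ∪ {o}) ≤ (⊥ : Submodule ℝ F).comap R.toLinearMap := by
      refine freeSpan_le δ _ _ hclosed ?_
      rintro x (hx | hx)
      · exact hU x (hS hx)
      · rw [mem_singleton_iff.1 hx, hδ.map_base]
        exact Submodule.zero_mem _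
    refine split_lemma P hP _ _ _ (freeSpan_closed δ _) hker hker
      (ContinuousLinearMap.id ℝ F) (fun v hv => hle hv) ?_
    intro v _
    simp
  exact ⟨⟨U, hUo.mem_nhdsSet.2 hKU, fin _ subset_rfl⟩, fin K (hKU.trans subset_closure)⟩
end
end
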